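/- Let G = (V,E) be a (possibly infinite) graph, T ⊆ V, and suppose G is inner Eulerian w.r.t. T (there is no X ⊆ V∖T with d_G(X) an odd natural number) and there is an s ∈ T admitting no non-trivial s(T−s)-wave. Then for every pair of edges f, h ∈ E there exists a system of pairwise edge-disjoint T-paths in G − f − h covering all edges of G − f − h incident with s. -/

import Mathlib

/-!
Common definitions: multigraphs (parallel edges allowed, no loops), walks,
paths, cuts, waves and related notions used in the statements below.
-/

universe u v

/-- A multigraph with vertex type `V` and edge type `E`: every edge is assigned
an unordered pair of *distinct* end-vertices (parallel edges allowed, no loops). -/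
structure Multigraph (V : Type u) (E : Type v) : Type (max u v) where
  inc : E → Sym2 V
  not_isDiag : ∀ e, ¬ (inc e).IsDiag

namespace Multigraph

variable {V : Type u} {E : Type v}

/-- Walks in a multigraph, recorded together with the edges they traverse. -/
inductive Walk (G : Multigraph V E) : V → V → Type (max u v)
  | nil (v : V) : Walk G v v
  | cons {u v w : V} (e : E) (he : G.inc e = s(u, v)) (p : Walk G v w) : Walk G u w

namespace Walk

variable {G : Multigraph V E}

/-- The list of vertices visited by a walk. -/
def support : ∀ {u w : V}, G.Walk u w → List V
  | _, _, .nil v => [v]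
  | u, _, .cons _ _ p => u :: p.support

/-- The list of edges traversed by a walk. -/
def edges : ∀ {u w : V}, G.Walk u w → List E
  | _, _, .nil _ => []
  | _, _, .cons e _ p => e :: p.edges

end Walk

/-- `δ_G(v)`: the set of edges incident with the vertex `v`. -/
def inci (G : Multigraph V E) (v : V) : Set E := {e | v ∈ G.inc e}

/-- `δ_G(X)`: the set of edges with exactly one end-vertex in `X`. -/
def cut (G : Multigraph V E) (X : Set V) : Set E :=
  {e | ∃ x y, G.inc e = s(x, y) ∧ x ∈ X ∧ y ∉ X}

/-- Connectedness of a multigraph. -/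
def Connected (G : Multigraph V E) : Prop := ∀ u v : V, Nonempty (G.Walk u v)

/-- A `T`-path: a path connecting two distinct vertices of `T`
with no internal vertex in `T`. -/
structure TPath (G : Multigraph V E) (T : Set V) : Type (max u v) where
  first : V
  last : V
  walk : G.Walk first last
  first_mem : first ∈ T
  last_mem : last ∈ T
  ne : first ≠ last
  support_nodup : walk.support.Nodup
  internal : ∀ x ∈ walk.support, x ∈ T → x = first ∨ x = last

/-- A system of pairwise edge-disjoint `T`-paths. -/
def TPathDisjoint (G : Multigraph V E) {T : Set V} (P : Set (G.TPath T)) : Prop :=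
  ∀ p ∈ P, ∀ q ∈ P, p ≠ q → ∀ e, e ∈ p.walk.edges → e ∉ q.walk.edges

/-- An `st`-path: a path from `s` to `t` (no internal vertex is `s` or `t`,
which is automatic as the vertices of a path are distinct). -/
structure STPath (G : Multigraph V E) (s t : V) : Type (max u v) where
  walk : G.Walk s t
  support_nodup : walk.support.Nodup

/-- A system of pairwise edge-disjoint `st`-paths. -/
def STPathDisjoint (G : Multigraph V E) {s t : V} (P : Set (G.STPath s t)) : Prop :=
  ∀ p ∈ P, ∀ q ∈ P, p ≠ q → ∀ e, e ∈ p.walk.edges → e ∉ q.walk.edges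

/-- A nontrivial path starting at `s`. -/
structure SPath (G : Multigraph V E) (s : V) : Type (max u v) where
  last : V
  walk : G.Walk s last
  support_nodup : walk.support.Nodup
  edges_ne_nil : walk.edges ≠ []

/-- A system of pairwise edge-disjoint paths starting at `s`. -/
def SPathDisjoint (G : Multigraph V E) {s : V} (W : Set (G.SPath s)) : Prop :=
  ∀ p ∈ W, ∀ q ∈ W, p ≠ q → ∀ e, e ∈ p.walk.edges → e ∉ q.walk.edges

/-- The set of last edges of a system of paths starting at `s`. -/
def lastEdges (G : Multigraph V E) {s : V} (W : Set (G.SPath s)) : Set E :=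
  {e | ∃ p ∈ W, p.walk.edges.getLast? = some e}

/-- `C` is a cut separating `A` from `B`. -/
def SepCut (G : Multigraph V E) (A B : Set V) (C : Set E) : Prop :=
  ∃ X : Set V, A ⊆ X ∧ (∀ b ∈ B, b ∉ X) ∧ C = G.cut X

/-- `C` is a `⊆`-minimal cut separating `A` from `B`. -/
def IsMinSepCut (G : Multigraph V E) (A B : Set V) (C : Set E) : Prop :=
  G.SepCut A B C ∧ ∀ D : Set E, G.SepCut A B D → D ⊆ C → D = C

/-- An `s`-`B`-wave: a system of pairwise edge-disjoint paths starting at `s`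
whose set of last edges is a `⊆`-minimal cut separating `s` from `B`. -/
def IsWave (G : Multigraph V E) (s : V) (B : Set V) (W : Set (G.SPath s)) : Prop :=
  G.SPathDisjoint W ∧ G.IsMinSepCut {s} B (G.lastEdges W)

/-- An Erdős–Menger `st`-cut: an `st`-cut which is orthogonal to some system of
pairwise edge-disjoint `st`-paths, i.e. it consists of exactly one edge chosen
from each path of the system. -/
def IsEMCut (G : Multigraph V E) (s t : V) (C : Set E) : Prop :=
  (∃ X : Set V, s ∈ X ∧ t ∉ X ∧ C = G.cut X) ∧
  ∃ P : Set (G.STPath s t), G.STPathDisjoint P ∧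
    (∀ p ∈ P, ∃! e, e ∈ C ∧ e ∈ p.walk.edges) ∧
    (∀ e ∈ C, ∃ p ∈ P, e ∈ p.walk.edges)

/-- The order `≼` on `st`-cuts: the `s`-side of `C` is contained in the
`s`-side of `D` (in a connected graph the `s`-side is unique). -/
def CutLE (G : Multigraph V E) (s t : V) (C D : Set E) : Prop :=
  ∃ X Y : Set V, s ∈ X ∧ t ∉ X ∧ C = G.cut X ∧ s ∈ Y ∧ t ∉ Y ∧ D = G.cut Y ∧ X ⊆ Y

/-- A cut of the form `C_W` for some `st`-wave `W`. -/
def IsWaveCut (G : Multigraph V E) (s t : V) (C : Set E) : Prop :=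
  ∃ W : Set (G.SPath s), G.IsWave s {t} W ∧ G.lastEdges W = C

/-- Deletion of a set of edges. -/
def deleteEdges (G : Multigraph V E) (F : Set E) : Multigraph V {e : E // e ∉ F} where
  inc e := G.inc e.1
  not_isDiag e := G.not_isDiag e.1

open Classical in
/-- Contraction of the vertex set `X` to the vertex `s` (edges inside `X` are
deleted, edges leaving `X` are redirected to `s`). -/
noncomputable def contract (G : Multigraph V E) (X : Set V) (s : V) :
    Multigraph V {e : E // ¬ (Sym2.map (fun v => if v ∈ X then s else v) (G.inc e)).IsDiag} where
  inc e := Sym2.map (fun v => if v ∈ X then s else v) (G.inc e.1)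
  not_isDiag e := e.2

/-- Reachability inside a set `S` of vertices. -/
def ReachableIn (G : Multigraph V E) (S : Set V) (x y : V) : Prop :=
  ∃ p : G.Walk x y, ∀ z ∈ p.support, z ∈ S

/-- `Y` is (the vertex set of) a connected component of the subgraph of `G`
induced by `S`. -/
def IsComponentOf (G : Multigraph V E) (Y S : Set V) : Prop :=
  Y.Nonempty ∧ Y ⊆ S ∧ ∀ x ∈ Y, ∀ y ∈ S, (G.ReachableIn S x y ↔ y ∈ Y)

/-- A cycle in a multigraph (a closed walk with distinct edges whose
vertices are distinct except that the first one equals the last one). -/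
structure Cycle (G : Multigraph V E) : Type (max u v) where
  base : V
  walk : G.Walk base base
  edges_ne_nil : walk.edges ≠ []
  edges_nodup : walk.edges.Nodup
  support_tail_nodup : walk.support.tail.Nodup

/-- A graph is Eulerian if its edge set can be partitioned into
edge sets of cycles. -/
def IsEulerian (G : Multigraph V E) : Prop :=
  ∃ C : Set G.Cycle,
    (∀ c ∈ C, ∀ d ∈ C, c ≠ d → ∀ e, e ∈ c.walk.edges → e ∉ d.walk.edges) ∧
    ∀ e : E, ∃ c ∈ C, e ∈ c.walk.edges

/-- A `T`-partition: a family `{A t : t ∈ T}` of pairwise disjoint vertex sets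
with `A t ∩ T = {t}`. -/
def IsTPartition (T : Set V) (A : V → Set V) : Prop :=
  (∀ t ∈ T, A t ∩ T = {t}) ∧
  ∀ t₁ ∈ T, ∀ t₂ ∈ T, t₁ ≠ t₂ → Disjoint (A t₁) (A t₂)

end Multigraph

/-!
Contracting `T \ {s}` to one vertex `t` turns `T`-paths at `s` into links, walks from `s` to `t`.
The hypotheses become: finite cuts of vertex sets avoiding `s` and `t` are even, and every wave is
trivial (the graph is loose).

Parity enters through augmentation: edge-disjoint walks from `s` inside `X` to all but one edge of
the cut of `X` can be rerouted, possibly infinitely often, to reach the last edge as well. Hence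
every edge at `s` starts a link after whose deletion the graph becomes loose by contracting the side
of some wave. The link is found by splitting off edges along a path to `t`.

Deleting such links in turn links countably many edges. Larger sets are exhausted by transfinitely
many smaller linked stages, each closed under small separators, so that the rest stays loose. When
`f` and `h` are deleted, at most two links are lost, and they can be replaced by augmenting the
others, because an obstruction to this would, by parity, contradict looseness.
-/

/-- The incidence map of a multigraph in which loops are allowed, so that vertices can be
identified without changing the edge type. -/
abbrev Incidence (V : Type u) (E : Type v) : Type (max u v) := E → Sym2 V

namespace Incidence

section WalksAndCuts

variable {V : Type u} {E : Type v}

/-- `inc.IsWalk u l v`: the edge list `l` is traversed by a walk from `u` to `v`. -/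
inductive IsWalk (inc : Incidence V E) : V → List E → V → Prop
  | nil (v : V) : inc.IsWalk v [] v
  | cons {u v w : V} {e : E} {l : List E} (he : inc e = s(u, v)) (h : inc.IsWalk v l w) :
      inc.IsWalk u (e :: l) w

/-- `inc.IsPath u l v`: the edge list `l` is traversed by a path from `u` to `v`. -/
inductive IsPath (inc : Incidence V E) : V → List E → V → Prop
  | nil (v : V) : inc.IsPath v [] v
  | cons {u v w : V} {e : E} {l : List E} (he : inc e = s(u, v)) (h : inc.IsPath v l w)
      (hne : u ≠ w) (hav : ∀ g ∈ l, u ∉ inc g) : inc.IsPath u (e :: l) w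

variable {inc : Incidence V E} {A B C D : Set E} {o u v w x : V} {X Y : Set V} {y : E → V}
  {p : E → List E} {e : E} {l : List E}

theorem exists_ends (inc : Incidence V E) (e : E) : ∃ x y, inc e = s(x, y) := by
  induction h : inc e using Sym2.ind with
  | _ x y => exact ⟨x, y, rfl⟩

theorem IsWalk.eq_of_nil (h : inc.IsWalk u [] v) : u = v := by cases h; rfl

theorem IsWalk.exists_of_cons (h : inc.IsWalk u (e :: l) w) :
    ∃ v, inc e = s(u, v) ∧ inc.IsWalk v l w := by
  cases h with | cons he h => exact ⟨_, he, h⟩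

theorem IsWalk.single (he : inc e = s(u, v)) : inc.IsWalk u [e] v :=
  IsWalk.cons he (IsWalk.nil v)

theorem IsWalk.append {a b} (h1 : inc.IsWalk u a v) (h2 : inc.IsWalk v b w) :
    inc.IsWalk u (a ++ b) w := by
  induction h1 with
  | nil => exact h2
  | cons he _ ih => exact IsWalk.cons he (ih h2)

theorem IsWalk.exists_of_append {a b : List E} (h : inc.IsWalk u (a ++ b) w) :
    ∃ v, inc.IsWalk u a v ∧ inc.IsWalk v b w := by
  induction a generalizing u with
  | nil => exact ⟨u, IsWalk.nil u, h⟩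
  | cons e a ih =>
    obtain ⟨x, he, h'⟩ := IsWalk.exists_of_cons h
    obtain ⟨v, h1, h2⟩ := ih h'
    exact ⟨v, IsWalk.cons he h1, h2⟩

theorem IsWalk.reverse (h : inc.IsWalk u l v) : inc.IsWalk v l.reverse u := by
  induction h with
  | nil => exact IsWalk.nil _
  | cons he _ ih =>
    rw [List.reverse_cons]
    exact ih.append (IsWalk.single (by rw [he, Sym2.eq_swap]))

theorem IsWalk.end_unique {v' : V} (h : inc.IsWalk u l v) : inc.IsWalk u l v' → v = v' := by
  induction h with
  | nil => intro h'; exact h'.eq_of_nil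
  | cons he _ ih =>
    intro h'
    obtain ⟨x, he', h''⟩ := h'.exists_of_cons
    cases Sym2.congr_right.1 (he.symm.trans he')
    exact ih h''

theorem IsWalk.congr {inc' : Incidence V E} (h : inc.IsWalk u l v)
    (hc : ∀ e ∈ l, inc' e = inc e) : inc'.IsWalk u l v := by
  induction h with
  | nil => exact IsWalk.nil _
  | cons he _ ih =>
    exact IsWalk.cons (by rw [hc _ (by simp), he]) (ih (fun e he => hc e (by simp [he])))

theorem IsPath.isWalk (h : inc.IsPath u l v) : inc.IsWalk u l v := by
  induction h with
  | nil => exact IsWalk.nil _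
  | cons he _ _ _ ih => exact IsWalk.cons he ih

theorem IsPath.nodup (h : inc.IsPath u l v) : l.Nodup := by
  induction h with
  | nil => simp
  | cons he _ _ hav ih =>
    refine List.nodup_cons.2 ⟨fun hm => hav _ hm ?_, ih⟩
    rw [he]; simp

theorem IsPath.eq_nil (h : inc.IsPath u l u) : l = [] := by
  cases h with
  | nil => rfl
  | cons _ _ hne _ => exact absurd rfl hne

theorem IsPath.of_append {a b} (h : inc.IsPath u (a ++ b) w) (hv : inc.IsWalk u a v) :
    inc.IsPath v b w := by
  induction a generalizing u with
  | nil => cases hv; exact h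
  | cons e a ih =>
    rw [List.cons_append] at h
    cases h with
    | cons he h _ _ =>
      obtain ⟨x, he', h''⟩ := hv.exists_of_cons
      cases Sym2.congr_right.1 (he.symm.trans he')
      exact ih h h''

theorem IsWalk.exists_split (h : inc.IsWalk u l w) {g : E} (hg : g ∈ l) (hx : x ∈ inc g) :
    ∃ a b, l = a ++ b ∧ inc.IsWalk u a x ∧ inc.IsWalk x b w := by
  obtain ⟨a, b, rfl⟩ := List.append_of_mem hg
  obtain ⟨y, h1, h2⟩ := h.exists_of_append
  obtain ⟨z, he, h3⟩ := h2.exists_of_cons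
  rw [he] at hx
  rcases Sym2.mem_iff.1 hx with rfl | rfl
  · exact ⟨a, g :: b, rfl, h1, h2⟩
  · exact ⟨a ++ [g], b, by simp, h1.append (IsWalk.single he), h3⟩

theorem IsWalk.exists_isPath (h : inc.IsWalk u l w) : ∃ l', l'.Sublist l ∧ inc.IsPath u l' w := by
  induction h with
  | nil => exact ⟨[], by simp, IsPath.nil _⟩
  | @cons u v w e l he h ih =>
    obtain ⟨l', hl', hp⟩ := ih
    by_cases huw : u = w
    · subst huw; exact ⟨[], by simp, IsPath.nil _⟩
    by_cases hav : ∀ g ∈ l', u ∉ inc g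
    · exact ⟨e :: l', hl'.cons_cons e, IsPath.cons he hp huw hav⟩
    · push Not at hav
      obtain ⟨g, hg, hu⟩ := hav
      obtain ⟨a, b, rfl, h1, -⟩ := hp.isWalk.exists_split hg hu
      exact ⟨b, ((List.sublist_append_right a b).trans hl').cons e, hp.of_append h1⟩

/-- There is a walk from `u` to `v` with edges in `A`. -/
def Reachable (inc : Incidence V E) (A : Set E) (u v : V) : Prop :=
  ∃ l, (∀ e ∈ l, e ∈ A) ∧ inc.IsWalk u l v

theorem Reachable.refl (A : Set E) (u : V) : inc.Reachable A u u := ⟨[], by simp, IsWalk.nil u⟩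

theorem Reachable.symm (h : inc.Reachable A u v) : inc.Reachable A v u := by
  obtain ⟨l, hl, h⟩ := h
  exact ⟨l.reverse, by simpa using hl, h.reverse⟩

theorem Reachable.trans (h : inc.Reachable A u v) (h' : inc.Reachable A v w) :
    inc.Reachable A u w := by
  obtain ⟨l, hl, h⟩ := h
  obtain ⟨l', hl', h'⟩ := h'
  exact ⟨l ++ l', by simp only [List.mem_append]; rintro e (he | he); exacts [hl e he, hl' e he],
    h.append h'⟩

theorem Reachable.mono (h : inc.Reachable A u v) (hAB : ∀ e ∈ A, e ∈ B) :
    inc.Reachable B u v := by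
  obtain ⟨l, hl, h⟩ := h
  exact ⟨l, fun e he => hAB e (hl e he), h⟩

theorem Reachable.of_edge (he : e ∈ A) (h : inc e = s(u, v)) :
    inc.Reachable A u v := ⟨[e], by simpa using he, IsWalk.single h⟩

theorem Reachable.of_mem (he : e ∈ A) (hu : u ∈ inc e) (hv : v ∈ inc e) :
    inc.Reachable A u v := by
  obtain ⟨x, y, h⟩ := exists_ends inc e
  rw [h] at hu hv
  rcases Sym2.mem_iff.1 hu with rfl | rfl <;> rcases Sym2.mem_iff.1 hv with rfl | rfl
  · exact Reachable.refl _ _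
  · exact Reachable.of_edge he h
  · exact (Reachable.of_edge he h).symm
  · exact Reachable.refl _ _

theorem Reachable.exists_isPath (h : inc.Reachable A u v) :
    ∃ l, (∀ e ∈ l, e ∈ A) ∧ inc.IsPath u l v := by
  obtain ⟨l, hl, h⟩ := h
  obtain ⟨l', hl', h'⟩ := h.exists_isPath
  exact ⟨l', fun e he => hl e (hl'.subset he), h'⟩

/-- The edge `e` has exactly one end in `Y`. -/
def Crosses (inc : Incidence V E) (Y : Set V) (e : E) : Prop :=
  ∃ x y, inc e = s(x, y) ∧ x ∈ Y ∧ y ∉ Y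

/-- The edges of `A` with exactly one end in `Y`, the cut of `Y` in the subgraph with edge set
`A`. -/
def cut (inc : Incidence V E) (A : Set E) (Y : Set V) : Set E := {e | e ∈ A ∧ inc.Crosses Y e}

/-- Both ends of `e` lie in `X`. -/
def Inside (inc : Incidence V E) (X : Set V) (e : E) : Prop := ∀ v ∈ inc e, v ∈ X

theorem crosses_iff {y : V} (h : inc e = s(x, y)) :
    inc.Crosses Y e ↔ (x ∈ Y ∧ y ∉ Y) ∨ (y ∈ Y ∧ x ∉ Y) := by
  constructor
  · rintro ⟨a, b, h', ha, hb⟩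
    rw [h] at h'
    rcases Sym2.eq_iff.1 h' with ⟨rfl, rfl⟩ | ⟨rfl, rfl⟩
    · exact Or.inl ⟨ha, hb⟩
    · exact Or.inr ⟨ha, hb⟩
  · rintro (⟨h1, h2⟩ | ⟨h1, h2⟩)
    · exact ⟨x, y, h, h1, h2⟩
    · exact ⟨y, x, by rw [h, Sym2.eq_swap], h1, h2⟩

theorem inside_iff {y : V} (h : inc e = s(x, y)) :
    inc.Inside Y e ↔ x ∈ Y ∧ y ∈ Y := by
  simp [Inside, h]

theorem Inside.not_crosses (h : inc.Inside Y e) : ¬ inc.Crosses Y e := by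
  rintro ⟨x, y, hxy, -, hy⟩
  exact hy (h y (by simp [hxy]))

theorem Inside.mono (h : inc.Inside X e) (hXY : X ⊆ Y) : inc.Inside Y e :=
  fun v hv => hXY (h v hv)

open Classical in
/-- The end in `X` of an edge `e` that crosses `X`; for other edges the value is the dummy `o`. -/
noncomputable def innerEnd (inc : Incidence V E) (o : V) (X : Set V) (e : E) : V :=
  if h : inc.Crosses X e then h.choose else o

theorem innerEnd_eq {y : V} (h : inc e = s(x, y)) (hx : x ∈ X)
    (hy : y ∉ X) : inc.innerEnd o X e = x := by
  have hc : inc.Crosses X e := ⟨x, y, h, hx, hy⟩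
  unfold innerEnd
  rw [dif_pos hc]
  obtain ⟨b, h1, h2, -⟩ := hc.choose_spec
  rcases Sym2.eq_iff.1 (h.symm.trans h1) with ⟨h4, _⟩ | ⟨_, h4⟩
  · exact h4.symm
  · exact absurd h2 (h4 ▸ hy)

theorem Crosses.exists_innerEnd (h : inc.Crosses X e) :
    ∃ y, inc e = s(inc.innerEnd o X e, y) ∧ inc.innerEnd o X e ∈ X ∧ y ∉ X := by
  obtain ⟨x, y, h, hx, hy⟩ := h
  rw [innerEnd_eq h hx hy]
  exact ⟨y, h, hx, hy⟩

theorem innerEnd_mem (ho : o ∈ X) : inc.innerEnd o X e ∈ X := by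
  by_cases h : inc.Crosses X e
  · obtain ⟨_, _, h, _⟩ := h.exists_innerEnd (o := o); exact h
  · simpa [innerEnd, h] using ho

theorem IsWalk.first_exit (h : inc.IsWalk u l w) (hu : u ∈ Y) (hw : w ∉ Y) :
    ∃ a e b x y, l = a ++ e :: b ∧ inc.IsWalk u a x ∧ inc e = s(x, y) ∧ x ∈ Y ∧ y ∉ Y ∧
      inc.IsWalk y b w ∧ ∀ g ∈ a, inc.Inside Y g := by
  induction h with
  | nil => exact absurd hu hw
  | @cons u v w e l he h ih =>
    by_cases hv : v ∈ Y
    · obtain ⟨a, f, b, x, y, rfl, h1, h2, h3, h4, h5, h6⟩ := ih hv hw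
      refine ⟨e :: a, f, b, x, y, rfl, IsWalk.cons he h1, h2, h3, h4, h5, ?_⟩
      intro g hg
      rcases List.mem_cons.1 hg with rfl | hg
      · exact (inside_iff he).2 ⟨hu, hv⟩
      · exact h6 g hg
    · exact ⟨[], e, l, u, v, rfl, IsWalk.nil u, he, hu, hv, h, by simp⟩

theorem IsWalk.last_exit (h : inc.IsWalk u l w) (hu : u ∈ Y) (hw : w ∉ Y) :
    ∃ a e b x y, l = a ++ e :: b ∧ inc.IsWalk u a x ∧ inc e = s(x, y) ∧ x ∈ Y ∧ y ∉ Y ∧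
      inc.IsWalk y b w ∧ ∀ g ∈ b, inc.Inside Yᶜ g := by
  obtain ⟨a, e, b, x, y, h0, h1, h2, h3, h4, h5, h6⟩ := h.reverse.first_exit (Y := Yᶜ) hw (by simpa)
  refine ⟨b.reverse, e, a.reverse, y, x, ?_, h5.reverse, by rw [h2, Sym2.eq_swap],
    by simpa using h4, h3, h1.reverse, by simpa using h6⟩
  have := congrArg List.reverse h0
  simpa using this

theorem IsWalk.inside_of_not_crosses (h : inc.IsWalk u l w) (hu : u ∈ Y)
    (hl : ∀ g ∈ l, ¬ inc.Crosses Y g) : w ∈ Y ∧ ∀ g ∈ l, inc.Inside Y g := by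
  induction h with
  | nil => exact ⟨hu, by simp⟩
  | @cons u v w e l he _ ih =>
    have hv : v ∈ Y := by
      by_contra hv
      exact hl e (by simp) ⟨u, v, he, hu, hv⟩
    obtain ⟨h1, h2⟩ := ih hv (fun g hg => hl g (by simp [hg]))
    refine ⟨h1, ?_⟩
    intro g hg
    rcases List.mem_cons.1 hg with rfl | hg
    · exact (inside_iff he).2 ⟨hu, hv⟩
    · exact h2 g hg

theorem IsWalk.mem_of_inside (h : inc.IsWalk u l w) (hu : u ∈ Y)
    (hl : ∀ g ∈ l, inc.Inside Y g) : w ∈ Y :=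
  (h.inside_of_not_crosses hu (fun g hg => Inside.not_crosses (hl g hg))).1

/-- A system of pairwise edge-disjoint walks in `A` starting at `o`, none of which repeats an
edge. The walks are indexed by a set `C` of edges: `p c` is the edge list of the walk with index
`c`, and `y c` is its last vertex. -/
structure WalkSystem (inc : Incidence V E) (A : Set E) (o : V) (C : Set E) (y : E → V)
    (p : E → List E) : Prop where
  walk : ∀ c ∈ C, inc.IsWalk o (p c) (y c)
  mem : ∀ c ∈ C, ∀ e ∈ p c, e ∈ A
  disj : ∀ c ∈ C, ∀ d ∈ C, c ≠ d → ∀ e ∈ p c, e ∉ p d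
  nodup : ∀ c ∈ C, (p c).Nodup

theorem WalkSystem.mono
    (h : inc.WalkSystem A o C y p) (hA : ∀ c ∈ D, ∀ e ∈ p c, e ∈ B) (hC : ∀ e ∈ D, e ∈ C) :
    inc.WalkSystem B o D y p :=
  ⟨fun c hc => h.walk c (hC c hc), hA,
   fun c hc d hd => h.disj c (hC c hc) d (hC d hd), fun c hc => h.nodup c (hC c hc)⟩

theorem WalkSystem.congr {y y' : E → V} {p' : E → List E}
    (h : inc.WalkSystem A o C y p) (hy : ∀ c ∈ C, y' c = y c) (hp : ∀ c ∈ C, p' c = p c) :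
    inc.WalkSystem A o C y' p' := by
  refine ⟨fun c hc => ?_, fun c hc => ?_, fun c hc d hd => ?_, fun c hc => ?_⟩
  · rw [hy c hc, hp c hc]; exact h.walk c hc
  · rw [hp c hc]; exact h.mem c hc
  · rw [hp c hc, hp d hd]; exact h.disj c hc d hd
  · rw [hp c hc]; exact h.nodup c hc

theorem exists_paths_of_walks
    (hw : ∀ c ∈ C, inc.IsWalk o (p c) (y c)) (hm : ∀ c ∈ C, ∀ e ∈ p c, e ∈ A)
    (hd : ∀ c ∈ C, ∀ d ∈ C, c ≠ d → ∀ e ∈ p c, e ∉ p d) :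
    ∃ p', inc.WalkSystem A o C y p' ∧ (∀ c ∈ C, inc.IsPath o (p' c) (y c)) ∧
      (∀ c ∈ C, ∀ e ∈ p' c, e ∈ p c) := by
  classical
  choose! q hq1 hq2 using fun c (hc : c ∈ C) => (hw c hc).exists_isPath
  exact ⟨q, ⟨fun c hc => (hq2 c hc).isWalk, fun c hc e he => hm c hc e ((hq1 c hc).subset he),
    fun c hc d hd' hcd e he he' => hd c hc d hd' hcd e ((hq1 c hc).subset he)
      ((hq1 d hd').subset he'), fun c hc => (hq2 c hc).nodup⟩, hq2,
    fun c hc e he => (hq1 c hc).subset he⟩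

theorem exists_shortcuts
    (hw : ∀ c ∈ C, inc.IsWalk o (p c) (y c)) (hm : ∀ c ∈ C, ∀ e ∈ p c, e ∈ A)
    (hd : ∀ c ∈ C, ∀ d ∈ C, c ≠ d → ∀ e ∈ p c, e ∉ p d) :
    ∃ p', inc.WalkSystem A o C y p' ∧ (∀ c ∈ C, (p c).Nodup → p' c = p c) ∧
      (∀ c ∈ C, ∀ e ∈ p' c, e ∈ p c) := by
  classical
  have : ∀ c, ∃ q, c ∈ C → inc.IsWalk o q (y c) ∧ q.Nodup ∧ (∀ e ∈ q, e ∈ p c) ∧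
      ((p c).Nodup → q = p c) := by
    intro c
    by_cases hc : c ∈ C
    · by_cases hn : (p c).Nodup
      · exact ⟨p c, fun _ => ⟨hw c hc, hn, fun e he => he, fun _ => rfl⟩⟩
      · obtain ⟨q, hq1, hq2⟩ := (hw c hc).exists_isPath
        exact ⟨q, fun _ => ⟨hq2.isWalk, hq2.nodup, fun e he => hq1.subset he, fun h => absurd h hn⟩⟩
    · exact ⟨[], fun h => absurd h hc⟩
  choose q hq using this
  refine ⟨q, ⟨fun c hc => (hq c hc).1, fun c hc e he => hm c hc e ((hq c hc).2.2.1 e he),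
    fun c hc d hd' hcd e he he' => hd c hc d hd' hcd e ((hq c hc).2.2.1 e he)
      ((hq d hd').2.2.1 e he'), fun c hc => (hq c hc).2.1⟩,
    fun c hc => (hq c hc).2.2.2, fun c hc => (hq c hc).2.2.1⟩

/-- The edges of `A` used by no walk of the system `p` indexed by `C`. -/
def freeEdges (A C : Set E) (p : E → List E) : Set E := {e | e ∈ A ∧ ∀ c ∈ C, e ∉ p c}

/-- One step of the residual graph of a walk system: from `u` to `u'` along a free edge, or from a
vertex `u` of a walk of the system to a later vertex `u'` of the same walk. -/
def ResidualStep (inc : Incidence V E) (A : Set E) (o : V) (C : Set E) (p : E → List E)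
    (u u' : V) : Prop :=
  (∃ e ∈ freeEdges A C p, inc e = s(u, u')) ∨
    ∃ c ∈ C, ∃ l1 l2 l3, p c = l1 ++ l2 ++ l3 ∧ inc.IsWalk o l1 u ∧ inc.IsWalk u l2 u'

theorem WalkSystem.update [DecidableEq E]
    (hp : inc.WalkSystem A o C y p) {c : E} {q : List E} (hq : inc.IsWalk o q (y c))
    (hqA : ∀ e ∈ q, e ∈ A) (hqn : q.Nodup) (hqd : ∀ d ∈ C, d ≠ c → ∀ e ∈ q, e ∉ p d) :
    inc.WalkSystem A o C y (Function.update p c q) := by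
  have hne : ∀ {d}, d ≠ c → Function.update p c q d = p d := fun h => Function.update_of_ne h _ _
  refine ⟨fun d hd => ?_, fun d hd => ?_, fun d hd d' hd' hdd => ?_, fun d hd => ?_⟩
  · rcases eq_or_ne d c with rfl | h
    · rwa [Function.update_self]
    · rw [hne h]; exact hp.walk d hd
  · rcases eq_or_ne d c with rfl | h
    · rwa [Function.update_self]
    · rw [hne h]; exact hp.mem d hd
  · rcases eq_or_ne d c with rfl | h
    · rw [Function.update_self, hne hdd.symm]
      exact hqd d' hd' hdd.symm
    · rcases eq_or_ne d' c with rfl | h'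
      · rw [Function.update_self, hne h]
        exact fun e he he' => hqd d hd h e he' he
      · rw [hne h, hne h']; exact hp.disj d hd d' hd' hdd
  · rcases eq_or_ne d c with rfl | h
    · rwa [Function.update_self]
    · rw [hne h]; exact hp.nodup d hd

theorem mem_freeEdges_update [DecidableEq E] {c : E} {q : List E}
    (heA : e ∈ A) (heq : e ∉ q) (hed : ∀ d ∈ C, d ≠ c → e ∉ p d) :
    e ∈ freeEdges A C (Function.update p c q) := by
  refine ⟨heA, fun d hd => ?_⟩
  rcases eq_or_ne d c with rfl | h
  · rwa [Function.update_self]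
  · rw [Function.update_of_ne h]; exact hed d hd h

theorem WalkSystem.reroute [DecidableEq E]
    (hp : inc.WalkSystem A o C y p) {c : E} (hc : c ∈ C) {a b f : List E} (hpc : p c = a ++ b)
    (ha : inc.IsWalk o a x) (hf : inc.IsPath o f x) (hfree : ∀ e ∈ f, e ∈ freeEdges A C p) :
    inc.WalkSystem A o C y (Function.update p c (f ++ b)) ∧
      ∀ e ∈ a, e ∈ freeEdges A C (Function.update p c (f ++ b)) := by
  have hnd := List.nodup_append.1 (hpc ▸ hp.nodup c hc)
  have hac : ∀ e ∈ a, e ∈ p c := fun e he => hpc ▸ List.mem_append_left b he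
  have hbc : ∀ e ∈ b, e ∈ p c := fun e he => hpc ▸ List.mem_append_right a he
  have hb : inc.IsWalk x b (y c) := by
    obtain ⟨x', h1, h2⟩ := (hpc ▸ hp.walk c hc : inc.IsWalk o (a ++ b) (y c)).exists_of_append
    rwa [ha.end_unique h1]
  constructor
  · refine hp.update (hf.isWalk.append hb) (fun e he => ?_) ?_ (fun d hd hdc e he => ?_)
    · rcases List.mem_append.1 he with he | he
      · exact (hfree e he).1
      · exact hp.mem c hc e (hbc e he)
    · exact List.nodup_append.2 ⟨hf.nodup, hnd.2.1,
        fun e he e' he' h => (hfree e he).2 c hc (h ▸ hbc e' he')⟩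
    · rcases List.mem_append.1 he with he | he
      · exact (hfree e he).2 d hd
      · exact hp.disj c hc d hd hdc.symm e (hbc e he)
  · intro e he
    refine mem_freeEdges_update (hp.mem c hc e (hac e he)) (fun h => ?_)
      fun d hd hdc => hp.disj c hc d hd hdc.symm e (hac e he)
    rcases List.mem_append.1 h with h | h
    · exact (hfree e h).2 c hc (hac e he)
    · exact hnd.2.2 e he e h rfl

theorem ResidualStep.reroute [DecidableEq E] {u' : V}
    (h : inc.ResidualStep A o C p u u') {c : E} {a b f : List E} (hpc : p c = a ++ b)
    (ha : inc.IsWalk o a x) (hf : inc.IsPath o f x) (hfree : ∀ e ∈ f, e ∈ freeEdges A C p)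
    (hu : ¬ inc.Reachable (freeEdges A C p) o u)
    (hu' : ∀ a₁ a₂, a = a₁ ++ a₂ → ¬ inc.IsWalk o a₁ u) :
    inc.ResidualStep A o C (Function.update p c (f ++ b)) u u' := by
  rcases h with ⟨e, he, hee⟩ | ⟨d, hd, a₁, a₂, a₃, hpd, hw₁, hw₂⟩
  · refine Or.inl ⟨e, ?_, hee⟩
    refine ⟨he.1, fun d hd hed => ?_⟩
    rcases eq_or_ne d c with rfl | hdc
    · rw [Function.update_self] at hed
      rcases List.mem_append.1 hed with hef | heb
      · obtain ⟨f₁, f₂, rfl, hf₁, -⟩ := hf.isWalk.exists_split (x := u) hef (by simp [hee])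
        exact hu ⟨f₁, fun g hg => hfree g (List.mem_append_left _ hg), hf₁⟩
      · exact he.2 d hd (hpc ▸ List.mem_append_right a heb)
    · rw [Function.update_of_ne hdc] at hed
      exact he.2 d hd hed
  · refine Or.inr ⟨d, hd, ?_⟩
    rcases eq_or_ne d c with rfl | hdc
    · rw [hpc, List.append_assoc a₁] at hpd
      rcases List.append_eq_append_iff.1 hpd with ⟨r, rfl, hb⟩ | ⟨r, hr, -⟩
      · obtain ⟨x', h₁, h₂⟩ := hw₁.exists_of_append
        cases h₁.end_unique ha
        exact ⟨f ++ r, a₂, a₃, by simp [hb], hf.isWalk.append h₂, hw₂⟩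
      · exact absurd hw₁ (hu' a₁ r hr)
    · exact ⟨a₁, a₂, a₃, by rw [Function.update_of_ne hdc, hpd], hw₁, hw₂⟩

theorem exists_seq_of_reflTransGen {α : Type*} {r : α → α → Prop} {a b : α}
    (h : Relation.ReflTransGen r a b) :
    ∃ (n : ℕ) (u : ℕ → α), u 0 = a ∧ u n = b ∧ ∀ i < n, r (u i) (u (i + 1)) := by
  induction h using Relation.ReflTransGen.head_induction_on with
  | refl => exact ⟨0, fun _ => b, rfl, rfl, by simp⟩
  | @head a _ hac _ ih =>
    obtain ⟨n, u, h₀, hn, hs⟩ := ih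
    refine ⟨n + 1, fun i => i.casesOn a u, rfl, hn, ?_⟩
    rintro (_ | i) hi
    · simpa [h₀] using hac
    · exact hs i (by omega)

-- Reroute the walk that provides the first step into the part reachable from `o` by free edges; the
-- initial segment it gives up makes an earlier vertex of the residual walk reachable.
theorem WalkSystem.exists_augmented_of_residual_walk (n : ℕ)
    (hp : inc.WalkSystem A o C y p) {u : ℕ → V} (hu₀ : u 0 = v)
    (hstep : ∀ i < n, inc.ResidualStep A o C p (u i) (u (i + 1)))
    (hend : inc.Reachable (freeEdges A C p) o (u n)) :
    ∃ p', inc.WalkSystem A o C y p' ∧ inc.Reachable (freeEdges A C p') o v := by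
  classical
  induction n using Nat.strong_induction_on generalizing p with
  | _ n ih =>
  obtain ⟨k, ⟨hkn, hk⟩, hkmin⟩ := WellFounded.has_min (wellFounded_lt (α := ℕ))
    {k | k ≤ n ∧ inc.Reachable (freeEdges A C p) o (u k)} ⟨n, le_rfl, hend⟩
  replace hkmin : ∀ j < k, ¬ inc.Reachable (freeEdges A C p) o (u j) :=
    fun j hj h => hkmin j ⟨by omega, h⟩ hj
  rcases k with _ | m
  · exact ⟨p, hp, hu₀ ▸ hk⟩
  rcases hstep m (by omega) with ⟨e, he, hee⟩ | ⟨c, hc, a, b, d, hpc, ha, hb⟩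
  · exact absurd (hk.trans (Reachable.of_edge he hee).symm) (hkmin m (by omega))
  obtain ⟨f, hfree, hf⟩ := hk.exists_isPath
  obtain ⟨hp', hreleased⟩ := hp.reroute hc hpc (ha.append hb) hf hfree
  obtain ⟨j, ⟨a₁, a₂, haa, ha₁⟩, hjmin⟩ := WellFounded.has_min (wellFounded_lt (α := ℕ))
    {j | ∃ a₁ a₂, a ++ b = a₁ ++ a₂ ∧ inc.IsWalk o a₁ (u j)} ⟨m, a, b, rfl, ha⟩
  have hjm : j ≤ m := not_lt.1 (hjmin m ⟨a, b, rfl, ha⟩)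
  refine ih j (by omega) hp' (fun i hi => ?_) ⟨a₁, fun e he => hreleased e (by simp [haa, he]), ha₁⟩
  exact (hstep i (by omega)).reroute hpc (ha.append hb) hf hfree (hkmin i (by omega))
    fun a₁ a₂ h h' => hjmin i ⟨a₁, a₂, h, h'⟩ hi

/-- `Y` obstructs augmenting the walk system: it misses `o`, all its crossing edges are used, and
a walk of the system never leaves it. -/
structure IsBarrier (inc : Incidence V E) (A : Set E) (o : V) (C : Set E) (p : E → List E)
    (Y : Set V) : Prop where
  notmem : o ∉ Y
  used : ∀ e ∈ A, inc.Crosses Y e → ∃ c ∈ C, e ∈ p c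
  later : ∀ c ∈ C, ∀ l1 l2 l3 x x', p c = l1 ++ l2 ++ l3 → inc.IsWalk o l1 x → x ∈ Y →
    inc.IsWalk x l2 x' → x' ∈ Y

theorem WalkSystem.exists_augmented_or_barrier
    (hp : inc.WalkSystem A o C y p) (v : V) :
    (∃ p', inc.WalkSystem A o C y p' ∧ inc.Reachable (freeEdges A C p') o v) ∨
      ∃ Y, v ∈ Y ∧ inc.IsBarrier A o C p Y := by
  by_cases ho : Relation.ReflTransGen (inc.ResidualStep A o C p) v o
  · obtain ⟨n, u, h₀, hn, hs⟩ := exists_seq_of_reflTransGen ho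
    exact Or.inl (hp.exists_augmented_of_residual_walk n h₀ hs (hn ▸ Reachable.refl _ _))
  · refine Or.inr ⟨{w | Relation.ReflTransGen (inc.ResidualStep A o C p) v w}, .refl, ho, ?_, ?_⟩
    · rintro e he ⟨x, z, hxz, hx, hz⟩
      by_contra! hunused
      exact hz (hx.tail (Or.inl ⟨e, ⟨he, hunused⟩, hxz⟩))
    · intro c hc a b d x x' hpc ha hx hb
      exact hx.tail (Or.inr ⟨c, hc, a, b, d, hpc, ha, hb⟩)

theorem IsBarrier.exists_entry
    (hp : inc.WalkSystem A o C y p) (hY : inc.IsBarrier A o C p Y) {g : E} (hg : g ∈ A)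
    (hc : inc.Crosses Y g) :
    ∃ c ∈ C, ∃ a b u u', p c = a ++ g :: b ∧ inc.IsWalk o a u ∧ inc g = s(u, u') ∧ u ∉ Y ∧ u' ∈ Y ∧
      ∀ h ∈ a, inc.Inside Yᶜ h := by
  obtain ⟨c, hcC, hgc⟩ := hY.used g hg hc
  obtain ⟨a, b, hab⟩ := List.append_of_mem hgc
  have hw := hp.walk c hcC
  rw [hab] at hw
  obtain ⟨u, h1, h2⟩ := hw.exists_of_append
  obtain ⟨u', h3, -⟩ := h2.exists_of_cons
  have huY : u ∉ Y := by
    intro hu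
    have := hY.later c hcC a [g] b u u' (by rw [hab]; simp) h1 hu (IsWalk.single h3)
    rcases (crosses_iff h3).1 hc with h | h
    · exact h.2 this
    · exact h.2 hu
  refine ⟨c, hcC, a, b, u, u', hab, h1, h3, huY, ?_, ?_⟩
  · rcases (crosses_iff h3).1 hc with h | h
    · exact absurd h.1 huY
    · exact h.1
  · intro h hh x hx hxY
    obtain ⟨a1, a2, rfl, h5, h6⟩ := h1.exists_split hh hx
    exact huY (hY.later c hcC a1 a2 (g :: b) x u hab h5 hxY h6)

theorem IsBarrier.inside_compl
    (hp : inc.WalkSystem A o C y p) (hY : inc.IsBarrier A o C p Y) {c : E} (hc : c ∈ C)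
    (hy : y c ∉ Y) :
    ∀ h ∈ p c, inc.Inside Yᶜ h := by
  intro h hh x hx hxY
  obtain ⟨a1, a2, h0, h5, h6⟩ := (hp.walk c hc).exists_split hh hx
  exact hy (hY.later c hc a1 a2 [] x (y c) (by rw [h0]; simp) h5 hxY h6)

end WalksAndCuts

section FanAugmentation

variable {V : Type u} {E : Type v} {inc : Incidence V E}
variable {A B C D F : Set E} {o t u v w x : V} {X Y : Set V} {y : E → V}
variable {p : E → List E} {b e : E} {l : List E}

/-- The edges of `A` with both ends in `X`. -/
def insideEdges (inc : Incidence V E) (A : Set E) (X : Set V) : Set E :=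
  {e | e ∈ A ∧ inc.Inside X e}

/-- A system of edge-disjoint walks inside `X` that joins `o` to the inner end of every edge of
`D`. -/
def IsFan (inc : Incidence V E) (A : Set E) (o : V) (X : Set V) (D : Set E)
    (p : E → List E) : Prop :=
  inc.WalkSystem (inc.insideEdges A X) o D (inc.innerEnd o X) p

/-- A wave from `o` towards `t` in the subgraph with edge set `A`. The walks of `p` stop at the
inner ends of the cut edges, so that appending to each walk its index gives the walks of the wave.
-/
structure IsWave (inc : Incidence V E) (A : Set E) (o t : V) (X : Set V) (p : E → List E) :
    Prop where
  ho : o ∈ X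
  ht : t ∉ X
  cov : inc.IsFan A o X (inc.cut A X) p

/-- Every wave is trivial, in the sense that no edge of `A` joins `o` to another vertex of its
side. -/
def IsLoose (inc : Incidence V E) (A : Set E) (o t : V) : Prop :=
  ∀ X p, inc.IsWave A o t X p → ∀ e ∈ A, ∀ x ∈ X, x ≠ o → inc e ≠ s(o, x)

/-- No set of vertices missing `o` and `t` has an odd cut in the subgraph with edge set `A`. -/
def IsInnerEulerian (inc : Incidence V E) (A : Set E) (o t : V) : Prop :=
  ∀ Y : Set V, o ∉ Y → t ∉ Y → (inc.cut A Y).Finite → Even (inc.cut A Y).ncard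

/-- Every finite set of edges of `A` fails to separate `x` from `o`. -/
def InfinitelyConnected (inc : Incidence V E) (A : Set E) (x o : V) : Prop :=
  ∀ N : Set E, N.Finite → inc.Reachable (A \ N) x o

open Classical in
/-- The number, modulo 2, of entries of an edge list that cross `Y`. -/
noncomputable def crossingParity (inc : Incidence V E) (Y : Set V) (l : List E) : ZMod 2 :=
  (l.countP (inc.Crosses Y) : ℕ)

theorem crossingParity_append (l l' : List E) :
    inc.crossingParity Y (l ++ l') = inc.crossingParity Y l + inc.crossingParity Y l' := by
  simp [crossingParity]

theorem crossingParity_flatMap_eq_zero {α : Type*} {f : α → List E} {L : List α}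
    (h : ∀ a ∈ L, inc.crossingParity Y (f a) = 0) : inc.crossingParity Y (L.flatMap f) = 0 := by
  induction L with
  | nil => simp [crossingParity]
  | cons a L ih =>
    rw [List.flatMap_cons, crossingParity_append, h a (by simp),
      ih fun a ha => h a (List.mem_cons_of_mem _ ha), add_zero]

theorem crossingParity_of_nodup (hl : l.Nodup) :
    inc.crossingParity Y l = ({e | e ∈ l ∧ inc.Crosses Y e} : Set E).ncard := by
  classical
  have h : ({e | e ∈ l ∧ inc.Crosses Y e} : Set E) = (l.filter (inc.Crosses Y ·)).toFinset := by
    ext e; simp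
  rw [h, Set.ncard_coe_finset, List.toFinset_card_of_nodup (hl.filter _), crossingParity,
    List.countP_eq_length_filter]

open Classical in
theorem IsWalk.crossingParity_eq (h : inc.IsWalk u l v) :
    inc.crossingParity Y l = (if u ∈ Y then 1 else 0) + if v ∈ Y then 1 else 0 := by
  induction h with
  | nil v => rw [CharTwo.add_self_eq_zero]; exact Nat.cast_zero
  | @cons u v w e l he h ih =>
    rw [← List.singleton_append, crossingParity_append, ih]
    by_cases h1 : u ∈ Y <;> by_cases h2 : v ∈ Y <;> by_cases h3 : w ∈ Y <;>
      simp only [crossingParity, List.countP_singleton, crosses_iff he, h1, h2, h3] <;> decide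

theorem IsInnerEulerian.crossingParity_eq_zero (hE : inc.IsInnerEulerian A o t) (ho : o ∉ Y)
    (ht : t ∉ Y) (hl : l.Nodup) (hlA : ∀ e ∈ l, e ∈ A)
    (hcut : ∀ e ∈ A, inc.Crosses Y e → e ∈ l) : inc.crossingParity Y l = 0 := by
  have hcutl : inc.cut A Y = {e | e ∈ l ∧ inc.Crosses Y e} :=
    Set.ext fun e => ⟨fun h => ⟨hcut e h.1 h.2, h.2⟩, fun h => ⟨hlA e h.1, h.2⟩⟩
  have hfin : (inc.cut A Y).Finite := by
    rw [hcutl]; exact (List.finite_toSet l).subset fun e he => he.1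
  rw [crossingParity_of_nodup hl, ← hcutl, ZMod.natCast_eq_zero_iff]
  exact (hE Y ho ht hfin).two_dvd

theorem IsFan.mem_insideEdges (hp : inc.IsFan A o X C p) {c : E} (hc : c ∈ C) (he : e ∈ p c) :
    e ∈ inc.insideEdges A X := hp.mem c hc e he

theorem IsFan.exists_isWalk_append_index (hp : inc.IsFan A o X C p) {c : E} (hc : c ∈ C)
    (hcX : inc.Crosses X c) : ∃ z, z ∉ X ∧ inc.IsWalk o (p c ++ [c]) z := by
  obtain ⟨z, hz, -, hzX⟩ := hcX.exists_innerEnd (o := o)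
  exact ⟨z, hzX, (hp.walk c hc).append (IsWalk.single hz)⟩

/-- The edges of the walks with index in `S`, each prolonged by its index, those of `T`, and `b`. -/
noncomputable def tracedEdges (p : E → List E) (S : Finset E) (T : List E) (b : E) : List E :=
  S.toList.flatMap (fun c => p c ++ [c]) ++ (T ++ [b])

theorem mem_tracedEdges {S : Finset E} {T : List E} :
    e ∈ tracedEdges p S T b ↔ (∃ c ∈ S, e ∈ p c ∨ e = c) ∨ e ∈ T ∨ e = b := by
  simp [tracedEdges]

theorem IsFan.nodup_tracedEdges (hp : inc.IsFan A o X C p) (hC : ∀ c ∈ C, inc.Crosses X c)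
    (hb : inc.Crosses X b) (hbC : b ∉ C) {S : Finset E} (hS : ∀ c ∈ S, c ∈ C) {T : List E}
    (hT : T.Nodup) (hTfree : ∀ e ∈ T, e ∈ freeEdges (inc.insideEdges A X) C p) :
    (tracedEdges p S T b).Nodup := by
  have not_mem_of_crosses : ∀ c ∈ C, ∀ d, inc.Crosses X d → d ∉ p c := fun c hc d hd hdc =>
    (hp.mem_insideEdges hc hdc).2.not_crosses hd
  have not_mem_T_of_crosses : ∀ d, inc.Crosses X d → d ∉ T := fun d hd hdT =>
    (hTfree d hdT).1.2.not_crosses hd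
  refine List.nodup_append.2 ⟨List.nodup_flatMap.2 ⟨fun c hc => ?_, ?_⟩,
    List.nodup_append.2 ⟨hT, List.nodup_singleton b, ?_⟩, ?_⟩
  · have hcC := hS c (Finset.mem_toList.1 hc)
    refine List.nodup_append.2 ⟨hp.nodup c hcC, List.nodup_singleton c, ?_⟩
    rintro e he d hd rfl
    exact not_mem_of_crosses c hcC e (List.mem_singleton.1 hd ▸ hC c hcC) he
  · refine List.Nodup.pairwise_of_forall_ne S.nodup_toList fun c hc d hd hcd e hec hed => ?_
    have hcC := hS c (Finset.mem_toList.1 hc)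
    have hdC := hS d (Finset.mem_toList.1 hd)
    rw [List.mem_append, List.mem_singleton] at hec hed
    rcases hec with hec | rfl <;> rcases hed with hed | rfl
    · exact hp.disj c hcC d hdC hcd e hec hed
    · exact not_mem_of_crosses c hcC e (hC e hdC) hec
    · exact not_mem_of_crosses d hdC e (hC e hcC) hed
    · exact hcd rfl
  · rintro e he d hd rfl
    exact not_mem_T_of_crosses e (List.mem_singleton.1 hd ▸ hb) he
  · rintro e he d hd rfl
    simp only [List.mem_flatMap, Finset.mem_toList, List.mem_append, List.mem_singleton] at he hd
    obtain ⟨c, hcS, he | rfl⟩ := he <;> rcases hd with hd | rfl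
    · exact (hTfree e hd).2 c (hS c hcS) he
    · exact not_mem_of_crosses c (hS c hcS) e hb he
    · exact not_mem_T_of_crosses e (hC e (hS e hcS)) hd
    · exact hbC (hS e hcS)

theorem IsFan.crossingParity_tracedEdges (hp : inc.IsFan A o X C p)
    (hC : ∀ c ∈ C, inc.Crosses X c) (hb : inc.Crosses X b) {S : Finset E} (hS : ∀ c ∈ S, c ∈ C)
    {T : List E} (hT : inc.IsWalk w T (inc.innerEnd o X b)) (hYX : Y ⊆ X) (ho : o ∉ Y)
    (hw : w ∈ Y) : inc.crossingParity Y (tracedEdges p S T b) = 1 := by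
  rw [tracedEdges, crossingParity_append, crossingParity_flatMap_eq_zero, zero_add]
  · obtain ⟨z, hz, -, hzX⟩ := hb.exists_innerEnd (o := o)
    rw [(hT.append (IsWalk.single hz)).crossingParity_eq, if_pos hw, if_neg fun h => hzX (hYX h),
      add_zero]
  · intro c hc
    have hcC := hS c (Finset.mem_toList.1 hc)
    obtain ⟨z, hzX, hz⟩ := hp.exists_isWalk_append_index hcC (hC c hcC)
    rw [hz.crossingParity_eq, if_neg ho, if_neg fun h => hzX (hYX h), add_zero]

theorem IsFan.mem_tracedEdges_of_crosses (hp : inc.IsFan A o X C p)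
    (hC : ∀ e ∈ inc.cut A X, e ≠ b → e ∈ C) {S : Finset E} {T : List E} (hYX : Y ⊆ X)
    (hY : ∀ e ∈ freeEdges (inc.insideEdges A X) C p, e ∉ T → ¬ inc.Crosses Y e)
    (havoid : ∀ c ∈ C, c ∉ S → ∀ l₁ l₂ x, p c = l₁ ++ l₂ → inc.IsWalk o l₁ x → x ∉ Y) :
    ∀ e ∈ A, inc.Crosses Y e → e ∈ tracedEdges p S T b := by
  intro e heA heY
  by_contra htraced
  rw [mem_tracedEdges] at htraced
  push Not at htraced
  obtain ⟨hS, hT, hb⟩ := htraced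
  obtain ⟨x, z, hxz, hx, -⟩ := id heY
  by_cases hzX : z ∈ X
  · obtain ⟨c, hc, hec⟩ : ∃ c ∈ C, e ∈ p c := by
      by_contra! hunused
      exact hY e ⟨⟨heA, (inside_iff hxz).2 ⟨hYX hx, hzX⟩⟩, hunused⟩ hT heY
    obtain ⟨l₁, l₂, hl, hw, -⟩ := (hp.walk c hc).exists_split (x := x) hec (by simp [hxz])
    exact havoid c hc (fun h => (hS c h).1 hec) l₁ l₂ x hl hw hx
  · have heC : e ∈ C := hC e ⟨heA, x, z, hxz, hYX hx, hzX⟩ hb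
    refine havoid e heC (fun h => (hS e h).2 rfl) (p e) [] _ (by simp) (hp.walk e heC) ?_
    rwa [innerEnd_eq hxz (hYX hx) hzX]

/-- A place where a walk system can be rerouted: the walk with index `index` is left at `vertex`,
after the initial segment `init`, and the free edges `bridge` are followed to `target`. -/
structure Switch (inc : Incidence V E) (A : Set E) (o : V) (C : Set E) (p : E → List E) where
  index : E
  init : List E
  rest : List E
  bridge : List E
  vertex : V
  target : V
  index_mem : index ∈ C
  eq : p index = init ++ rest
  isWalk_init : inc.IsWalk o init vertex
  isWalk_bridge : inc.IsWalk vertex bridge target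
  bridge_nodup : bridge.Nodup
  bridge_free : ∀ e ∈ bridge, e ∈ freeEdges A C p

-- Otherwise the vertices reachable from `w` by free edges outside `T` form a set whose cut consists
-- of traced edges only, and the traced walks enter it exactly once too often.
theorem IsInnerEulerian.exists_switch (hE : inc.IsInnerEulerian A o t) (ho : o ∈ X) (ht : t ∉ X)
    (hb : b ∈ inc.cut A X) (hC : C = inc.cut (A \ F) X \ {b}) (hp : inc.IsFan (A \ F) o X C p)
    (hno : ¬ inc.Reachable (freeEdges (inc.insideEdges (A \ F) X) C p) (inc.innerEnd o X b) o)
    (hF : ∀ x, inc.Reachable (freeEdges (inc.insideEdges (A \ F) X) C p) (inc.innerEnd o X b) x →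
      (∃ f ∈ F, f ∈ A ∧ x ∈ inc f) → inc.InfinitelyConnected (A \ F) x o)
    {S : Finset E} {T : List E} (hS : ∀ c ∈ S, c ∈ C) (hTnd : T.Nodup)
    (hT : ∀ e ∈ T, e ∈ freeEdges (inc.insideEdges (A \ F) X) C p)
    (hw : inc.IsWalk w T (inc.innerEnd o X b)) :
    ∃ σ : inc.Switch (inc.insideEdges (A \ F) X) o C p, σ.target = w ∧ σ.index ∉ S ∧
      ∀ e ∈ σ.bridge, e ∉ T := by
  set H := freeEdges (inc.insideEdges (A \ F) X) C p
  set Y : Set V := {x | inc.Reachable {e | e ∈ H ∧ e ∉ T} w x}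
  by_contra! hcon
  have hreach : ∀ x ∈ Y, inc.Reachable H (inc.innerEnd o X b) x := fun x hx =>
    (Reachable.symm ⟨T, hT, hw⟩).trans (hx.mono fun e he => he.1)
  have hYX : Y ⊆ X := fun x hx => by
    obtain ⟨l, hl, hlw⟩ := hreach x hx
    exact hlw.mem_of_inside (innerEnd_mem ho) fun g hg => (hl g hg).1.2
  have hoY : o ∉ Y := fun h => hno (hreach o h)
  have hCX : ∀ c ∈ C, inc.Crosses X c := fun c hc => (hC ▸ hc).1.2
  have htraced : ∀ e ∈ A \ F, inc.Crosses Y e → e ∈ tracedEdges p S T b := by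
    refine hp.mem_tracedEdges_of_crosses (fun e he heb => hC ▸ ⟨he, heb⟩) hYX ?_ ?_
    · rintro e he heT ⟨x, z, hxz, hx, hz⟩
      exact hz (Reachable.trans hx (Reachable.of_edge ⟨he, heT⟩ hxz))
    · intro c hc hcS l₁ l₂ x hpc hl₁ hx
      obtain ⟨τ, hτ, hτp⟩ := (Reachable.symm hx).exists_isPath
      obtain ⟨e, he, heT⟩ := hcon ⟨c, l₁, l₂, τ, x, w, hc, hpc, hl₁, hτp.isWalk, hτp.nodup,
        fun e he => (hτ e he).1⟩ rfl hcS
      exact (hτ e he).2 heT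
  have hFY : ∀ f ∈ F, f ∈ A → ¬ inc.Crosses Y f := by
    rintro f hf hfA ⟨x, z, hxz, hx, -⟩
    obtain ⟨l, hl, hlw⟩ := hF x (hreach x hx) ⟨f, hf, hfA, by simp [hxz]⟩ _
      (List.finite_toSet (tracedEdges p S T b))
    obtain ⟨a, e, c, x', z', rfl, -, hxz', hx', hz', -, -⟩ := hlw.first_exit hx hoY
    have he := hl e (by simp)
    exact he.2 (htraced e he.1 ⟨x', z', hxz', hx', hz'⟩)
  have htracedA : ∀ e ∈ tracedEdges p S T b, e ∈ A := by
    intro e he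
    rcases mem_tracedEdges.1 he with ⟨c, hc, he | rfl⟩ | he | rfl
    · exact (hp.mem_insideEdges (hS c hc) he).1.1
    · exact (hC ▸ hS e hc).1.1.1
    · exact (hT e he).1.1.1
    · exact hb.1
  have hone := hp.crossingParity_tracedEdges hCX hb.2 hS hw hYX hoY (Reachable.refl _ w)
  rw [hE.crossingParity_eq_zero hoY (fun h => ht (hYX h))
    (hp.nodup_tracedEdges hCX hb.2 (hC ▸ fun h => h.2 rfl) hS hTnd hT) htracedA
    fun e heA heY => htraced e ⟨heA, fun heF => hFY e heF heA heY⟩ heY] at hone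
  exact zero_ne_one hone

theorem exists_seq_switch (hstep : ∀ (S : Finset E) (T : List E) (w : V), (∀ c ∈ S, c ∈ C) →
      T.Nodup → (∀ e ∈ T, e ∈ freeEdges A C p) → inc.IsWalk w T v →
      ∃ σ : inc.Switch A o C p, σ.target = w ∧ σ.index ∉ S ∧ ∀ e ∈ σ.bridge, e ∉ T) :
    ∃ σ : ℕ → inc.Switch A o C p, (σ 0).target = v ∧ (∀ n, (σ (n + 1)).target = (σ n).vertex) ∧
      ∀ m n, m < n → (σ m).index ≠ (σ n).index ∧ ∀ e ∈ (σ n).bridge, e ∉ (σ m).bridge := by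
  classical
  let State := {s : Finset E × List E × V // (∀ c ∈ s.1, c ∈ C) ∧ s.2.1.Nodup ∧
    (∀ e ∈ s.2.1, e ∈ freeEdges A C p) ∧ inc.IsWalk s.2.2 s.2.1 v}
  choose switch htarget hindex hbridge using fun s : State =>
    hstep s.1.1 s.1.2.1 s.1.2.2 s.2.1 s.2.2.1 s.2.2.2.1 s.2.2.2.2
  let next (s : State) : State :=
    ⟨(insert (switch s).index s.1.1, (switch s).bridge ++ s.1.2.1, (switch s).vertex),
      Finset.forall_mem_insert _ _ _ |>.2 ⟨(switch s).index_mem, s.2.1⟩,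
      List.nodup_append.2 ⟨(switch s).bridge_nodup, s.2.2.1,
        fun e he d hd h => hbridge s e he (h ▸ hd)⟩,
      List.forall_mem_append.2 ⟨(switch s).bridge_free, s.2.2.2.1⟩,
      (htarget s ▸ (switch s).isWalk_bridge).append s.2.2.2.2⟩
  let state (n : ℕ) : State :=
    next^[n] ⟨(∅, [], v), by simp, List.nodup_nil, by simp, IsWalk.nil v⟩
  have hsucc (n : ℕ) : state (n + 1) = next (state n) := Function.iterate_succ_apply' next n _
  have hrecorded {m n : ℕ} (h : m < n) : (switch (state m)).index ∈ (state n).1.1 ∧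
      ∀ e ∈ (switch (state m)).bridge, e ∈ (state n).1.2.1 := by
    induction n, h using Nat.le_induction with
    | base =>
      rw [hsucc]
      exact ⟨Finset.mem_insert_self _ _, fun e he => List.mem_append_left _ he⟩
    | succ n _ ih =>
      rw [hsucc]
      exact ⟨Finset.mem_insert_of_mem ih.1, fun e he => List.mem_append_right _ (ih.2 e he)⟩
  refine ⟨fun n => switch (state n), htarget _, fun n => ?_, fun m n h => ⟨fun heq => ?_, ?_⟩⟩
  · rw [htarget, hsucc]
  · exact hindex (state n) (heq ▸ (hrecorded h).1)
  · exact fun e he he' => hbridge (state n) e he ((hrecorded h).2 e he')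

-- The walk with index `x` uses the initial segment of the walk with index `η x`.
theorem WalkSystem.exists_reindexed (hp : inc.WalkSystem A o C y p) {η : E → E}
    (hη : Set.MapsTo η D C) (hinj : Set.InjOn η D) {init bridge rest : E → List E}
    (heq : ∀ c ∈ C, p c = init c ++ rest c) (hrest : ∀ d ∈ D, d ∉ C → rest d = [])
    (hfree : ∀ c ∈ C, ∀ e ∈ bridge c, e ∈ freeEdges A C p)
    (hdisj : ∀ c ∈ C, ∀ d ∈ C, c ≠ d → ∀ e ∈ bridge c, e ∉ bridge d)
    (hwalk : ∀ d ∈ D, inc.IsWalk o (init (η d) ++ bridge (η d) ++ rest d) (y d)) :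
    ∃ q, inc.WalkSystem A o D y q ∧ ∀ d ∈ D, (init (η d) ++ bridge (η d) ++ rest d).Nodup →
      q d = init (η d) ++ bridge (η d) ++ rest d := by
  have init_sub : ∀ c ∈ C, ∀ e ∈ init c, e ∈ p c := fun c hc e he => by simp [heq c hc, he]
  have rest_sub : ∀ d ∈ D, ∀ e ∈ rest d, d ∈ C ∧ e ∈ p d := fun d hd e he => by
    by_cases hdC : d ∈ C
    · exact ⟨hdC, by simp [heq d hdC, he]⟩
    · simp [hrest d hd hdC] at he
  have init_rest : ∀ c ∈ C, ∀ d ∈ D, ∀ e ∈ init c, e ∉ rest d := by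
    intro c hc d hd e he he'
    rcases eq_or_ne c d with rfl | hcd
    · exact (List.nodup_append.1 (heq c hc ▸ hp.nodup c hc)).2.2 e he e he' rfl
    · exact hp.disj c hc d (rest_sub d hd e he').1 hcd e (init_sub c hc e he)
        (rest_sub d hd e he').2
  have bridge_rest : ∀ c ∈ C, ∀ d ∈ D, ∀ e ∈ bridge c, e ∉ rest d := fun c hc d hd e he he' =>
    (hfree c hc e he).2 d (rest_sub d hd e he').1 (rest_sub d hd e he').2
  suffices h : (∀ d ∈ D, ∀ e ∈ init (η d) ++ bridge (η d) ++ rest d, e ∈ A) ∧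
      ∀ d ∈ D, ∀ d' ∈ D, d ≠ d' → ∀ e ∈ init (η d) ++ bridge (η d) ++ rest d,
        e ∉ init (η d') ++ bridge (η d') ++ rest d' by
    obtain ⟨q, hq, hqnd, -⟩ := exists_shortcuts hwalk h.1 h.2
    exact ⟨q, hq, hqnd⟩
  refine ⟨fun d hd e he => ?_, fun d hd d' hd' hdd e he he' => ?_⟩
  · simp only [List.mem_append] at he
    rcases he with (he | he) | he
    · exact hp.mem _ (hη hd) e (init_sub _ (hη hd) e he)
    · exact (hfree _ (hη hd) e he).1
    · exact hp.mem d (rest_sub d hd e he).1 e (rest_sub d hd e he).2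
  · have hne : η d ≠ η d' := fun h => hdd (hinj hd hd' h)
    simp only [List.mem_append] at he he'
    rcases he with (he | he) | he <;> rcases he' with (he' | he') | he'
    · exact hp.disj _ (hη hd) _ (hη hd') hne e (init_sub _ (hη hd) e he) (init_sub _ (hη hd') e he')
    · exact (hfree _ (hη hd') e he').2 _ (hη hd) (init_sub _ (hη hd) e he)
    · exact init_rest _ (hη hd) d' hd' e he he'
    · exact (hfree _ (hη hd) e he).2 _ (hη hd') (init_sub _ (hη hd') e he')
    · exact hdisj _ (hη hd) _ (hη hd') hne e he he'
    · exact bridge_rest _ (hη hd) d' hd' e he he'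
    · exact init_rest _ (hη hd') d hd e he' he
    · exact bridge_rest _ (hη hd') d hd e he' he
    · exact hp.disj d (rest_sub d hd e he).1 d' (rest_sub d' hd' e he').1 hdd e
        (rest_sub d hd e he).2 (rest_sub d' hd' e he').2

theorem exists_shift_map {α : Type*} {C : Set α} {b : α} (hb : b ∉ C) {c : ℕ → α}
    (hc : Function.Injective c) (hcC : ∀ n, c n ∈ C) :
    ∃ η : α → α, η b = c 0 ∧ (∀ n, η (c n) = c (n + 1)) ∧ (∀ d ∈ C, d ∉ Set.range c → η d = d) ∧
      Set.MapsTo η (insert b C) C ∧ Set.InjOn η (insert b C) := by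
  classical
  have hbc : ∀ n, c n ≠ b := fun n h => hb (h ▸ hcC n)
  obtain ⟨η, hηb, hηc, hηd⟩ : ∃ η : α → α, η b = c 0 ∧ (∀ n, η (c n) = c (n + 1)) ∧
      ∀ d ∈ C, d ∉ Set.range c → η d = d := by
    refine ⟨Function.update (Function.extend c (fun n => c (n + 1)) id) b (c 0),
      Function.update_self .., fun n => ?_, fun d hd hdc => ?_⟩
    · rw [Function.update_of_ne (hbc n), hc.extend_apply]
    · rw [Function.update_of_ne (ne_of_mem_of_not_mem hd hb), Function.extend_apply' _ _ _ hdc, id]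
  have hcases : ∀ d ∈ insert b C, d = b ∨ d ∈ Set.range c ∨ d ∈ C ∧ d ∉ Set.range c := by
    rintro d (rfl | hd)
    exacts [Or.inl rfl, Or.inr ((em _).imp_right fun h => ⟨hd, h⟩)]
  refine ⟨η, hηb, hηc, hηd, fun d hd => ?_, fun d hd d' hd' h => ?_⟩
  · rcases hcases d hd with rfl | ⟨n, rfl⟩ | ⟨hdC, hdc⟩
    exacts [hηb ▸ hcC 0, hηc n ▸ hcC (n + 1), (hηd d hdC hdc).symm ▸ hdC]
  · rcases hcases d hd with rfl | ⟨m, rfl⟩ | ⟨hdC, hdc⟩ <;>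
      rcases hcases d' hd' with rfl | ⟨n, rfl⟩ | ⟨hdC', hdc'⟩ <;>
      try simp only [hηb, hηc] at h
    · rfl
    · exact absurd (hc h) (Nat.succ_ne_zero n).symm
    · exact absurd ⟨0, h.trans (hηd d' hdC' hdc')⟩ hdc'
    · exact absurd (hc h) (Nat.succ_ne_zero m)
    · rw [Nat.succ_injective (hc h)]
    · exact absurd ⟨m + 1, h.trans (hηd d' hdC' hdc')⟩ hdc'
    · exact absurd ⟨0, h.symm.trans (hηd d hdC hdc)⟩ hdc
    · exact absurd ⟨n + 1, h.symm.trans (hηd d hdC hdc)⟩ hdc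
    · rwa [hηd d hdC hdc, hηd d' hdC' hdc'] at h

theorem exists_switch_decomposition {σ : ℕ → inc.Switch A o C p}
    (hlt : ∀ m n, m < n → (σ m).index ≠ (σ n).index ∧ ∀ e ∈ (σ n).bridge, e ∉ (σ m).bridge) :
    ∃ init bridge rest : E → List E,
      (∀ n, init (σ n).index = (σ n).init ∧ bridge (σ n).index = (σ n).bridge ∧
        rest (σ n).index = (σ n).rest) ∧
      (∀ d ∉ Set.range fun n => (σ n).index, init d = p d ∧ bridge d = [] ∧ rest d = []) ∧
      (∀ d, p d = init d ++ rest d) ∧ (∀ d, ∀ e ∈ bridge d, e ∈ freeEdges A C p) ∧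
      ∀ d d', d ≠ d' → ∀ e ∈ bridge d, e ∉ bridge d' := by
  classical
  have hinj : Function.Injective fun n => (σ n).index := .of_lt_imp_ne fun m n h => (hlt m n h).1
  obtain ⟨bridge, hbridge, hbridge'⟩ : ∃ bridge : E → List E,
      (∀ n, bridge (σ n).index = (σ n).bridge) ∧
      ∀ d ∉ Set.range fun n => (σ n).index, bridge d = [] :=
    ⟨Function.extend (fun n => (σ n).index) (fun n => (σ n).bridge) fun _ => [],
      hinj.extend_apply _ _, fun d hd => Function.extend_apply' _ _ _ hd⟩
  have mem_bridge : ∀ d, ∀ e ∈ bridge d, ∃ n, d = (σ n).index ∧ e ∈ (σ n).bridge := by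
    intro d e he
    by_cases hd : d ∈ Set.range fun n => (σ n).index
    · obtain ⟨n, rfl⟩ := hd
      exact ⟨n, rfl, hbridge n ▸ he⟩
    · simp [hbridge' d hd] at he
  refine ⟨Function.extend (fun n => (σ n).index) (fun n => (σ n).init) p, bridge,
    Function.extend (fun n => (σ n).index) (fun n => (σ n).rest) fun _ => [],
    fun n => ⟨hinj.extend_apply .., hbridge n, hinj.extend_apply ..⟩,
    fun d hd => ⟨Function.extend_apply' _ _ _ hd, hbridge' d hd, Function.extend_apply' _ _ _ hd⟩,
    fun d => ?_, fun d e he => ?_, fun d d' hdd e he he' => ?_⟩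
  · by_cases hd : d ∈ Set.range fun n => (σ n).index
    · obtain ⟨n, rfl⟩ := hd
      rw [hinj.extend_apply, hinj.extend_apply, (σ n).eq]
    · rw [Function.extend_apply' _ _ _ hd, Function.extend_apply' _ _ _ hd, List.append_nil]
  · obtain ⟨n, -, hn⟩ := mem_bridge d e he
    exact (σ n).bridge_free e hn
  · obtain ⟨⟨m, rfl, hm⟩, n, rfl, hn⟩ := mem_bridge d e he, mem_bridge d' e he'
    rcases lt_trichotomy m n with h | rfl | h
    exacts [(hlt m n h).2 e hn hm, hdd rfl, (hlt n m h).2 e hm hn]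

theorem WalkSystem.exists_insert_of_seq_switch (hp : inc.WalkSystem A o C y p) (hb : b ∉ C)
    {σ : ℕ → inc.Switch A o C p} (h₀ : (σ 0).target = y b)
    (hsucc : ∀ n, (σ (n + 1)).target = (σ n).vertex)
    (hlt : ∀ m n, m < n → (σ m).index ≠ (σ n).index ∧ ∀ e ∈ (σ n).bridge, e ∉ (σ m).bridge) :
    ∃ q, ∃ B : Set E, inc.WalkSystem A o (insert b C) y q ∧ B.Countable ∧
      ∀ c ∈ C, c ∉ B → q c = p c := by
  set c : ℕ → E := fun n => (σ n).index
  have hcC (n : ℕ) : c n ∈ C := (σ n).index_mem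
  obtain ⟨η, hηb, hηc, hηd, hη, hηinj⟩ :=
    exists_shift_map hb (.of_lt_imp_ne fun m n h => (hlt m n h).1) hcC
  obtain ⟨init, bridge, rest, hσ, hrange, heq, hfree, hdisj⟩ := exists_switch_decomposition hlt
  have hrest : ∀ d ∈ insert b C, d ∉ C → rest d = [] := fun d _ hdC =>
    (hrange d fun ⟨n, hn⟩ => hdC (hn ▸ hcC n)).2.2
  have walk_head (n : ℕ) : inc.IsWalk o (init (c n) ++ bridge (c n)) (σ n).target := by
    rw [(hσ n).1, (hσ n).2.1]; exact (σ n).isWalk_init.append (σ n).isWalk_bridge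
  have hwalk : ∀ d ∈ insert b C, inc.IsWalk o (init (η d) ++ bridge (η d) ++ rest d) (y d) := by
    intro d hd
    by_cases hdc : d ∈ Set.range c
    · obtain ⟨n, rfl⟩ := hdc
      obtain ⟨z, hz, hzy⟩ := ((σ n).eq ▸ hp.walk (c n) (hcC n)).exists_of_append
      rw [hηc, (hσ n).2.2]
      exact (hsucc n ▸ walk_head (n + 1)).append (((σ n).isWalk_init.end_unique hz) ▸ hzy)
    · rw [(hrange d hdc).2.2, List.append_nil]
      rcases hd with rfl | hd
      · rw [hηb, ← h₀]; exact walk_head 0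
      · rw [hηd d hd hdc, (hrange d hdc).1, (hrange d hdc).2.1, List.append_nil]
        exact hp.walk d hd
  obtain ⟨q, hq, hqnd⟩ := hp.exists_reindexed hη hηinj (fun d _ => heq d) hrest
    (fun d _ => hfree d) (fun d _ d' _ => hdisj d d') hwalk
  refine ⟨q, Set.range c, hq, Set.countable_range c, fun d hd hdc => ?_⟩
  have hqd := hqnd d (Or.inr hd)
  rw [hηd d hd hdc, (hrange d hdc).1, (hrange d hdc).2.1, (hrange d hdc).2.2, List.append_nil,
    List.append_nil] at hqd
  exact hqd (hp.nodup d hd)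

theorem WalkSystem.exists_insert (hp : inc.WalkSystem A o C y p) (hb : b ∉ C)
    (h : inc.Reachable (freeEdges A C p) o (y b)) :
    ∃ q, inc.WalkSystem A o (insert b C) y q ∧ ∀ c ∈ C, q c = p c := by
  classical
  obtain ⟨l, hfree, hl⟩ := h.exists_isPath
  have hne : ∀ c ∈ C, Function.update p b l c = p c := fun c hc =>
    Function.update_of_ne (ne_of_mem_of_not_mem hc hb) _ _
  refine ⟨Function.update p b l, ⟨?_, ?_, ?_, ?_⟩, hne⟩
  · rintro c (rfl | hc)
    · rw [Function.update_self]; exact hl.isWalk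
    · rw [hne c hc]; exact hp.walk c hc
  · rintro c (rfl | hc)
    · rw [Function.update_self]; exact fun e he => (hfree e he).1
    · rw [hne c hc]; exact hp.mem c hc
  · rintro c (rfl | hc) d (rfl | hd) hcd
    · exact absurd rfl hcd
    · rw [hne d hd, Function.update_self]; exact fun e he => (hfree e he).2 d hd
    · rw [hne c hc, Function.update_self]; exact fun e he he' => (hfree e he').2 c hc he
    · rw [hne c hc, hne d hd]; exact hp.disj c hc d hd hcd
  · rintro c (rfl | hc)
    · rw [Function.update_self]; exact hl.nodup
    · rw [hne c hc]; exact hp.nodup c hc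

theorem IsInnerEulerian.exists_fan_insert (hE : inc.IsInnerEulerian A o t) (ho : o ∈ X)
    (ht : t ∉ X) (hb : b ∈ inc.cut A X) (hC : C = inc.cut (A \ F) X \ {b})
    (hp : inc.IsFan (A \ F) o X C p)
    (hF : ∀ x, inc.Reachable (freeEdges (inc.insideEdges (A \ F) X) C p) (inc.innerEnd o X b) x →
      (∃ f ∈ F, f ∈ A ∧ x ∈ inc f) → inc.InfinitelyConnected (A \ F) x o) :
    ∃ q, ∃ B : Set E, inc.IsFan (A \ F) o X (insert b C) q ∧ B.Countable ∧
      ∀ c ∈ C, c ∉ B → q c = p c := by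
  have hbC : b ∉ C := hC ▸ fun h => h.2 rfl
  by_cases hno : inc.Reachable (freeEdges (inc.insideEdges (A \ F) X) C p) (inc.innerEnd o X b) o
  · obtain ⟨q, hq, hqp⟩ := WalkSystem.exists_insert hp hbC hno.symm
    exact ⟨q, ∅, hq, Set.countable_empty, fun c hc _ => hqp c hc⟩
  · obtain ⟨σ, h₀, hsucc, hlt⟩ := exists_seq_switch fun S T w hS hTnd hT hw =>
      hE.exists_switch ho ht hb hC hp hno hF hS hTnd hT hw
    exact WalkSystem.exists_insert_of_seq_switch hp hbC h₀ hsucc hlt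

end FanAugmentation

section Waves

variable {V : Type u} {E : Type v} {inc : Incidence V E}
variable {A B C D : Set E} {o t u w x z : V} {X Y : Set V} {p q : E → List E} {y : E → V}
  {b c d e g : E} {l : List E}

theorem prefix_of_concat_prefix_concat {α : Type*} {l l' : List α} {a b : α}
    (h : l ++ [a] <+: l' ++ [b]) : l <+: l' := by
  rcases List.prefix_concat_iff.1 h with h | h
  · rw [(List.append_inj' h rfl).1]
  · exact (List.prefix_append l [a]).trans h

theorem WalkSystem.exists_fan_of_prefix (hp : inc.WalkSystem B o C y p)
    (hD : ∀ g ∈ D, inc.Crosses X g ∧ ∃ c ∈ C, ∃ l, l ++ [g] <+: p c ++ [c] ∧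
      (∀ e ∈ l, e ∈ inc.insideEdges A X) ∧ inc.IsWalk o l (inc.innerEnd o X g)) :
    ∃ q, inc.IsFan A o X D q := by
  choose! hcross c hc q hpre hins hwalk using hD
  have hsub : ∀ g ∈ D, q g <+: p (c g) := fun g hg => prefix_of_concat_prefix_concat (hpre g hg)
  have heq : ∀ g ∈ D, ∀ g' ∈ D, q g ++ [g] <+: q g' ++ [g'] → g = g' := by
    intro g hg g' hg' h
    rcases List.prefix_concat_iff.1 h with h | h
    · simpa using (List.append_inj' h rfl).2
    · exact absurd (hcross g hg) (hins g' hg' g (h.subset (by simp))).2.not_crosses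
  refine ⟨q, hwalk, hins, fun g hg g' hg' hne e he he' => ?_,
    fun g hg => (hp.nodup _ (hc g hg)).sublist (hsub g hg).sublist⟩
  by_cases hcc : c g = c g'
  · rcases List.prefix_or_prefix_of_prefix (hpre g hg) (hcc ▸ hpre g' hg') with h | h
    · exact hne (heq g hg g' hg' h)
    · exact hne (heq g' hg' g hg h).symm
  · exact hp.disj _ (hc g hg) _ (hc g' hg') hcc e ((hsub g hg).subset he) ((hsub g' hg').subset he')

theorem IsBarrier.exists_fan_sdiff (hY : inc.IsBarrier (inc.insideEdges A X) o C p Y)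
    (hp : inc.IsFan A o X C p) :
    ∃ q, inc.IsFan A o (X \ Y) {g | g ∈ inc.cut A (X \ Y) ∧ (g ∈ inc.cut A X → g ∈ C)} q := by
  refine WalkSystem.exists_fan_of_prefix hp ?_
  rintro g ⟨⟨hgA, x, y, hxy, hx, hy⟩, hgC⟩
  refine ⟨⟨x, y, hxy, hx, hy⟩, ?_⟩
  rw [innerEnd_eq hxy hx hy]
  by_cases hyX : y ∈ X
  · have hyY : y ∈ Y := by_contra fun h => hy ⟨hyX, h⟩
    obtain ⟨c, hc, a, b, u, u', hpc, hwalk, hg, huY, hu'Y, hins⟩ :=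
      hY.exists_entry hp (g := g) ⟨hgA, (inside_iff hxy).2 ⟨hx.1, hyX⟩⟩
        ((crosses_iff hxy).2 (Or.inr ⟨hyY, hx.2⟩))
    obtain rfl : x = u := by
      rcases Sym2.eq_iff.1 (hxy.symm.trans hg) with ⟨h, -⟩ | ⟨h, -⟩
      · exact h
      · exact absurd (h ▸ hu'Y) hx.2
    refine ⟨c, hc, a, ⟨b ++ [c], by simp [hpc]⟩, fun e he => ?_, hwalk⟩
    have heX := hp.mem c hc e (by simp [hpc, he])
    exact ⟨heX.1, fun v hv => ⟨heX.2 v hv, hins e he v hv⟩⟩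
  · have hgC' : g ∈ C := hgC ⟨hgA, x, y, hxy, hx.1, hyX⟩
    have hend : inc.innerEnd o X g = x := innerEnd_eq hxy hx.1 hyX
    refine ⟨g, hgC', p g, List.prefix_rfl, fun e he => ?_, hend ▸ hp.walk g hgC'⟩
    have heX := hp.mem g hgC' e he
    have heY := hY.inside_compl hp hgC' (by rw [hend]; exact hx.2) e he
    exact ⟨heX.1, fun v hv => ⟨heX.2 v hv, heY v hv⟩⟩

theorem IsInnerEulerian.exists_wave_of_fan (hE : inc.IsInnerEulerian A o t) (ho : o ∈ X)
    (ht : t ∉ X) (hp : inc.IsFan A o X C p) (hC : inc.cut A X ⊆ insert b C) :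
    ∃ q, inc.IsWave A o t X q := by
  by_cases hb : inc.cut A X ⊆ C
  · exact ⟨p, ho, ht, WalkSystem.mono hp (fun c hc => hp.mem c (hb hc)) hb⟩
  · obtain ⟨b', hb', hb'C⟩ := Set.not_subset.1 hb
    obtain rfl : b' = b := (hC hb').resolve_right hb'C
    have hsub : inc.cut A X \ {b'} ⊆ C := fun c hc => (hC hc.1).resolve_left hc.2
    have hfan : inc.IsFan (A \ ∅) o X (inc.cut A X \ {b'}) p :=
      WalkSystem.mono hp (by simpa using fun c hc hcb => hp.mem c (hsub ⟨hc, hcb⟩)) hsub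
    obtain ⟨q, _, hq, -⟩ := hE.exists_fan_insert ho ht hb' (F := ∅) (by simp) hfan (by simp)
    exact ⟨q, ho, ht, by simpa [Set.insert_eq_of_mem hb'] using hq⟩

theorem IsLoose.ne_of_fan (hL : inc.IsLoose A o t) (hE : inc.IsInnerEulerian A o t) (ho : o ∈ X)
    (ht : t ∉ X) (hp : inc.IsFan A o X C p) (hC : inc.cut A X ⊆ insert b C) :
    ∀ e ∈ A, ∀ x ∈ X, x ≠ o → inc e ≠ s(o, x) :=
  have ⟨q, hq⟩ := hE.exists_wave_of_fan ho ht hp hC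
  hL X q hq

theorem IsLoose.exists_mem_of_fan {b₁ b₂ : E} (hL : inc.IsLoose A o t)
    (hE : inc.IsInnerEulerian A o t) (ho : o ∈ X) (ht : t ∉ X) (hp : inc.IsFan A o X C p)
    (hC : inc.cut A X ⊆ insert b₁ (insert b₂ C)) (he : e ∈ A) (hx : x ∈ X) (hxo : x ≠ o)
    (hex : inc e = s(o, x)) : ∃ c ∈ C, e ∈ p c := by
  by_contra! hfree
  have hb₁ : b₁ ∉ C := fun h =>
    hL.ne_of_fan hE ho ht hp (b := b₂)
      (by rwa [Set.insert_eq_of_mem (Set.mem_insert_of_mem b₂ h)] at hC) e he x hx hxo hex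
  rcases WalkSystem.exists_augmented_or_barrier hp (inc.innerEnd o X b₁) with
    ⟨p', hp', hreach⟩ | ⟨Y, hbY, hY⟩
  · obtain ⟨q, hq, -⟩ := hp'.exists_insert hb₁ hreach
    exact hL.ne_of_fan hE ho ht hq (hC.trans (Set.insert_comm b₁ b₂ C).subset) e he x hx hxo hex
  · obtain ⟨q, hq⟩ := hY.exists_fan_sdiff hp
    have hxY : x ∉ Y := by
      intro hxY
      have heX : e ∈ inc.insideEdges A X := ⟨he, (inside_iff hex).2 ⟨ho, hx⟩⟩
      obtain ⟨c, hc, hec⟩ := hY.used e heX ((crosses_iff hex).2 (Or.inr ⟨hxY, hY.notmem⟩))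
      exact hfree c hc hec
    refine hL.ne_of_fan (X := X \ Y) (b := b₂) hE ⟨ho, hY.notmem⟩ (fun h => ht h.1) hq
      (fun g hg => ?_) e he x ⟨hx, hxY⟩ hxo hex
    refine or_iff_not_imp_left.2 fun hgb₂ => ⟨hg, fun hgX => ?_⟩
    refine ((hC hgX).resolve_left ?_).resolve_left hgb₂
    rintro rfl
    obtain ⟨y, hy, -, hyX⟩ := hgX.2.exists_innerEnd (o := o)
    rcases (crosses_iff hy).1 hg.2 with h | h
    · exact h.1.2 hbY
    · exact hyX h.1.1

section Contract

open Classical in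
/-- The incidence map obtained by identifying all vertices of `X` with `o`. -/
noncomputable def contract (inc : Incidence V E) (o : V) (X : Set V) : Incidence V E :=
  fun e => (inc e).map fun v => if v ∈ X then o else v

theorem contract_eq (h : inc e = s(x, z)) [Decidable (x ∈ X)] [Decidable (z ∈ X)] :
    inc.contract o X e = s(if x ∈ X then o else x, if z ∈ X then o else z) := by
  rw [contract, h, Sym2.map_mk]
  congr

theorem crosses_contract_of_mem (ho : o ∈ Y) :
    (inc.contract o X).Crosses Y e ↔ inc.Crosses (X ∪ Y) e := by
  classical
  obtain ⟨x, y, h⟩ := exists_ends inc e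
  rw [crosses_iff h, crosses_iff (contract_eq h)]
  by_cases hx : x ∈ X <;> by_cases hy : y ∈ X <;> simp [hx, hy, ho]

theorem crosses_contract_of_notMem (ho : o ∉ Y) :
    (inc.contract o X).Crosses Y e ↔ inc.Crosses (Y \ X) e := by
  classical
  obtain ⟨x, y, h⟩ := exists_ends inc e
  rw [crosses_iff h, crosses_iff (contract_eq h)]
  by_cases hx : x ∈ X <;> by_cases hy : y ∈ X <;> simp [hx, hy, ho]

theorem inside_contract_of_mem (ho : o ∈ Y) :
    (inc.contract o X).Inside Y e ↔ inc.Inside (X ∪ Y) e := by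
  classical
  obtain ⟨x, y, h⟩ := exists_ends inc e
  rw [inside_iff h, inside_iff (contract_eq h)]
  by_cases hx : x ∈ X <;> by_cases hy : y ∈ X <;> simp [hx, hy, ho]

theorem inside_contract_of_notMem (ho : o ∉ Y) :
    (inc.contract o X).Inside Y e ↔ inc.Inside (Y \ X) e := by
  classical
  obtain ⟨x, y, h⟩ := exists_ends inc e
  rw [inside_iff h, inside_iff (contract_eq h)]
  by_cases hx : x ∈ X <;> by_cases hy : y ∈ X <;> simp [hx, hy, ho]

theorem cut_contract_of_mem (ho : o ∈ Y) : (inc.contract o X).cut A Y = inc.cut A (X ∪ Y) :=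
  Set.ext fun _ => and_congr_right fun _ => crosses_contract_of_mem ho

theorem cut_contract_of_notMem (ho : o ∉ Y) : (inc.contract o X).cut A Y = inc.cut A (Y \ X) :=
  Set.ext fun _ => and_congr_right fun _ => crosses_contract_of_notMem ho

theorem IsInnerEulerian.contract (h : inc.IsInnerEulerian A o t) (X : Set V) :
    (inc.contract o X).IsInnerEulerian A o t := by
  intro Y ho ht
  rw [cut_contract_of_notMem ho]
  exact h _ (fun h => ho h.1) (fun h => ht h.1)

theorem contract_eq_of_inside_compl (h : inc.Inside Xᶜ e) : inc.contract o X e = inc e := by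
  classical
  obtain ⟨x, y, hxy⟩ := exists_ends inc e
  obtain ⟨hx, hy⟩ := (inside_iff hxy).1 h
  rw [contract_eq hxy, if_neg hx, if_neg hy, hxy]

theorem contract_eq_of_inside (h : inc.Inside X e) : inc.contract o X e = s(o, o) := by
  classical
  obtain ⟨x, y, hxy⟩ := exists_ends inc e
  obtain ⟨hx, hy⟩ := (inside_iff hxy).1 h
  rw [contract_eq hxy, if_pos hx, if_pos hy]

theorem contract_eq_of_mem_of_notMem (hx : x ∈ X) (hz : z ∉ X) (h : inc e = s(x, z)) :
    inc.contract o X e = s(o, z) := by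
  classical
  rw [contract_eq h, if_pos hx, if_neg hz]

theorem notMem_contract_iff (ho : o ∈ X) : o ∉ inc.contract o X e ↔ inc.Inside Xᶜ e := by
  classical
  obtain ⟨x, y, hxy⟩ := exists_ends inc e
  rw [inside_iff hxy, contract_eq hxy, Sym2.mem_iff, not_or]
  have key : ∀ v, (¬ o = if v ∈ X then o else v) ↔ v ∈ Xᶜ := by
    intro v
    by_cases hv : v ∈ X
    · simp [hv]
    · simp [hv, show o ≠ v from fun h => hv (h ▸ ho)]
  rw [key, key]

theorem exists_of_contract_eq (ho : o ∈ X) (hz : z ≠ o) (h : inc.contract o X e = s(o, z)) :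
    ∃ x ∈ X, inc e = s(x, z) ∧ z ∉ X := by
  classical
  obtain ⟨x, y, hxy⟩ := exists_ends inc e
  by_cases hx : x ∈ X <;> by_cases hy : y ∈ X <;>
    simp only [contract_eq hxy, hx, hy, if_true, if_false, Sym2.eq_iff] at h
  · grind
  · exact ⟨x, hx, by grind, by grind⟩
  · exact ⟨y, hy, by grind [Sym2.eq_swap], by grind⟩
  · grind

theorem contract_contract (ho : o ∈ Y) :
    (inc.contract o X).contract o Y = inc.contract o (X ∪ Y) := by
  classical
  funext e
  obtain ⟨x, y, hxy⟩ := exists_ends inc e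
  rw [contract_eq hxy, contract_eq (contract_eq hxy)]
  have key : ∀ v, (if (if v ∈ X then o else v) ∈ Y then o else if v ∈ X then o else v) =
      if v ∈ X ∪ Y then o else v := by
    intro v
    by_cases hv : v ∈ X <;> simp [hv, ho]
  rw [key, key]

theorem contract_singleton : inc.contract o {o} = inc := by
  classical
  funext e
  obtain ⟨x, y, hxy⟩ := exists_ends inc e
  have key : ∀ v, (if v ∈ ({o} : Set V) then o else v) = v := by
    intro v
    by_cases hv : v = o <;> simp [hv]
  rw [contract_eq hxy, key, key, hxy]

end Contract

theorem IsPath.congr {inc' : Incidence V E} (h : inc.IsPath u l w)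
    (hc : ∀ e ∈ l, inc' e = inc e) : inc'.IsPath u l w := by
  induction h with
  | nil => exact IsPath.nil _
  | cons he _ hne hav ih =>
    refine IsPath.cons (by rw [hc _ (by simp), he]) (ih fun e he => hc e (by simp [he])) hne ?_
    intro g hg
    rw [hc g (by simp [hg])]
    exact hav g hg

theorem IsPath.exists_of_cons (h : inc.IsPath u (e :: l) w) :
    ∃ v, inc e = s(u, v) ∧ v ≠ u ∧ u ≠ w ∧ inc.IsPath v l w ∧ ∀ g ∈ l, u ∉ inc g := by
  cases h with
  | @cons _ v _ _ _ he hl hne hav =>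
    refine ⟨v, he, ?_, hne, hl, hav⟩
    rintro rfl
    cases hl with
    | nil => exact hne rfl
    | cons he' => exact hav _ List.mem_cons_self (by rw [he']; simp)

theorem IsPath.exists_of_contract_cons (ho : o ∈ X) (h : (inc.contract o X).IsPath o (d :: l) w) :
    ∃ x ∈ X, ∃ z, inc d = s(x, z) ∧ z ∉ X ∧ inc.IsPath z l w ∧ ∀ g ∈ l, inc.Inside Xᶜ g := by
  obtain ⟨z, hd, hz, -, hl, hav⟩ := h.exists_of_cons
  obtain ⟨x, hx, hxz, hzX⟩ := exists_of_contract_eq ho hz hd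
  have hins : ∀ g ∈ l, inc.Inside Xᶜ g := fun g hg => (notMem_contract_iff ho).1 (hav g hg)
  exact ⟨x, hx, z, hxz, hzX,
    hl.congr fun e he => (contract_eq_of_inside_compl (hins e he)).symm, hins⟩

theorem IsPath.append_cons_of_inside {a : List E} (ha : inc.IsPath u a x)
    (haX : ∀ g ∈ a, inc.Inside X g) (hx : x ∈ X) (hd : inc d = s(x, z)) (hz : z ∉ X)
    (hl : inc.IsPath z l w) (hlX : ∀ g ∈ l, inc.Inside Xᶜ g) : inc.IsPath u (a ++ d :: l) w := by
  have hwX : w ∉ X := hl.isWalk.mem_of_inside (Y := Xᶜ) hz hlX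
  induction ha with
  | nil => exact IsPath.cons hd hl (fun h => hwX (h ▸ hx)) fun g hg h => hlX g hg _ h hx
  | @cons u v x e a he _ hne hav ih =>
    have huX : u ∈ X := haX e (by simp) u (by rw [he]; simp)
    refine IsPath.cons he (ih (fun g hg => haX g (by simp [hg])) hx hd) (fun h => hwX (h ▸ huX)) ?_
    intro g hg
    rcases List.mem_append.1 hg with hg | hg
    · exact hav g hg
    · rcases List.mem_cons.1 hg with rfl | hg
      · rw [hd, Sym2.mem_iff, not_or]
        exact ⟨hne, fun h => hz (h ▸ huX)⟩
      · exact fun h => hlX g hg _ h huX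

/-- A wave all of whose walks are paths. -/
structure IsPathWave (inc : Incidence V E) (A : Set E) (o t : V) (X : Set V) (p : E → List E) :
    Prop extends inc.IsWave A o t X p where
  path : ∀ c ∈ inc.cut A X, inc.IsPath o (p c) (inc.innerEnd o X c)

theorem IsWave.exists_isPathWave (h : inc.IsWave A o t X p) : ∃ q, inc.IsPathWave A o t X q := by
  obtain ⟨q, hq, hpath, -⟩ := exists_paths_of_walks h.cov.walk h.cov.mem h.cov.disj
  exact ⟨q, ⟨h.ho, h.ht, hq⟩, hpath⟩

theorem mem_cut_of_subset_of_subset {Z : Set V} (hXY : X ⊆ Y) (hYZ : Y ⊆ Z)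
    (hX : c ∈ inc.cut A X) (hZ : c ∈ inc.cut A Z) : c ∈ inc.cut A Y := by
  obtain ⟨hcA, x, y, hxy, hx, -⟩ := hX
  refine ⟨hcA, x, y, hxy, hXY hx, fun h => ?_⟩
  rcases (crosses_iff hxy).1 hZ.2 with h' | h'
  · exact h'.2 (hYZ h)
  · exact h'.2 (hYZ (hXY hx))

theorem innerEnd_eq_innerEnd_of_subset (hXY : X ⊆ Y) (hX : inc.Crosses X c)
    (hY : inc.Crosses Y c) : inc.innerEnd o Y c = inc.innerEnd o X c := by
  obtain ⟨y, hy, hx, -⟩ := hX.exists_innerEnd (o := o)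
  refine innerEnd_eq hy (hXY hx) fun hyY => ?_
  rcases (crosses_iff hy).1 hY with h | h
  · exact h.2 hyY
  · exact h.2 (hXY hx)

/-- The walk with index `g` of a wave `q` of the graph obtained by contracting the side of a wave
`p`, lengthened to a walk of the original graph. If the walk is nonempty then its first edge is
the last edge of a walk of `p`, and otherwise `g` itself is; `p` provides the initial segment. -/
def prolong (p q : E → List E) (g : E) : List E := p ((q g).headD g) ++ q g

theorem IsPathWave.eq_nil_of_mem_cut (hq : (inc.contract o X).IsPathWave A o t Y q)
    (hc : c ∈ inc.cut A X) (hc' : c ∈ inc.cut A (X ∪ Y)) : q c = [] := by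
  obtain ⟨x, y, hxy, hx, hy⟩ := hc.2
  have hyY : y ∉ Y := fun h => by
    rcases (crosses_iff hxy).1 hc'.2 with h' | h'
    · exact h'.2 (Or.inr h)
    · exact h'.2 (Or.inl hx)
  have hpath := hq.path c (by rwa [cut_contract_of_mem hq.ho])
  rw [innerEnd_eq (contract_eq_of_mem_of_notMem hx hy hxy) hq.ho hyY] at hpath
  exact hpath.eq_nil

theorem IsPathWave.injOn_headD (hq : (inc.contract o X).IsPathWave A o t Y q) :
    Set.InjOn (fun g => (q g).headD g) (inc.cut A (X ∪ Y)) := by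
  have hcut := cut_contract_of_mem (inc := inc) (A := A) (X := X) hq.ho
  have hmem : ∀ g, (q g).headD g = g ∨ (q g).headD g ∈ q g := by
    intro g
    cases q g <;> simp
  have hnot : ∀ g ∈ inc.cut A (X ∪ Y), ∀ g' ∈ inc.cut A (X ∪ Y), g ∉ q g' := by
    intro g hg g' hg' h
    have := (hq.cov.mem g' (hcut ▸ hg') g h).2
    exact ((inside_contract_of_mem hq.ho).1 this).not_crosses hg.2
  intro g hg g' hg' hgg
  by_contra hne
  simp only at hgg
  rcases hmem g with h | h <;> rcases hmem g' with h' | h'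
  · exact hne (h.symm.trans (hgg.trans h'))
  · exact hnot g hg g' hg' (h ▸ hgg ▸ h')
  · exact hnot g' hg' g hg (h' ▸ hgg ▸ h)
  · exact hq.cov.disj g (hcut ▸ hg) g' (hcut ▸ hg') hne _ h (hgg ▸ h')

theorem IsPathWave.prolong_eq (hq : (inc.contract o X).IsPathWave A o t Y q)
    (hc : c ∈ inc.cut A X) (hc' : c ∈ inc.cut A (X ∪ Y)) : Incidence.prolong p q c = p c := by
  simp [Incidence.prolong, hq.eq_nil_of_mem_cut hc hc']

theorem IsPathWave.mem_cut_of_eq_nil (hq : (inc.contract o X).IsPathWave A o t Y q)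
    (hp : inc.IsPathWave A o t X p) (hg : g ∈ inc.cut A (X ∪ Y)) (hnil : q g = []) :
    g ∈ inc.cut A X := by
  refine ⟨hg.1, by_contra fun hgX => ?_⟩
  obtain ⟨x, y, hxy, hx, hy⟩ := hg.2
  have hyX : y ∉ X := fun h => hy (Or.inl h)
  have hxX : x ∉ X := fun h => hgX ⟨x, y, hxy, h, hyX⟩
  have hpath := hq.path g (by rwa [cut_contract_of_mem hq.ho])
  have hins : inc.Inside Xᶜ g := (inside_iff hxy).2 ⟨hxX, hyX⟩
  rw [hnil, innerEnd_eq ((contract_eq_of_inside_compl hins).trans hxy) (hx.resolve_left hxX)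
    (fun h => hy (Or.inr h))] at hpath
  exact hxX (hpath.isWalk.eq_of_nil ▸ hp.ho)

theorem IsPathWave.exists_of_eq_cons (hq : (inc.contract o X).IsPathWave A o t Y q)
    (hp : inc.IsPathWave A o t X p) (hg : g ∈ inc.cut A (X ∪ Y)) (hgl : q g = d :: l) :
    ∃ z, inc d = s(inc.innerEnd o X d, z) ∧ d ∈ inc.cut A X ∧ z ∉ X ∧
      inc.IsPath z l (inc.innerEnd o (X ∪ Y) g) ∧ ∀ e ∈ l, inc.Inside Xᶜ e := by
  have hgY : g ∈ (inc.contract o X).cut A Y := by rwa [cut_contract_of_mem hq.ho]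
  have hpath := hgl ▸ hq.path g hgY
  have hdA := (hq.cov.mem g hgY d (by simp [hgl])).1
  obtain ⟨-, -, -, hwo, -⟩ := hpath.exists_of_cons
  obtain ⟨z', hz', hw, hzY⟩ := hgY.2.exists_innerEnd (o := o)
  have hins : inc.Inside Xᶜ g := (notMem_contract_iff hp.ho).1 <| by
    rw [hz', Sym2.mem_iff, not_or]
    exact ⟨hwo, fun h => hzY (h ▸ hq.ho)⟩
  have hgz := (contract_eq_of_inside_compl hins).symm.trans hz'
  have hend : inc.innerEnd o (X ∪ Y) g = (inc.contract o X).innerEnd o Y g :=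
    innerEnd_eq hgz (Or.inr hw) fun h => h.elim ((inside_iff hgz).1 hins).2 hzY
  obtain ⟨x, hx, z, hd, hz, hl, hlX⟩ := hpath.exists_of_contract_cons hp.ho
  exact ⟨z, by rwa [innerEnd_eq hd hx hz], ⟨hdA, x, z, hd, hx, hz⟩, hz, hend ▸ hl, hlX⟩

theorem IsPathWave.headD_mem_cut (hq : (inc.contract o X).IsPathWave A o t Y q)
    (hp : inc.IsPathWave A o t X p) (hg : g ∈ inc.cut A (X ∪ Y)) : (q g).headD g ∈ inc.cut A X := by
  cases hgl : q g with
  | nil => exact hq.mem_cut_of_eq_nil hp hg hgl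
  | cons d l =>
    have ⟨_, _, hd, _⟩ := hq.exists_of_eq_cons hp hg hgl
    exact hd

theorem IsPathWave.not_inside_of_mem (hq : (inc.contract o X).IsPathWave A o t Y q)
    (hp : inc.IsPathWave A o t X p) (hg : g ∈ inc.cut A (X ∪ Y)) (he : e ∈ q g) :
    ¬ inc.Inside X e := by
  intro hi
  cases hgl : q g with
  | nil => simp [hgl] at he
  | cons d l =>
    obtain ⟨-, -, hd, -, -, hl⟩ := hq.exists_of_eq_cons hp hg hgl
    rw [hgl] at he
    rcases List.mem_cons.1 he with rfl | he
    · exact hi.not_crosses hd.2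
    · obtain ⟨x, y, hxy⟩ := exists_ends inc e
      exact ((inside_iff hxy).1 (hl e he)).1 ((inside_iff hxy).1 hi).1

theorem IsPathWave.isPath_prolong (hq : (inc.contract o X).IsPathWave A o t Y q)
    (hp : inc.IsPathWave A o t X p) (hg : g ∈ inc.cut A (X ∪ Y)) :
    inc.IsPath o (prolong p q g) (inc.innerEnd o (X ∪ Y) g) := by
  cases hgl : q g with
  | nil =>
    have hgX := hq.mem_cut_of_eq_nil hp hg hgl
    have hend : inc.innerEnd o (X ∪ Y) g = inc.innerEnd o X g :=
      innerEnd_eq_innerEnd_of_subset Set.subset_union_left hgX.2 hg.2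
    simpa [prolong, hgl, hend] using hp.path g hgX
  | cons d l =>
    obtain ⟨z, hdz, hd, hz, hl, hlX⟩ := hq.exists_of_eq_cons hp hg hgl
    have := (hp.path d hd).append_cons_of_inside (fun e he => (hp.cov.mem d hd e he).2)
      (innerEnd_mem hp.ho) hdz hz hl hlX
    simpa [prolong, hgl] using this

theorem IsPathWave.prolong (hq : (inc.contract o X).IsPathWave A o t Y q)
    (hp : inc.IsPathWave A o t X p) : inc.IsPathWave A o t (X ∪ Y) (prolong p q) := by
  have hcut := cut_contract_of_mem (inc := inc) (A := A) (X := X) hq.ho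
  have hpath := fun g hg => hq.isPath_prolong hp (g := g) hg
  refine ⟨⟨Or.inl hp.ho, fun h => h.elim hp.ht hq.ht, fun g hg => (hpath g hg).isWalk, ?_, ?_,
    fun g hg => (hpath g hg).nodup⟩, hpath⟩
  · intro g hg e he
    rcases List.mem_append.1 he with he | he
    · have := hp.cov.mem _ (hq.headD_mem_cut hp hg) e he
      exact ⟨this.1, this.2.mono Set.subset_union_left⟩
    · have := hq.cov.mem g (hcut ▸ hg) e he
      exact ⟨this.1, (inside_contract_of_mem hq.ho).1 this.2⟩
  · intro g hg g' hg' hne e he he'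
    have hhead := hq.headD_mem_cut hp hg
    have hhead' := hq.headD_mem_cut hp hg'
    rcases List.mem_append.1 he with he | he <;> rcases List.mem_append.1 he' with he' | he'
    · exact hp.cov.disj _ hhead _ hhead' (hq.injOn_headD.ne hg hg' hne) e he he'
    · exact hq.not_inside_of_mem hp hg' he' (hp.cov.mem _ hhead e he).2
    · exact hq.not_inside_of_mem hp hg he (hp.cov.mem _ hhead' e he').2
    · exact hq.cov.disj g (hcut ▸ hg) g' (hcut ▸ hg') hne e he he'

theorem IsPathWave.mem_prolong_of_mem (hq : (inc.contract o X).IsPathWave A o t Y q)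
    (hp : inc.IsPathWave A o t X p) (hg : g ∈ inc.cut A (X ∪ Y)) (hd : d ∈ inc.cut A X)
    (hdg : d ∈ q g) : ∀ e ∈ d :: p d, e ∈ Incidence.prolong p q g := by
  cases hgl : q g with
  | nil => simp [hgl] at hdg
  | cons d' l =>
    obtain ⟨-, -, -, -, -, hl⟩ := hq.exists_of_eq_cons hp hg hgl
    rw [hgl] at hdg
    obtain rfl : d = d' := by
      refine (List.mem_cons.1 hdg).resolve_right fun h => ?_
      obtain ⟨x, y, hxy, hx, -⟩ := hd.2
      exact ((inside_iff hxy).1 (hl d h)).1 hx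
    intro e he
    rcases List.mem_cons.1 he with rfl | he <;> simp [Incidence.prolong, *]

/-- The pair `b = (Y, q)` of a side and a system of walks extends the pair `a = (X, p)`: the side
grows, and the walks to edges in both cuts stay the same. -/
def Extends (inc : Incidence V E) (A : Set E) (a b : Set V × (E → List E)) : Prop :=
  a.1 ⊆ b.1 ∧ ∀ c ∈ inc.cut A a.1, c ∈ inc.cut A b.1 → b.2 c = a.2 c

theorem Extends.refl (a : Set V × (E → List E)) : inc.Extends A a a :=
  ⟨subset_rfl, fun _ _ _ => rfl⟩

theorem Extends.trans {a b c : Set V × (E → List E)} (hab : inc.Extends A a b)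
    (hbc : inc.Extends A b c) : inc.Extends A a c := by
  refine ⟨hab.1.trans hbc.1, fun e he he' => ?_⟩
  have he'' := mem_cut_of_subset_of_subset hab.1 hbc.1 he he'
  rw [hbc.2 e he'' he', hab.2 e he he'']

theorem exists_isPathWave_of_isChain {S : Set (Set V × (E → List E))} (hne : S.Nonempty)
    (hwave : ∀ a ∈ S, inc.IsPathWave A o t a.1 a.2) (hS : IsChain (inc.Extends A) S) :
    ∃ m, inc.IsPathWave A o t m.1 m.2 ∧ ∀ a ∈ S, inc.Extends A a m := by
  set U : Set V := ⋃ a ∈ S, a.1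
  have hsub : ∀ a ∈ S, a.1 ⊆ U := fun a ha => Set.subset_biUnion_of_mem (u := fun a => a.1) ha
  have hcomp : ∀ a ∈ S, ∀ b ∈ S, inc.Extends A a b ∨ inc.Extends A b a := by
    intro a ha b hb
    rcases eq_or_ne a b with rfl | hab
    · exact Or.inl (Extends.refl a)
    · exact hS ha hb hab
  have hex : ∀ c ∈ inc.cut A U, ∃ a ∈ S, c ∈ inc.cut A a.1 := by
    rintro c ⟨hcA, x, y, hxy, hx, hy⟩
    obtain ⟨a, ha, hxa⟩ := Set.mem_iUnion₂.1 hx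
    exact ⟨a, ha, hcA, x, y, hxy, hxa, fun h => hy (hsub a ha h)⟩
  have : Nonempty (Set V × (E → List E)) := ⟨hne.some⟩
  choose! f hfS hf using hex
  have hval : ∀ c ∈ inc.cut A U, ∀ a ∈ S, c ∈ inc.cut A a.1 → (f c).2 c = a.2 c := by
    intro c hc a ha hca
    rcases hcomp a ha (f c) (hfS c hc) with h | h
    · exact h.2 c hca (hf c hc)
    · exact (h.2 c (hf c hc) hca).symm
  have hcommon : ∀ c ∈ inc.cut A U, ∀ d ∈ inc.cut A U,
      ∃ a ∈ S, c ∈ inc.cut A a.1 ∧ d ∈ inc.cut A a.1 := by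
    intro c hc d hd
    rcases hcomp (f c) (hfS c hc) (f d) (hfS d hd) with h | h
    · exact ⟨f d, hfS d hd,
        mem_cut_of_subset_of_subset h.1 (hsub _ (hfS d hd)) (hf c hc) hc, hf d hd⟩
    · exact ⟨f c, hfS c hc, hf c hc,
        mem_cut_of_subset_of_subset h.1 (hsub _ (hfS c hc)) (hf d hd) hd⟩
  have hpath : ∀ c ∈ inc.cut A U, inc.IsPath o ((f c).2 c) (inc.innerEnd o U c) := by
    intro c hc
    rw [innerEnd_eq_innerEnd_of_subset (hsub _ (hfS c hc)) (hf c hc).2 hc.2]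
    exact (hwave _ (hfS c hc)).path c (hf c hc)
  refine ⟨(U, fun c => (f c).2 c), ⟨⟨hsub _ hne.some_mem (hwave _ hne.some_mem).ho, fun h => ?_,
    fun c hc => (hpath c hc).isWalk, fun c hc e he => ?_, fun c hc d hd hcd => ?_,
    fun c hc => (hpath c hc).nodup⟩, hpath⟩,
    fun a ha => ⟨hsub a ha, fun c hc hcU => hval c hcU a ha hc⟩⟩
  · obtain ⟨a, ha, hta⟩ := Set.mem_iUnion₂.1 h
    exact (hwave a ha).ht hta
  · have := (hwave _ (hfS c hc)).cov.mem c (hf c hc) e he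
    exact ⟨this.1, this.2.mono (hsub _ (hfS c hc))⟩
  · obtain ⟨a, ha, hca, hda⟩ := hcommon c hc d hd
    simp only [hval c hc a ha hca, hval d hd a ha hda]
    exact (hwave a ha).cov.disj c hca d hda hcd

theorem IsPathWave.exists_isLoose_contract {X₀ : Set V} {p₀ : E → List E}
    (h₀ : inc.IsPathWave A o t X₀ p₀) :
    ∃ X p, X₀ ⊆ X ∧ inc.IsPathWave A o t X p ∧ (inc.contract o X).IsLoose A o t := by
  let P := {a : Set V × (E → List E) // inc.IsPathWave A o t a.1 a.2 ∧ X₀ ⊆ a.1}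
  obtain ⟨⟨⟨X, p⟩, hp, hX₀⟩, hmax⟩ := exists_maximal_of_chains_bounded
    (r := fun a b : P => inc.Extends A a.1 b.1) (fun S hS => by
      rcases S.eq_empty_or_nonempty with rfl | ⟨a, ha⟩
      · exact ⟨⟨(X₀, p₀), h₀, subset_rfl⟩, by simp⟩
      obtain ⟨m, hm, hub⟩ := exists_isPathWave_of_isChain (inc := inc) (A := A) (o := o) (t := t)
        (S := Subtype.val '' S) ⟨a.1, a, ha, rfl⟩ (by rintro _ ⟨b, -, rfl⟩; exact b.2.1)
        (by
          rintro _ ⟨b, hb, rfl⟩ _ ⟨c, hc, rfl⟩ hne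
          exact hS hb hc fun h => hne (congrArg Subtype.val h))
      exact ⟨⟨m, hm, a.2.2.trans (hub _ ⟨a, ha, rfl⟩).1⟩, fun b hb => hub _ ⟨b, hb, rfl⟩⟩)
    Extends.trans
  refine ⟨X, p, hX₀, hp, fun Y q hq e _ x hx hxo hex => ?_⟩
  obtain ⟨q', hq'⟩ := hq.exists_isPathWave
  have hext := hmax ⟨(X ∪ Y, Incidence.prolong p q'), hq'.prolong hp,
    hX₀.trans Set.subset_union_left⟩ ⟨Set.subset_union_left, fun _ => hq'.prolong_eq⟩
  obtain ⟨_, _, _, hxX⟩ := exists_of_contract_eq hp.ho hxo hex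
  exact hxX (hext.1 (Or.inr hx))

end Waves

section Looseness

variable {V : Type u} {E : Type v} {inc inc' : Incidence V E}
variable {A B C D Z : Set E} {o t u v w x y z : V} {X Y : Set V} {p q : E → List E}
  {b c d e r : E} {l : List E}

section Congr

theorem crosses_congr (h : inc' e = inc e) : inc'.Crosses Y e ↔ inc.Crosses Y e := by
  unfold Crosses; rw [h]

theorem inside_congr (h : inc' e = inc e) : inc'.Inside Y e ↔ inc.Inside Y e := by
  unfold Inside; rw [h]

theorem contract_congr (h : inc' e = inc e) : inc'.contract o X e = inc.contract o X e := by
  unfold contract; rw [h]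

theorem innerEnd_congr (h : inc' e = inc e) : inc'.innerEnd o Y e = inc.innerEnd o Y e := by
  by_cases hc : inc.Crosses Y e
  · obtain ⟨x, y, hxy, hx, hy⟩ := hc
    rw [innerEnd_eq hxy hx hy, innerEnd_eq (h.trans hxy) hx hy]
  · have hc' : ¬ inc'.Crosses Y e := fun h' => hc ((crosses_congr h).1 h')
    simp [innerEnd, hc, hc']

theorem cut_congr (h : ∀ e ∈ A, inc' e = inc e) : inc'.cut A Y = inc.cut A Y :=
  Set.ext fun e => and_congr_right fun he => crosses_congr (h e he)

theorem IsFan.congr (hp : inc.IsFan A o X D p) (h : ∀ c ∈ D, inc' c = inc c)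
    (h' : ∀ c ∈ D, ∀ e ∈ p c, inc' e = inc e) : inc'.IsFan A o X D p := by
  refine ⟨fun c hc => ?_, fun c hc e he => ?_, hp.disj, hp.nodup⟩
  · rw [innerEnd_congr (h c hc)]
    exact (hp.walk c hc).congr (h' c hc)
  · exact (hp.mem c hc e he).imp_right (inside_congr (h' c hc e he)).2

theorem IsWave.congr (hp : inc.IsWave A o t X p) (h : ∀ e ∈ A, inc' e = inc e) :
    inc'.IsWave A o t X p := by
  refine ⟨hp.ho, hp.ht, ?_⟩
  rw [cut_congr h]
  exact hp.cov.congr (fun c hc => h c hc.1) fun c hc e he => h e (hp.cov.mem c hc e he).1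

theorem IsPathWave.congr (hp : inc.IsPathWave A o t X p) (h : ∀ e ∈ A, inc' e = inc e) :
    inc'.IsPathWave A o t X p := by
  refine ⟨hp.toIsWave.congr h, ?_⟩
  rw [cut_congr h]
  intro c hc
  rw [innerEnd_congr (h c hc.1)]
  exact (hp.path c hc).congr fun e he => h e (hp.cov.mem c hc e he).1

theorem IsLoose.congr (hL : inc.IsLoose A o t) (h : ∀ e ∈ A, inc' e = inc e) :
    inc'.IsLoose A o t := by
  intro X p hp e he
  rw [h e he]
  exact hL X p (hp.congr fun e he => (h e he).symm) e he

theorem IsInnerEulerian.congr (hE : inc.IsInnerEulerian A o t) (h : ∀ e ∈ A, inc' e = inc e) :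
    inc'.IsInnerEulerian A o t := by
  intro Y
  rw [cut_congr h]
  exact hE Y

end Congr

theorem IsFan.mono (hp : inc.IsFan A o X C p) (hAB : A ⊆ B) (hDC : D ⊆ C) :
    inc.IsFan B o X D p :=
  WalkSystem.mono hp (fun c hc e he => (hp.mem c (hDC hc) e he).imp_left (@hAB e)) hDC

section Loops

theorem cut_sdiff_of_not_crosses (hZ : ∀ e ∈ A, e ∈ Z → ¬ inc.Crosses Y e) :
    inc.cut (A \ Z) Y = inc.cut A Y :=
  Set.ext fun e => ⟨fun h => ⟨h.1.1, h.2⟩, fun h => ⟨⟨h.1, fun hz => hZ e h.1 hz h.2⟩, h.2⟩⟩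

theorem not_crosses_of_eq_diag (h : inc e = s(o, o)) : ¬ inc.Crosses Y e := fun hY =>
  ((crosses_iff h).1 hY).elim (fun h => h.2 h.1) fun h => h.2 h.1

theorem IsLoose.sdiff_loops (hL : inc.IsLoose A o t) (hZ : ∀ e ∈ A, e ∈ Z → inc e = s(o, o)) :
    inc.IsLoose (A \ Z) o t := by
  intro X p hp e he
  refine hL X p ⟨hp.ho, hp.ht, hp.cov.mono Set.sdiff_subset ?_⟩ e he.1
  rw [cut_sdiff_of_not_crosses fun e he hz => not_crosses_of_eq_diag (hZ e he hz)]

theorem IsInnerEulerian.sdiff_loops (hE : inc.IsInnerEulerian A o t)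
    (hZ : ∀ e ∈ A, e ∈ Z → inc e = s(o, o)) : inc.IsInnerEulerian (A \ Z) o t := by
  intro Y
  rw [cut_sdiff_of_not_crosses fun e he hz => not_crosses_of_eq_diag (hZ e he hz)]
  exact hE Y

end Loops

theorem IsInnerEulerian.sdiff_singleton (hE : inc.IsInnerEulerian A o t) (hb : inc b = s(o, t)) :
    inc.IsInnerEulerian (A \ {b}) o t := by
  intro Y ho ht
  rw [cut_sdiff_of_not_crosses]
  · exact hE Y ho ht
  · rintro _ - rfl h
    exact ((crosses_iff hb).1 h).elim (fun h => ho h.1) fun h => ht h.1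

theorem IsLoose.sdiff_singleton (hL : inc.IsLoose A o t) (hE : inc.IsInnerEulerian A o t) (b : E) :
    inc.IsLoose (A \ {b}) o t := fun _ _ hp e he =>
  hL.ne_of_fan (b := b) hE hp.ho hp.ht (hp.cov.mono Set.sdiff_subset subset_rfl)
    (fun _ hc => or_iff_not_imp_left.2 fun hcb => ⟨⟨hc.1, hcb⟩, hc.2⟩) e he.1

theorem IsLoose.innerEnd_eq (hL : inc.IsLoose A o t) (hp : inc.IsWave A o t X p)
    (hc : c ∈ inc.cut A X) : inc.innerEnd o X c = o := by
  obtain ⟨q, hq⟩ := hp.exists_isPathWave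
  have hpath := hq.path c hc
  have hmem := hq.cov.mem c hc
  cases hqc : q c with
  | nil => exact (hqc ▸ hpath).isWalk.eq_of_nil.symm
  | cons e l =>
    rw [hqc] at hpath hmem
    obtain ⟨v, hev, hv, -⟩ := hpath.exists_of_cons
    obtain ⟨heA, heX⟩ := hmem e List.mem_cons_self
    exact absurd hev (hL X q hq.toIsWave e heA v ((inside_iff hev).1 heX).2 hv)

theorem IsLoose.innerEnd_eq_of_fan (hL : inc.IsLoose A o t) (hE : inc.IsInnerEulerian A o t)
    (ho : o ∈ X) (ht : t ∉ X) (hp : inc.IsFan A o X C p) (hC : inc.cut A X ⊆ insert b C)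
    (hc : c ∈ inc.cut A X) : inc.innerEnd o X c = o :=
  have ⟨_, hq⟩ := hE.exists_wave_of_fan ho ht hp hC
  hL.innerEnd_eq hq hc

theorem IsLoose.exists_isPath (hL : inc.IsLoose A o t) (hot : o ≠ t) (hb : b ∈ A)
    (hbx : inc b = s(o, x)) (hx : x ≠ o) : ∃ l, inc.IsPath x l t ∧ ∀ g ∈ l, g ∈ A ∧ o ∉ inc g := by
  set F : Set E := {e | e ∈ A ∧ o ∉ inc e}
  by_contra hcon
  have ht : ¬ inc.Reachable F x t := fun h =>
    have ⟨l, hl, hp⟩ := h.exists_isPath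
    hcon ⟨l, hp, hl⟩
  have ho : ¬ inc.Reachable F x o := by
    rintro ⟨l, hl, hw⟩
    exact hw.mem_of_inside (Y := {o}ᶜ) hx (fun g hg v hv hvo => (hl g hg).2 (hvo ▸ hv)) rfl
  refine hL (insert o {v | inc.Reachable F x v}) (fun _ => [])
    ⟨.inl rfl, fun h => h.elim hot.symm ht, ⟨?_, by simp, by simp, by simp⟩⟩ b hb x
    (.inr (.refl _ _)) hx hbx
  rintro c ⟨hc, u, w, huw, hu, hw⟩
  rw [Incidence.innerEnd_eq huw hu hw]
  rcases hu with rfl | hu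
  · exact .nil _
  · have huo : o ≠ u := fun h => ho (h ▸ hu)
    have hwo : o ≠ w := fun h => hw (.inl h.symm)
    have hcF : c ∈ F := ⟨hc, by simp [huw, huo, hwo]⟩
    exact absurd (.inr (hu.trans (.of_edge hcF huw))) hw

section Preloose

/-- `e` is an edge at `o` that is not a loop. -/
def IsEdgeAt (inc : Incidence V E) (o : V) (e : E) : Prop := ∃ y, inc e = s(o, y) ∧ y ≠ o

/-- The walks `p c` of a fan, prolonged by their indices `c ∈ C`, use all non-loop edges of `A`
at `o`. -/
def CoversEdgesAt (inc : Incidence V E) (A : Set E) (o : V) (C : Set E) (p : E → List E) : Prop :=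
  ∀ e ∈ A, inc.IsEdgeAt o e → ∃ c ∈ C, e ∈ c :: p c

/-- Contracting some wave of paths that uses all edges at `o` leaves a loose inner Eulerian graph.
Unlike looseness, this is inherited by the graph obtained by deleting a suitable link. -/
def IsPreloose (inc : Incidence V E) (A : Set E) (o t : V) : Prop :=
  ∃ X p, inc.IsPathWave A o t X p ∧ inc.CoversEdgesAt A o (inc.cut A X) p ∧
    (inc.contract o X).IsLoose A o t ∧ (inc.contract o X).IsInnerEulerian A o t

theorem IsPreloose.congr (hA : inc.IsPreloose A o t) (h : ∀ e ∈ A, inc' e = inc e) :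
    inc'.IsPreloose A o t := by
  obtain ⟨X, p, hp, hcov, hL, hE⟩ := hA
  have hX : ∀ e ∈ A, inc'.contract o X e = inc.contract o X e := fun e he =>
    contract_congr (h e he)
  refine ⟨X, p, hp.congr h, fun e he => ?_, hL.congr hX, hE.congr hX⟩
  rw [cut_congr h, IsEdgeAt, h e he]
  exact hcov e he

theorem IsLoose.isPreloose (hL : inc.IsLoose A o t) (hE : inc.IsInnerEulerian A o t)
    (hot : o ≠ t) : inc.IsPreloose A o t := by
  have hend : ∀ c, inc.innerEnd o {o} c = o := fun c => innerEnd_mem (X := {o}) rfl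
  refine ⟨{o}, fun _ => [], ⟨⟨rfl, hot.symm, ⟨fun c _ => ?_, by simp, by simp, by simp⟩⟩,
    fun c _ => ?_⟩, ?_, ?_⟩
  · exact (hend c).symm ▸ .nil o
  · exact (hend c).symm ▸ .nil o
  · rintro e he ⟨y, hey, hy⟩
    exact ⟨e, ⟨he, o, y, hey, rfl, hy⟩, List.mem_cons_self⟩
  · rw [contract_singleton]
    exact ⟨hL, hE⟩

theorem IsPathWave.isPreloose (hp : inc.IsPathWave A o t X p)
    (hcov : inc.CoversEdgesAt A o (inc.cut A X) p) (h : (inc.contract o X).IsPreloose A o t) :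
    inc.IsPreloose A o t := by
  obtain ⟨Y, q, hq, hcov', hLE⟩ := h
  rw [contract_contract hq.ho] at hLE
  rw [CoversEdgesAt, cut_contract_of_mem hq.ho] at hcov'
  refine ⟨X ∪ Y, Incidence.prolong p q, hq.prolong hp, fun e he heo => ?_, hLE⟩
  obtain ⟨c, hc, hec⟩ := hcov e he heo
  obtain ⟨x, y, hxy, hx, hy⟩ := hc.2
  obtain ⟨g, hg, hcg⟩ := hcov' c hc.1
    ⟨y, contract_eq_of_mem_of_notMem hx hy hxy, fun h => hy (h ▸ hp.ho)⟩
  rcases List.mem_cons.1 hcg with rfl | hcg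
  · exact ⟨c, hg, by rwa [hq.prolong_eq hc hg]⟩
  · exact ⟨g, hg, .tail _ (hq.mem_prolong_of_mem hp hg hc hcg e hec)⟩

end Preloose

section SplitOff

open Classical in
/-- Replacing the two edges `b = s(o, x)` and `r = s(x, z)` by a single edge from `o` to `z`: the
edge `b` is redirected, and `r` is to be deleted. -/
noncomputable def splitOff (inc : Incidence V E) (b : E) (o z : V) : Incidence V E :=
  Function.update inc b s(o, z)

theorem splitOff_self : inc.splitOff b o z b = s(o, z) := by simp [splitOff]

theorem splitOff_of_ne (h : e ≠ b) : inc.splitOff b o z e = inc e := by simp [splitOff, h]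

theorem crossingParity_congr (h : ∀ e ∈ l, inc' e = inc e) :
    inc'.crossingParity Y l = inc.crossingParity Y l := by
  unfold crossingParity
  rw [List.countP_congr]
  simpa using fun e he => crosses_congr (h e he)

theorem IsInnerEulerian.splitOff (hE : inc.IsInnerEulerian A o t) (hb : b ∈ A) (hr : r ∈ A)
    (hbr : b ≠ r) (hbx : inc b = s(o, x)) (hrx : inc r = s(x, z)) :
    (inc.splitOff b o z).IsInnerEulerian (A \ {r}) o t := by
  intro Y ho ht hfin
  set inc' := inc.splitOff b o z
  set S : List E := (hfin.subset Set.sdiff_subset :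
    (inc'.cut (A \ {r}) Y \ {b}).Finite).toFinset.toList
  have hmemS : ∀ e, e ∈ S ↔ e ∈ inc'.cut (A \ {r}) Y \ {b} := by simp [S]
  have hbS : ∀ e ∈ S, e ≠ b := fun e h => ((hmemS e).1 h).2
  have hrS : ∀ e ∈ S, e ≠ r := fun e h => ((hmemS e).1 h).1.1.2
  have hS : ∀ e ∈ S, inc' e = inc e := fun e he => splitOff_of_ne (hbS e he)
  have hSnd : S.Nodup := Finset.nodup_toList _
  have hpath : inc'.crossingParity Y [b] = inc.crossingParity Y ([b] ++ [r]) :=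
    (IsWalk.single splitOff_self).crossingParity_eq.trans
      ((IsWalk.single hbx).append (.single hrx)).crossingParity_eq.symm
  have hzero : inc.crossingParity Y (S ++ ([b] ++ [r])) = 0 := by
    refine hE.crossingParity_eq_zero ho ht ?_ ?_ fun e he hY => ?_
    · simp only [List.nodup_append, hSnd, List.cons_append, List.nil_append,
        List.mem_cons, List.not_mem_nil, or_false]
      grind
    · intro e he
      simp only [List.mem_append, List.mem_singleton] at he
      obtain he | rfl | rfl := he
      exacts [((hmemS e).1 he).1.1.1, hb, hr]
    · by_cases heb : e = b
      · simp [heb]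
      by_cases her : e = r
      · simp [her]
      exact List.mem_append_left _
        ((hmemS e).2 ⟨⟨⟨he, her⟩, (crosses_congr (splitOff_of_ne heb)).2 hY⟩, heb⟩)
  have hzero' : inc'.crossingParity Y (S ++ [b]) = 0 := by
    rwa [crossingParity_append, hpath, crossingParity_congr hS, ← crossingParity_append]
  have hcut : {e | e ∈ S ++ [b] ∧ inc'.Crosses Y e} = inc'.cut (A \ {r}) Y := by
    ext e
    by_cases heb : e = b
    · subst heb
      simp [cut, hb, hbr]
    · simp [hmemS, heb, cut]
  rw [crossingParity_of_nodup (by simpa [List.nodup_append, hSnd] using hbS), hcut] at hzero'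
  exact (ZMod.natCast_eq_zero_iff_even).1 hzero'

end SplitOff

theorem exists_owner (h : ∀ c ∈ D, ∀ d ∈ D, c ≠ d → ∀ e ∈ p c, e ∉ p d) (e : E) :
    ∃ d, ∀ c ∈ D, c ≠ d → e ∉ p c := by
  by_cases hex : ∃ d ∈ D, e ∈ p d
  · obtain ⟨d, hd, hed⟩ := hex
    exact ⟨d, fun c hc hne hec => h c hc d hd hne e hec hed⟩
  · push Not at hex
    exact ⟨e, fun c hc _ => hex c hc⟩

end Looseness

section DeletableLinks

variable {V : Type u} {E : Type v} {inc : Incidence V E}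
variable {A C D Z : Set E} {o t u v w x y z : V} {X Y : Set V} {p q : E → List E}
  {b c c₀ c₁ e r : E} {g k l m : List E}

section Exchange

open Classical in
theorem IsFan.insert_nil (hp : inc.IsFan A o X C p) (hb : inc.innerEnd o X b = o) :
    inc.IsFan A o X (insert b C) (Function.update p b []) := by
  have hmem : ∀ c ∈ insert b C, c ≠ b → c ∈ C := fun c hc hne => hc.resolve_left hne
  refine ⟨fun c hc => ?_, fun c hc e he => ?_, fun c hc d hd hcd e he => ?_, fun c hc => ?_⟩ <;>
    rcases eq_or_ne c b with rfl | hcb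
  · simpa [hb] using IsWalk.nil o
  · simpa [hcb] using hp.walk c (hmem c hc hcb)
  · simp at he
  · exact hp.mem c (hmem c hc hcb) e (by simpa [hcb] using he)
  · simp at he
  · rcases eq_or_ne d b with rfl | hdb
    · simp
    · simpa [hdb] using
        hp.disj c (hmem c hc hcb) d (hmem d hd hdb) hcd e (by simpa [hcb] using he)
  · simp
  · simpa [hcb] using hp.nodup c (hmem c hc hcb)

-- Otherwise the vertices connected to the inner end of `c` by free edges avoid `r`, so that `c`
-- could be added to the fan in `A \ {r}`, which looseness forbids.
theorem IsLoose.reachable_innerEnd (hL : inc.IsLoose A o t) (hE : inc.IsInnerEulerian A o t)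
    (ho : o ∈ X) (ht : t ∉ X) (hr : r ∈ inc.cut A X) (hc : c ∈ inc.cut A X)
    (hco : inc.innerEnd o X c ≠ o) (hp : inc.IsFan A o X (inc.cut A X \ {r, c}) p) :
    inc.Reachable (freeEdges (inc.insideEdges A X) (inc.cut A X \ {r, c}) p)
      (inc.innerEnd o X r) (inc.innerEnd o X c) := by
  by_contra hno
  have hsub : inc.cut (A \ {r}) X \ {c} ⊆ inc.cut A X \ {r, c} := fun d hd =>
    ⟨⟨hd.1.1.1, hd.1.2⟩, fun h => h.elim hd.1.1.2 hd.2⟩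
  have hsup : inc.cut A X \ {r, c} ⊆ inc.cut (A \ {r}) X \ {c} := fun d hd =>
    ⟨⟨⟨hd.1.1, fun h => hd.2 (.inl h)⟩, hd.1.2⟩, fun h => hd.2 (.inr h)⟩
  have hp' : inc.IsFan (A \ {r}) o X (inc.cut (A \ {r}) X \ {c}) p :=
    WalkSystem.mono hp (fun d hd e he =>
      have he := hp.mem d (hsub hd) e he
      ⟨⟨he.1, fun h => he.2.not_crosses (h ▸ hr.2)⟩, he.2⟩) hsub
  obtain ⟨q, -, hq, -, -⟩ := hE.exists_fan_insert ho ht hc rfl hp' <| by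
    rintro x ⟨l, hl, hw⟩ ⟨_, rfl, -, hxr⟩
    have hx : x ∈ X := hw.mem_of_inside (innerEnd_mem ho) fun e he => (hl e he).1.2
    obtain ⟨y, hry, -, hy⟩ := hr.2.exists_innerEnd (o := o)
    rw [hry, Sym2.mem_iff] at hxr
    obtain rfl | rfl := hxr
    · refine (hno (Reachable.symm ⟨l, fun e he => ?_, hw⟩)).elim
      exact ⟨⟨(hl e he).1.1.1, (hl e he).1.2⟩, fun d hd => (hl e he).2 d (hsup hd)⟩
    · exact absurd hx hy
  refine hco (hL.innerEnd_eq_of_fan (b := r) hE ho ht (hq.mono Set.sdiff_subset subset_rfl) ?_ hc)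
  intro d hd
  by_cases hdr : d = r
  · exact .inl hdr
  by_cases hdc : d = c
  · exact .inr (.inl hdc)
  · exact .inr (.inr (hsup ⟨hd, by simp [hdr, hdc]⟩))

theorem IsLoose.not_isBarrier (hL : inc.IsLoose A o t) (hE : inc.IsInnerEulerian A o t)
    (ho : o ∈ X) (ht : t ∉ X) (hr : r ∈ inc.cut A X)
    (hp : inc.IsFan A o X (inc.cut A X \ {r, c₀}) p) (hc₀ : c₀ ∈ inc.cut A X \ {r, c₁})
    (hc₁ : c₁ ∈ inc.cut A X \ {r, c₀}) (hc₁o : inc.innerEnd o X c₁ ≠ o)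
    (hY : inc.innerEnd o X c₀ ∈ Y) :
    ¬ inc.IsBarrier (inc.insideEdges A X) o ((inc.cut A X \ {r, c₁}) \ {c₀}) p Y := by
  intro hbar
  have hsub : (inc.cut A X \ {r, c₁}) \ {c₀} ⊆ inc.cut A X \ {r, c₀} := fun d hd =>
    ⟨hd.1.1, fun h => h.elim (fun h => hd.1.2 (.inl h)) hd.2⟩
  have hrY : inc.innerEnd o X r ∈ Y := by
    obtain ⟨l, hl, hw⟩ := (hL.reachable_innerEnd hE ho ht hr hc₀.1
      (fun h => hbar.notmem (h ▸ hY)) hp).symm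
    refine (hw.inside_of_not_crosses hY fun e he hcr => ?_).1
    obtain ⟨d, hd, hed⟩ := hbar.used e (hl e he).1 hcr
    exact (hl e he).2 d (hsub hd) hed
  have hc₁Y : inc.innerEnd o X c₁ ∉ Y := fun hin => by
    refine hbar.notmem ((hp.walk c₁ hc₁).reverse.inside_of_not_crosses hin fun e he hcr => ?_).1
    rw [List.mem_reverse] at he
    obtain ⟨d, hd, hed⟩ := hbar.used e (hp.mem c₁ hc₁ e he) hcr
    exact hp.disj c₁ hc₁ d (hsub hd) (fun h => hd.1.2 (.inr h.symm)) e he hed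
  have hnot : ∀ d ∈ inc.cut A X, d ∈ inc.cut A (X \ Y) → inc.innerEnd o X d ∉ Y := by
    intro d hd hd' hdY
    rw [innerEnd_eq_innerEnd_of_subset Set.sdiff_subset hd'.2 hd.2] at hdY
    have := innerEnd_mem (inc := inc) (e := d) (show o ∈ X \ Y from ⟨ho, hbar.notmem⟩)
    exact this.2 hdY
  obtain ⟨q, hq⟩ := hbar.exists_fan_sdiff (hp.mono subset_rfl hsub)
  have hcut : inc.cut A (X \ Y) ⊆ insert c₁ {d | d ∈ inc.cut A (X \ Y) ∧
      (d ∈ inc.cut A X → d ∈ (inc.cut A X \ {r, c₁}) \ {c₀})} := by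
    refine fun d hd => or_iff_not_imp_left.2 fun hd₁ => ⟨hd, fun hdX => ⟨⟨hdX, ?_⟩, ?_⟩⟩
    · rintro (rfl | h)
      exacts [hnot d hdX hd hrY, hd₁ h]
    · rintro rfl
      exact hnot d hdX hd hY
  obtain ⟨y, hy, hyX, hyX'⟩ := hc₁.1.2.exists_innerEnd (o := o)
  have hc₁XY : c₁ ∈ inc.cut A (X \ Y) := ⟨hc₁.1.1, _, y, hy, ⟨hyX, hc₁Y⟩, fun h => hyX' h.1⟩
  refine hc₁o ?_
  rw [innerEnd_eq_innerEnd_of_subset Set.sdiff_subset hc₁XY.2 hc₁.1.2]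
  exact hL.innerEnd_eq_of_fan hE ⟨ho, hbar.notmem⟩ (fun h => ht h.1) hq hcut hc₁XY

theorem IsLoose.exists_fan_exchange (hL : inc.IsLoose A o t) (hE : inc.IsInnerEulerian A o t)
    (ho : o ∈ X) (ht : t ∉ X) (hr : r ∈ inc.cut A X)
    (hp : inc.IsFan A o X (inc.cut A X \ {r, c₀}) p) (hc₁ : c₁ ∈ inc.cut A X) (hc₁r : c₁ ≠ r)
    (hc₁o : inc.innerEnd o X c₁ ≠ o) : ∃ q, inc.IsFan A o X (inc.cut A X \ {r, c₁}) q := by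
  by_cases hc₀ : c₀ ∈ inc.cut A X \ {r, c₁}
  swap
  · refine ⟨p, hp.mono subset_rfl fun d hd => ⟨hd.1, ?_⟩⟩
    rintro (h | rfl)
    exacts [hd.2 (.inl h), hc₀ hd]
  have hc₁' : c₁ ∈ inc.cut A X \ {r, c₀} := by
    refine ⟨hc₁, ?_⟩
    rintro (h | rfl)
    exacts [hc₁r h, hc₀.2 (.inr rfl)]
  have hp' : inc.IsFan A o X ((inc.cut A X \ {r, c₁}) \ {c₀}) p :=
    hp.mono subset_rfl fun d hd => ⟨hd.1.1, fun h => h.elim (fun h => hd.1.2 (.inl h)) hd.2⟩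
  rcases hp'.exists_augmented_or_barrier (inc.innerEnd o X c₀) with
    ⟨p', hp', hreach⟩ | ⟨Y, hY, hbar⟩
  · obtain ⟨q, hq, -⟩ := hp'.exists_insert (fun h => h.2 rfl) hreach
    rw [Set.insert_sdiff_self_of_mem hc₀] at hq
    exact ⟨q, hq⟩
  · exact absurd hbar (hL.not_isBarrier hE ho ht hr hp hc₀ hc₁' hc₁o hY)

end Exchange

theorem mem_cut_splitOff (heb : e ≠ b) (her : e ≠ r) :
    e ∈ (inc.splitOff b o z).cut (A \ {r}) X ↔ e ∈ inc.cut A X := by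
  simp [cut, her, crosses_congr (splitOff_of_ne heb)]

theorem IsFan.of_splitOff (hp : (inc.splitOff b o z).IsFan (A \ {r}) o X C p)
    (hD : ∀ c ∈ D, c ∈ C ∧ c ≠ b ∧ b ∉ p c) : inc.IsFan A o X D p :=
  (hp.mono Set.sdiff_subset fun c hc => (hD c hc).1).congr
    (fun c hc => (splitOff_of_ne (hD c hc).2.1).symm)
    fun c hc _ he => (splitOff_of_ne <| by rintro rfl; exact (hD c hc).2.2 he).symm

theorem IsLoose.notMem_of_wave_splitOff (hL : inc.IsLoose A o t) (hE : inc.IsInnerEulerian A o t)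
    (hw : (inc.splitOff b o z).IsWave (A \ {r}) o t X p) (hb : b ∈ A) (hbx : inc b = s(o, x))
    (hx : x ≠ o) (hrx : inc r = s(x, z)) : x ∉ X := by
  intro hxX
  obtain ⟨d, hd⟩ : ∃ d, ∀ c ∈ inc.cut A X \ {d}, c ≠ b → c ≠ r ∧
      (c ∈ (inc.splitOff b o z).cut (A \ {r}) X → b ∉ p c) := by
    by_cases hz : z ∈ X
    · obtain ⟨d, hd⟩ := exists_owner hw.cov.disj b
      refine ⟨d, fun c hc _ => ⟨?_, fun hc' => hd c hc' hc.2⟩⟩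
      rintro rfl
      exact Inside.not_crosses ((inside_iff hrx).2 ⟨hxX, hz⟩) hc.1.2
    · refine ⟨r, fun c hc _ => ⟨hc.2, fun hc' hbc => hz ?_⟩⟩
      exact (hw.cov.mem c hc' b hbc).2 z (by simp [splitOff_self])
  refine hL.ne_of_fan hE hw.ho hw.ht (hw.cov.of_splitOff (D := inc.cut A X \ {d}) fun c hc => ?_)
    (fun c hc => or_iff_not_imp_left.2 fun hcd => ⟨hc, hcd⟩) b hb x hxX hx hbx
  have hcb : c ≠ b := by
    rintro rfl
    exact Inside.not_crosses ((inside_iff hbx).2 ⟨hw.ho, hxX⟩) hc.1.2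
  obtain ⟨hcr, hbc⟩ := hd c hc hcb
  have hc' := (mem_cut_splitOff (o := o) (z := z) hcb hcr).2 hc.1
  exact ⟨hc', hcb, hbc hc'⟩

theorem IsLoose.mem_of_wave_splitOff (hL : inc.IsLoose A o t)
    (hw : (inc.splitOff b o z).IsWave (A \ {r}) o t X p) (hbx : inc b = s(o, x))
    (hrx : inc r = s(x, z)) (hx : x ∉ X) {e₀ : E} {x₀ : V} (he₀ : e₀ ∈ A) (hx₀ : x₀ ∈ X)
    (hx₀o : x₀ ≠ o) (he₀x : inc.splitOff b o z e₀ = s(o, x₀)) : z ∈ X := by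
  by_contra hz
  have hp : inc.IsFan A o X (inc.cut A X \ {b}) p := hw.cov.of_splitOff fun c hc => by
    have hcr : c ≠ r := by
      rintro rfl
      exact ((crosses_iff hrx).1 hc.1.2).elim (fun h => hx h.1) fun h => hz h.1
    have hc' := (mem_cut_splitOff (o := o) (z := z) hc.2 hcr).2 hc.1
    exact ⟨hc', hc.2, fun hbc => hz ((hw.cov.mem c hc' b hbc).2 z (by simp [splitOff_self]))⟩
  have he₀b : e₀ ≠ b := by
    rintro rfl
    rw [splitOff_self] at he₀x
    exact hz (Sym2.congr_right.1 he₀x ▸ hx₀)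
  refine hL X _ ⟨hw.ho, hw.ht, (hp.insert_nil (Incidence.innerEnd_eq hbx hw.ho hx)).mono subset_rfl
    fun c hc => ?_⟩ e₀ he₀ x₀ hx₀ hx₀o (by rwa [splitOff_of_ne he₀b] at he₀x)
  exact or_iff_not_imp_left.2 fun hcb => ⟨hc, hcb⟩

theorem exists_fan_of_wave_splitOff (hw : (inc.splitOff b o z).IsWave (A \ {r}) o t X p)
    (hbx : inc b = s(o, x)) (hx : x ∉ X) :
    ∃ c₀ q, inc.IsFan A o X (inc.cut A X \ {r, c₀}) q := by
  obtain ⟨c₀, hc₀⟩ := exists_owner hw.cov.disj b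
  have hp : inc.IsFan A o X ((inc.cut A X \ {r, c₀}) \ {b}) p := hw.cov.of_splitOff fun c hc => by
    have hc' := (mem_cut_splitOff (o := o) (z := z) hc.2 fun h => hc.1.2 (.inl h)).2 hc.1.1
    exact ⟨hc', hc.2, hc₀ c hc' fun h => hc.1.2 (.inr h)⟩
  exact ⟨c₀, _, (hp.insert_nil (Incidence.innerEnd_eq hbx hw.ho hx)).mono subset_rfl fun c hc =>
    or_iff_not_imp_left.2 fun hcb => ⟨hc, hcb⟩⟩

/-- The edge `e`, which leaves `o`, followed by a walk to `t` that avoids `o`. -/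
def IsLink (inc : Incidence V E) (o t : V) (e : E) (l : List E) : Prop :=
  ∃ y, inc e = s(o, y) ∧ y ≠ o ∧ inc.IsWalk y l t ∧ ∀ g ∈ l, o ∉ inc g

/-- Some link that starts with `e` can be deleted from `A` without destroying prelooseness. -/
def HasDeletableLink (inc : Incidence V E) (A : Set E) (o t : V) (e : E) : Prop :=
  ∃ l, inc.IsLink o t e l ∧ (∀ g ∈ e :: l, g ∈ A) ∧ inc.IsPreloose (A \ {g | g ∈ e :: l}) o t

theorem Inside.not_inside_compl (h : inc.Inside X e) : ¬ inc.Inside Xᶜ e := fun h' => by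
  obtain ⟨u, v, he⟩ := inc.exists_ends e
  exact h' u (by simp [he]) (h u (by simp [he]))

theorem IsPathWave.sdiff (hp : inc.IsPathWave A o t X p) (hZ : ∀ e ∈ Z, inc.Inside Xᶜ e) :
    inc.IsPathWave (A \ Z) o t X p := by
  have hcut : inc.cut (A \ Z) X = inc.cut A X := by
    refine cut_sdiff_of_not_crosses fun e _ he => ?_
    rintro ⟨x, y, hxy, hx, -⟩
    exact hZ e he x (by simp [hxy]) hx
  refine ⟨⟨hp.ho, hp.ht, ?_⟩, hcut ▸ hp.path⟩
  rw [hcut]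
  refine WalkSystem.mono hp.cov (fun c hc e he => ?_) fun _ => id
  have heX := hp.cov.mem c hc e he
  exact ⟨⟨heX.1, fun h => heX.2.not_inside_compl (hZ e h)⟩, heX.2⟩

theorem HasDeletableLink.of_contract (hq : inc.IsPathWave (A \ {e | e ∈ m ++ [c]}) o t X q)
    (hcov : inc.CoversEdgesAt (A \ {e | e ∈ m ++ [c]}) o
      (inc.cut (A \ {e | e ∈ m ++ [c]}) X) q)
    (hk : inc.IsLink o z b k) (hbk : b :: k = m ++ [c]) (hmA : ∀ e ∈ m, e ∈ A)
    (hc : inc c = s(x, z)) (hx : x ∈ X) (hz : z ∉ X)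
    (h : (inc.contract o X).HasDeletableLink (A \ {e | e ∈ m}) o t c) :
    inc.HasDeletableLink A o t b := by
  obtain ⟨l, ⟨z', hcz', -, hl, hlo⟩, hlA, hpre⟩ := h
  obtain ⟨y, hby, hyo, hwk, hko⟩ := hk
  obtain rfl : z = z' := by
    rwa [contract_eq_of_mem_of_notMem hx hz hc, Sym2.congr_right] at hcz'
  have hlX : ∀ g ∈ l, inc.Inside Xᶜ g := fun g hg => (notMem_contract_iff hq.ho).1 (hlo g hg)
  have hmem : ∀ e, e ∈ b :: (k ++ l) ↔ e ∈ m ∨ e ∈ c :: l := fun e => by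
    rw [← List.cons_append, hbk]
    simp
  refine ⟨k ++ l, ⟨y, hby, hyo, hwk.append (hl.congr fun e he =>
    (contract_eq_of_inside_compl (hlX e he)).symm), ?_⟩, fun e he => ?_, ?_⟩
  · rintro g hg
    rcases List.mem_append.1 hg with hg | hg
    exacts [hko g hg, fun ho => hlX g hg o ho hq.ho]
  · exact ((hmem e).1 he).elim (hmA e) fun he => (hlA e he).1
  · have hset : A \ {e | e ∈ b :: (k ++ l)} = (A \ {e | e ∈ m ++ [c]}) \ {e | e ∈ l} := by
      ext e
      simp only [Set.mem_sdiff, Set.mem_ofPred_eq, hmem, List.mem_append, List.mem_cons,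
        List.not_mem_nil]
      tauto
    have hset' : (A \ {e | e ∈ m}) \ {e | e ∈ c :: l} =
        (A \ {e | e ∈ m ++ [c]}) \ {e | e ∈ l} := by
      ext e
      simp only [Set.mem_sdiff, Set.mem_ofPred_eq, List.mem_append, List.mem_cons,
        List.not_mem_nil]
      tauto
    rw [hset'] at hpre
    rw [hset]
    have hq' := hq.sdiff (Z := {e | e ∈ l}) hlX
    refine hq'.isPreloose (fun e he heo => ?_) hpre
    obtain ⟨d, hd, hed⟩ := hcov e he.1 heo
    refine ⟨d, ⟨⟨hd.1, fun hdl => ?_⟩, hd.2⟩, hed⟩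
    obtain ⟨u, v, huv, hu, -⟩ := hd.2
    exact hlX d hdl u (by simp [huv]) hu

theorem HasDeletableLink.of_splitOff (hbr : b ≠ r) (hr : r ∈ A) (hbx : inc b = s(o, x))
    (hxo : x ≠ o) (hrx : inc r = s(x, z)) (hro : o ∉ inc r)
    (h : (inc.splitOff b o z).HasDeletableLink (A \ {r}) o t b) :
    inc.HasDeletableLink A o t b := by
  obtain ⟨l, ⟨z', hbz', -, hl, hlo⟩, hlA, hpre⟩ := h
  obtain rfl : z = z' := by rwa [splitOff_self, Sym2.congr_right] at hbz'
  have hlb : ∀ g ∈ l, g ≠ b := by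
    rintro g hg rfl
    exact hlo g hg (by simp [splitOff_self])
  refine ⟨r :: l, ⟨x, hbx, hxo, .cons hrx (hl.congr fun e he =>
    (splitOff_of_ne (hlb e he)).symm), ?_⟩, ?_, ?_⟩
  · rintro g (_ | ⟨_, hg⟩)
    · exact hro
    · rw [← splitOff_of_ne (inc := inc) (o := o) (z := z) (hlb g hg)]
      exact hlo g hg
  · intro g hg
    rw [List.mem_cons, List.mem_cons] at hg
    rcases hg with rfl | rfl | hg
    exacts [(hlA _ (by simp)).1, hr, (hlA g (by simp [hg])).1]
  · have hset : A \ {e | e ∈ b :: r :: l} = (A \ {r}) \ {e | e ∈ b :: l} := by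
      ext e
      simp only [Set.mem_sdiff, Set.mem_ofPred_eq, List.mem_cons, Set.mem_singleton_iff]
      tauto
    rw [hset]
    exact hpre.congr fun e he => (splitOff_of_ne fun h => he.2 (by simp [h])).symm

/-- The situation in which a deletable link is built: in a loose inner Eulerian subgraph, the edge
`b` joins `o` to `x`, and `l` is a path from there to `t` that avoids `o`. -/
structure IsApproach (inc : Incidence V E) (A : Set E) (o t : V) (b : E) (x : V) (l : List E) :
    Prop where
  loose : inc.IsLoose A o t
  eulerian : inc.IsInnerEulerian A o t
  mem : b ∈ A
  eq : inc b = s(o, x)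
  ne : x ≠ o
  path : inc.IsPath x l t
  avoid : ∀ g ∈ l, g ∈ A ∧ o ∉ inc g

theorem IsApproach.hasDeletableLink_of_nil (h : inc.IsApproach A o t b x []) (hot : o ≠ t) :
    inc.HasDeletableLink A o t b := by
  obtain rfl := h.path.isWalk.eq_of_nil
  refine ⟨[], ⟨x, h.eq, h.ne, .nil x, by simp⟩, by simpa using h.mem, ?_⟩
  have hset : {g | g ∈ [b]} = ({b} : Set E) := by ext; simp
  rw [hset]
  exact (h.loose.sdiff_singleton h.eulerian b).isPreloose (h.eulerian.sdiff_singleton h.eq) hot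

theorem IsApproach.ne_of_notMem (h : inc.IsApproach A o t b x l) (he : o ∉ inc e) : e ≠ b := by
  rintro rfl
  exact he (by simp [h.eq])

theorem IsApproach.isPath_tail (h : inc.IsApproach A o t b x (r :: l)) (hrx : inc r = s(x, z)) :
    inc.IsPath z l t := by
  obtain ⟨z', hz', -, -, hl, -⟩ := h.path.exists_of_cons
  obtain rfl : z = z' := by rwa [hrx, Sym2.congr_right] at hz'
  exact hl

theorem IsApproach.ne_of_eq (h : inc.IsApproach A o t b x (r :: l)) (hrx : inc r = s(x, z)) :
    z ≠ o := by
  rintro rfl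
  exact (h.avoid r (by simp)).2 (by simp [hrx])

theorem IsApproach.isInnerEulerian_splitOff (h : inc.IsApproach A o t b x (r :: l))
    (hrx : inc r = s(x, z)) : (inc.splitOff b o z).IsInnerEulerian (A \ {r}) o t :=
  h.eulerian.splitOff h.mem (h.avoid r (by simp)).1
    (h.ne_of_notMem (h.avoid r (by simp)).2).symm h.eq hrx

theorem IsApproach.splitOff (h : inc.IsApproach A o t b x (r :: l)) (hrx : inc r = s(x, z))
    (hL : (inc.splitOff b o z).IsLoose (A \ {r}) o t) :
    (inc.splitOff b o z).IsApproach (A \ {r}) o t b z l where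
  loose := hL
  eulerian := h.isInnerEulerian_splitOff hrx
  mem := ⟨h.mem, (h.ne_of_notMem (h.avoid r (by simp)).2).symm⟩
  eq := splitOff_self
  ne := h.ne_of_eq hrx
  path := (h.isPath_tail hrx).congr fun g hg =>
    splitOff_of_ne (h.ne_of_notMem (h.avoid g (by simp [hg])).2)
  avoid := fun g hg => by
    have hg' := h.avoid g (by simp [hg])
    refine ⟨⟨hg'.1, ?_⟩, by rw [splitOff_of_ne (h.ne_of_notMem hg'.2)]; exact hg'.2⟩
    rintro rfl
    exact (List.nodup_cons.1 h.path.nodup).1 hg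

theorem IsApproach.contract_splitOff (h : inc.IsApproach A o t b x (r :: l)) (hrx : inc r = s(x, z))
    (hL : ((inc.splitOff b o z).contract o X).IsLoose (A \ {r}) o t) (ho : o ∈ X) (hz : z ∈ X)
    (hg : ∀ e ∈ g, inc.Inside X e ∧ o ∉ inc e) (hc : c ∈ l) (hcv : inc c = s(w, v)) (hw : w ∈ X)
    (hv : v ∉ X) (hk : inc.IsPath v k t) (hkl : k ⊆ l) (hkX : ∀ e ∈ k, inc.Inside Xᶜ e) :
    (inc.contract o X).IsApproach (A \ {e | e ∈ b :: r :: g}) o t c v k := by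
  have hne : ∀ e ∈ l, e ∈ A ∧ e ≠ b ∧ e ≠ r := fun e he => by
    have he' := h.avoid e (by simp [he])
    refine ⟨he'.1, h.ne_of_notMem he'.2, ?_⟩
    rintro rfl
    exact (List.nodup_cons.1 h.path.nodup).1 he
  have hset : (A \ {r}) \ {e | e ∈ b :: g} = A \ {e | e ∈ b :: r :: g} := by
    ext e
    simp only [Set.mem_sdiff, Set.mem_ofPred_eq, List.mem_cons, Set.mem_singleton_iff]
    tauto
  have hloops : ∀ e ∈ A \ {r}, e ∈ {e | e ∈ b :: g} →
      (inc.splitOff b o z).contract o X e = s(o, o) := by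
    intro e _ he
    refine contract_eq_of_inside ?_
    rcases List.mem_cons.1 he with rfl | he
    · exact (inside_iff splitOff_self).2 ⟨ho, hz⟩
    · exact (inside_congr (splitOff_of_ne (h.ne_of_notMem (hg e he).2))).2 (hg e he).1
  have hcongr : ∀ e ∈ A \ {e | e ∈ b :: r :: g},
      inc.contract o X e = (inc.splitOff b o z).contract o X e := fun e he =>
    (contract_congr (splitOff_of_ne fun h => he.2 (by simp [h]))).symm
  refine ⟨?_, ?_, ⟨(hne c hc).1, ?_⟩, contract_eq_of_mem_of_notMem hw hv hcv, ?_,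
    hk.congr fun e he => contract_eq_of_inside_compl (hkX e he), fun e he =>
      ⟨⟨(hne e (hkl he)).1, ?_⟩, (notMem_contract_iff ho).2 (hkX e he)⟩⟩
  · exact (hset ▸ hL.sdiff_loops hloops).congr hcongr
  · exact (hset ▸ ((h.isInnerEulerian_splitOff hrx).contract X).sdiff_loops hloops).congr hcongr
  · simp only [Set.mem_ofPred_eq, List.mem_cons, (hne c hc).2, false_or]
    exact fun hcg => (hg c hcg).1.not_crosses ⟨w, v, hcv, hw, hv⟩
  · rintro rfl
    exact hv ho
  · simp only [Set.mem_ofPred_eq, List.mem_cons, (hne e (hkl he)).2, false_or]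
    exact fun heg => (hg e heg).1.not_inside_compl (hkX e he)

theorem IsApproach.exists_fan_of_not_isLoose (h : inc.IsApproach A o t b x (r :: l))
    (hrx : inc r = s(x, z)) (hL : ¬ (inc.splitOff b o z).IsLoose (A \ {r}) o t) :
    ∃ X, o ∈ X ∧ t ∉ X ∧ x ∉ X ∧ z ∈ X ∧
      ((inc.splitOff b o z).contract o X).IsLoose (A \ {r}) o t ∧
      ∃ c₀ q, inc.IsFan A o X (inc.cut A X \ {r, c₀}) q := by
  simp only [IsLoose, not_forall, not_not] at hL
  obtain ⟨X₀, p₀, hp₀, e₀, he₀, x₀, hx₀, hx₀o, he₀x⟩ := hL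
  obtain ⟨p₁, hp₁⟩ := hp₀.exists_isPathWave
  obtain ⟨X, p, hX, hp, hL⟩ := hp₁.exists_isLoose_contract
  have hx := h.loose.notMem_of_wave_splitOff h.eulerian hp.toIsWave h.mem h.eq h.ne hrx
  exact ⟨X, hp.ho, hp.ht, hx,
    h.loose.mem_of_wave_splitOff hp.toIsWave h.eq hrx hx he₀.1 (hX hx₀) hx₀o he₀x, hL,
    exists_fan_of_wave_splitOff hp.toIsWave h.eq hx⟩

theorem IsLoose.exists_isPath_fan (hL : inc.IsLoose A o t) (hE : inc.IsInnerEulerian A o t)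
    (ho : o ∈ X) (ht : t ∉ X) (hr : r ∈ inc.cut A X) (hro : inc.innerEnd o X r ≠ o)
    (hc : c ∈ inc.cut A X) (hco : inc.innerEnd o X c ≠ o)
    (hp : inc.IsFan A o X (inc.cut A X \ {r, c}) p) :
    ∃ q, inc.IsFan A o X (inc.cut A X \ {r, c}) q ∧
      (∀ d ∈ inc.cut A X \ {r, c}, inc.IsPath o (q d) (inc.innerEnd o X d)) ∧
      ∃ g, inc.IsWalk (inc.innerEnd o X r) g (inc.innerEnd o X c) ∧ ∀ e ∈ g, o ∉ inc e ∧
        e ∈ freeEdges (inc.insideEdges A X) (inc.cut A X \ {r, c}) q := by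
  obtain ⟨q, hq, hpath, -⟩ := exists_paths_of_walks hp.walk hp.mem hp.disj
  obtain ⟨g, hg, hgw⟩ := hL.reachable_innerEnd hE ho ht hr hc hco hq
  have hgo : ∀ e ∈ g, inc.Inside {o}ᶜ e := by
    refine (hgw.inside_of_not_crosses hro fun e he => ?_).2
    rintro ⟨u, o', heu, hu, ho'⟩
    obtain rfl : o' = o := by simpa using ho'
    have hcut : inc.cut A X ⊆ insert r (insert c (inc.cut A X \ {r, c})) := fun d hd => by
      by_cases d = r <;> by_cases d = c <;> simp_all
    obtain ⟨d, hd, hed⟩ := hL.exists_mem_of_fan hE ho ht hq hcut (hg e he).1.1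
      ((hg e he).1.2 u (by simp [heu])) hu (by rw [heu, Sym2.eq_swap])
    exact (hg e he).2 d hd hed
  exact ⟨q, hq, hpath, g, hgw, fun e he => ⟨fun heo => hgo e he o heo rfl, hg e he⟩⟩

theorem IsFan.isPathWave_sdiff (hq : inc.IsFan A o X C q) (ho : o ∈ X) (ht : t ∉ X)
    (hpath : ∀ d ∈ C, inc.IsPath o (q d) (inc.innerEnd o X d)) (hC : inc.cut (A \ Z) X ⊆ C)
    (hZ : ∀ d ∈ C, ∀ e ∈ q d, e ∉ Z) : inc.IsPathWave (A \ Z) o t X q :=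
  ⟨⟨ho, ht, WalkSystem.mono hq (fun d hd e he =>
    ⟨⟨(hq.mem d (hC hd) e he).1, hZ d (hC hd) e he⟩, (hq.mem d (hC hd) e he).2⟩) hC⟩,
    fun d hd => hpath d (hC hd)⟩

theorem IsLoose.coversEdgesAt_sdiff (hL : inc.IsLoose A o t) (hE : inc.IsInnerEulerian A o t)
    (ho : o ∈ X) (ht : t ∉ X) (hq : inc.IsFan A o X C q)
    (hC : inc.cut A X ⊆ insert r (insert c C))
    (hZ : ∀ d ∈ C, q d ≠ [] → d ∈ inc.cut (A \ Z) X) :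
    inc.CoversEdgesAt (A \ Z) o (inc.cut (A \ Z) X) q := by
  rintro e he ⟨y, hey, hyo⟩
  by_cases hy : y ∈ X
  · obtain ⟨d, hd, hed⟩ := hL.exists_mem_of_fan hE ho ht hq hC he.1 hy hyo hey
    exact ⟨d, hZ d hd (List.ne_nil_of_mem hed), List.mem_cons_of_mem _ hed⟩
  · exact ⟨e, ⟨he, o, y, hey, ho, hy⟩, List.mem_cons_self⟩

theorem IsLoose.hasDeletableLink_of_fan (hL : inc.IsLoose A o t) (hE : inc.IsInnerEulerian A o t)
    (ho : o ∈ X) (ht : t ∉ X) (hb : b ∈ A) (hbx : inc b = s(o, x)) (hx : x ∉ X) (hr : r ∈ A)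
    (hrx : inc r = s(x, z)) (hro : o ∉ inc r) (hz : z ∈ X) (hc : c ∈ A) (hcv : inc c = s(w, v))
    (hco : o ∉ inc c) (hw : w ∈ X) (hv : v ∉ X) (hq : inc.IsFan A o X (inc.cut A X \ {r, c}) q)
    (hpath : ∀ d ∈ inc.cut A X \ {r, c}, inc.IsPath o (q d) (inc.innerEnd o X d))
    (hgw : inc.IsWalk z g w) (hg : ∀ e ∈ g, o ∉ inc e ∧
      e ∈ freeEdges (inc.insideEdges A X) (inc.cut A X \ {r, c}) q)
    (h : (inc.contract o X).HasDeletableLink (A \ {e | e ∈ b :: r :: g}) o t c) :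
    inc.HasDeletableLink A o t b := by
  have hcut : inc.cut A X ⊆ insert r (insert c (inc.cut A X \ {r, c})) := fun d hd => by
    by_cases d = r <;> by_cases d = c <;> simp_all
  have hbX : inc.Crosses X b := ⟨o, x, hbx, ho, hx⟩
  have hrX : inc.Crosses X r := ⟨z, x, by rw [hrx, Sym2.eq_swap], hz, hx⟩
  have hcX : inc.Crosses X c := ⟨w, v, hcv, hw, hv⟩
  refine .of_contract (m := b :: r :: g) (k := r :: (g ++ [c])) (q := q) ?_ ?_
    ⟨x, hbx, fun h => hx (h ▸ ho), .cons hrx (hgw.append (.single hcv)), fun e he => ?_⟩ (by simp)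
    (fun e he => ?_) hcv hw hv h
  · refine hq.isPathWave_sdiff ho ht hpath (fun d hd => ⟨⟨hd.1.1, hd.2⟩, ?_⟩) fun d hd e he => ?_
    · rintro (rfl | rfl) <;> exact hd.1.2 (by simp)
    · have heX := (hq.mem d hd e he).2
      simp only [Set.mem_ofPred_eq, List.mem_append, List.mem_cons, List.not_mem_nil, or_false]
      rintro ((rfl | rfl | heg) | rfl)
      exacts [heX.not_crosses hbX, heX.not_crosses hrX, (hg e heg).2.2 d hd he,
        heX.not_crosses hcX]
  · refine hL.coversEdgesAt_sdiff hE ho ht hq hcut fun d hd hne => ⟨⟨hd.1.1, ?_⟩, hd.1.2⟩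
    simp only [Set.mem_ofPred_eq, List.mem_append, List.mem_cons, List.not_mem_nil, or_false]
    rintro ((rfl | rfl | hdg) | rfl)
    · have hnil := hpath d hd
      rw [Incidence.innerEnd_eq hbx ho hx] at hnil
      exact hne hnil.eq_nil
    exacts [hd.2 (.inl rfl), (hg d hdg).2.1.2.not_crosses hd.1.2, hd.2 (.inr rfl)]
  · rw [List.mem_cons, List.mem_append, List.mem_singleton] at he
    rcases he with rfl | he | rfl
    exacts [hro, (hg e he).1, hco]
  · rw [List.mem_cons, List.mem_cons] at he
    rcases he with rfl | rfl | he
    exacts [hb, hr, (hg e he).2.1.1]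

-- The link leaves `X` for the last time where `l` does; up to there it runs inside `X`, in the room
-- that the exchanged fan leaves free.
theorem IsApproach.hasDeletableLink_of_not_isLoose (h : inc.IsApproach A o t b x (r :: l))
    (hrx : inc r = s(x, z)) (hL : ¬ (inc.splitOff b o z).IsLoose (A \ {r}) o t)
    (ih : ∀ (inc : Incidence V E) (A : Set E) (b : E) (x : V) (k : List E),
      k.length < (r :: l).length → inc.IsApproach A o t b x k → inc.HasDeletableLink A o t b) :
    inc.HasDeletableLink A o t b := by
  obtain ⟨X, ho, ht, hx, hz, hLX, c₀, p, hp⟩ := h.exists_fan_of_not_isLoose hrx hL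
  have hpath := h.isPath_tail hrx
  obtain ⟨a, c, k, w, v, hl, ha, hcv, hw, hv, -, hkX⟩ := hpath.isWalk.last_exit hz ht
  obtain ⟨hrA, hro⟩ := h.avoid r (by simp)
  have hri : inc.innerEnd o X r = z := innerEnd_eq (by rw [hrx, Sym2.eq_swap]) hz hx
  have hrX : r ∈ inc.cut A X := ⟨hrA, z, x, by rw [hrx, Sym2.eq_swap], hz, hx⟩
  have hcl : c ∈ l := by simp [hl]
  obtain ⟨hcA, hco⟩ := h.avoid c (by simp [hcl])
  have hci : inc.innerEnd o X c = w := innerEnd_eq hcv hw hv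
  have hcX : c ∈ inc.cut A X := ⟨hcA, w, v, hcv, hw, hv⟩
  have hwo : w ≠ o := fun h => hco (by simp [hcv, h])
  have hcr : c ≠ r := fun h' => (List.nodup_cons.1 h.path.nodup).1 (h' ▸ hcl)
  obtain ⟨p', hp'⟩ := h.loose.exists_fan_exchange h.eulerian ho ht hrX hp hcX hcr (hci ▸ hwo)
  obtain ⟨q, hq, hqpath, g, hgw, hg⟩ := h.loose.exists_isPath_fan h.eulerian ho ht hrX
    (hri ▸ h.ne_of_eq hrx) hcX (hci ▸ hwo) hp'
  rw [hri, hci] at hgw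
  have hk : inc.IsPath v k t := by
    rw [hl, List.append_cons] at hpath
    exact hpath.of_append (ha.append (.single hcv))
  refine h.loose.hasDeletableLink_of_fan h.eulerian ho ht h.mem h.eq hx hrA hrx hro hz hcA hcv hco
    hw hv hq hqpath hgw hg <| ih _ _ c v k (by simp [hl]; lia) ?_
  exact h.contract_splitOff hrx hLX ho hz (fun e he => ⟨(hg e he).2.1.2, (hg e he).1⟩) hcl hcv hw hv
    hk (by simp [hl]) hkX

theorem IsApproach.hasDeletableLink (h : inc.IsApproach A o t b x l) (hot : o ≠ t) :
    inc.HasDeletableLink A o t b := by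
  induction hn : l.length using Nat.strong_induction_on generalizing inc A b x l with | _ n ih
  subst hn
  cases l with
  | nil => exact h.hasDeletableLink_of_nil hot
  | cons r l =>
    obtain ⟨z, hrx, -, -, -, -⟩ := h.path.exists_of_cons
    obtain ⟨hrA, hro⟩ := h.avoid r (by simp)
    by_cases hL : (inc.splitOff b o z).IsLoose (A \ {r}) o t
    · exact .of_splitOff (h.ne_of_notMem hro).symm hrA h.eq h.ne hrx hro
        (ih l.length (by simp) (h.splitOff hrx hL) rfl)
    · exact h.hasDeletableLink_of_not_isLoose hrx hL fun inc A b x k hk h => ih _ hk h rfl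

end DeletableLinks

section LinkedSets

variable {V : Type u} {E : Type v} {inc : Incidence V E}
variable {A B C F S : Set E} {o t w y : V} {X : Set V} {p : E → List E} {e g : E} {l : List E}

theorem IsPath.exists_eq_cons (h : inc.IsPath o l w) (he : e ∈ l) (hey : inc e = s(o, y)) :
    ∃ k, l = e :: k ∧ y ≠ o ∧ o ≠ w ∧ inc.IsPath y k w ∧ ∀ g ∈ k, o ∉ inc g := by
  cases l with
  | nil => simp at he
  | cons a k =>
    obtain ⟨v, hav, hvo, how, hk, hko⟩ := h.exists_of_cons
    obtain rfl : e = a := (List.mem_cons.1 he).resolve_right fun h => hko e h (by simp [hey])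
    obtain rfl : v = y := Sym2.congr_right.1 (hav.symm.trans hey)
    exact ⟨k, rfl, hvo, how, hk, hko⟩

theorem IsPathWave.exists_isLink (hw : inc.IsPathWave B o t X p)
    (hcov : inc.CoversEdgesAt B o (inc.cut B X) p) (he : e ∈ B) (heo : inc.IsEdgeAt o e) :
    ∃ c ∈ inc.cut B X, ∃ x ∈ X, ∃ z, z ∉ X ∧ inc c = s(x, z) ∧
      ∃ k, e :: k = p c ++ [c] ∧ inc.IsLink o z e k := by
  obtain ⟨y, hey, hyo⟩ := heo
  obtain ⟨c, hc, hec⟩ := hcov e he ⟨y, hey, hyo⟩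
  obtain ⟨z, hcz, hx, hz⟩ := hc.2.exists_innerEnd (o := o)
  have hpath := hw.path c hc
  refine ⟨c, hc, _, hx, z, hz, hcz, ?_⟩
  by_cases hpc : e ∈ p c
  · obtain ⟨k, hk, -, hox, hky, hko⟩ := hpath.exists_eq_cons hpc hey
    refine ⟨k ++ [c], by simp [hk], y, hey, hyo, hky.isWalk.append (.single hcz), ?_⟩
    simp only [List.mem_append, List.mem_singleton]
    rintro g (hg | rfl)
    · exact hko g hg
    · simp only [hcz, Sym2.mem_iff, not_or]
      exact ⟨hox, fun h => hz (h ▸ hw.ho)⟩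
  · obtain rfl : e = c := (List.mem_cons.1 hec).resolve_right hpc
    have hyX : y ∉ X := fun hy => Inside.not_crosses ((inside_iff hey).2 ⟨hw.ho, hy⟩) hc.2
    have hio : inc.innerEnd o X e = o := innerEnd_eq hey hw.ho hyX
    rw [hio] at hcz hpath
    obtain rfl : y = z := Sym2.congr_right.1 (hey.symm.trans hcz)
    exact ⟨[], by rw [hpath.eq_nil]; rfl, y, hey, hyo, .nil y, by simp⟩

theorem IsPreloose.hasDeletableLink (hB : inc.IsPreloose B o t) (hot : o ≠ t) (he : e ∈ B)
    (heo : inc.IsEdgeAt o e) : inc.HasDeletableLink B o t e := by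
  obtain ⟨X, p, hw, hcov, hL, hE⟩ := hB
  obtain ⟨c, hc, x, hx, z, hz, hcz, k, hek, hk⟩ := hw.exists_isLink hcov he heo
  have hpX : ∀ d ∈ inc.cut B X, ∀ g ∈ p d, g ∈ B ∧ inc.Inside X g := hw.cov.mem
  have hloop : ∀ g ∈ B, g ∈ {g | g ∈ p c} → inc.contract o X g = s(o, o) :=
    fun g _ hg => contract_eq_of_inside (hpX c hc g hg).2
  have hcp : ∀ d ∈ inc.cut B X, ∀ d' ∈ inc.cut B X, d ∉ p d' :=
    fun d hd d' hd' h => (hpX d' hd' d h).2.not_crosses hd.2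
  have hzo : z ≠ o := fun h => hz (h ▸ hw.ho)
  have hcB : c ∈ B \ {g | g ∈ p c} := ⟨hc.1, hcp c hc c hc⟩
  have hcz' : inc.contract o X c = s(o, z) := contract_eq_of_mem_of_notMem hx hz hcz
  obtain ⟨l, hl, hlB⟩ := (hL.sdiff_loops hloop).exists_isPath hot hcB hcz' hzo
  have hlink := IsApproach.hasDeletableLink
    ⟨hL.sdiff_loops hloop, hE.sdiff_loops hloop, hcB, hcz', hzo, hl, hlB⟩ hot
  have hcut : inc.cut (B \ {g | g ∈ p c ++ [c]}) X ⊆ inc.cut B X \ {c} :=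
    fun d hd => ⟨⟨hd.1.1, hd.2⟩, by rintro rfl; exact hd.1.2 (by simp)⟩
  refine .of_contract (hw.cov.mono subset_rfl Set.sdiff_subset |>.isPathWave_sdiff hw.ho hw.ht
    (fun d hd => hw.path d hd.1) hcut ?_) ?_ hk hek (fun g hg => (hpX c hc g hg).1) hcz hx hz hlink
  · rintro d ⟨hd, hdc⟩ g hg hg'
    rcases List.mem_append.1 hg' with h | h
    · exact hw.cov.disj d hd c hc hdc g hg h
    · rw [List.mem_singleton.1 h] at hg
      exact hcp c hc d hd hg
  · rintro g ⟨hg, hgc⟩ hgo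
    obtain ⟨d, hd, hgd⟩ := hcov g hg hgo
    have hdc : d ≠ c := by
      rintro rfl
      exact hgc (by simpa [or_comm] using hgd)
    refine ⟨d, ⟨⟨hd.1, ?_⟩, hd.2⟩, hgd⟩
    simpa using ⟨hcp d hd c hc, hdc⟩

/-- The edges of `F` at `o` start pairwise edge-disjoint links from `o` to `t` that run in `F`. -/
def IsLinked (inc : Incidence V E) (o t : V) (F : Set E) : Prop :=
  ∃ L : E → List E,
    (∀ e ∈ F, inc.IsEdgeAt o e → inc.IsLink o t e (L e) ∧ ∀ g ∈ L e, g ∈ F) ∧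
    ∀ e ∈ F, ∀ e' ∈ F, inc.IsEdgeAt o e → inc.IsEdgeAt o e' → e ≠ e' → ∀ g ∈ L e, g ∉ L e'

theorem IsLinked.mono (h : inc.IsLinked o t S) (hSF : S ⊆ F)
    (hF : ∀ e ∈ F, inc.IsEdgeAt o e → e ∈ S) : inc.IsLinked o t F := by
  obtain ⟨L, hL, hdisj⟩ := h
  exact ⟨L, fun e he heo => ⟨(hL e (hF e he heo) heo).1, fun g hg =>
    hSF ((hL e (hF e he heo) heo).2 g hg)⟩,
    fun e he e' he' heo heo' => hdisj e (hF e he heo) e' (hF e' he' heo') heo heo'⟩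

/-- The edges of `A \ F` in the component of `o`: what is left of the linking problem once `F` has
been used up. -/
def residue (inc : Incidence V E) (A : Set E) (o : V) (F : Set E) : Set E :=
  {g | g ∈ A \ F ∧ ∃ v ∈ inc g, inc.Reachable (A \ F) v o}

/-- Every loose inner Eulerian problem and every set of at most `μ` edges admit a linked set of at
most `μ` edges absorbing the given ones and closed under a given operation `Φ`, both up to edges
that the linked set cuts off from `o`. -/
def HasLinkedClosures (V : Type u) (E : Type v) (μ : Cardinal.{v}) : Prop :=
  ∀ (inc : Incidence V E) (o t : V), o ≠ t → ∀ A D : Set E, ∀ Φ : E → Set E,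
    inc.IsLoose A o t → inc.IsInnerEulerian A o t → Cardinal.mk D ≤ μ →
    (∀ e, Cardinal.mk (Φ e) ≤ μ) →
    ∃ F ⊆ A, Cardinal.mk F ≤ μ ∧ inc.IsLinked o t F ∧ Disjoint D (inc.residue A o F) ∧
      ∀ e ∈ F, Disjoint (Φ e) (inc.residue A o F)

section Cardinality
open Cardinal

variable {α : Type v} {μ : Cardinal.{v}} {S T : Set α} {Φ : α → Set α}

theorem mk_union_le_of_le (hμ : ℵ₀ ≤ μ) (hS : #S ≤ μ) (hT : #T ≤ μ) : #(S ∪ T : Set α) ≤ μ :=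
  (mk_union_le S T).trans (add_le_of_le hμ hS hT)

theorem mk_biUnion_le_of_le {ι : Type v} {I : Set ι} {f : ι → Set α} (hμ : ℵ₀ ≤ μ) (hI : #I ≤ μ)
    (h : ∀ i ∈ I, #(f i) ≤ μ) : #(⋃ i ∈ I, f i : Set α) ≤ μ :=
  (mk_biUnion_le f I).trans (mul_le_of_le hμ hI (ciSup_le' fun i => h i.1 i.2))

theorem mk_iUnion_nat_le_of_le {f : ℕ → Set α} (hμ : ℵ₀ ≤ μ) (h : ∀ n, #(f n) ≤ μ) :
    #(⋃ n, f n : Set α) ≤ μ := by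
  have := mk_biUnion_le_of_le (I := Set.univ) (f := fun n : ULift.{v} ℕ => f n.down) hμ
    (by simpa using hμ) fun n _ => h n.down
  refine (mk_le_mk_of_subset fun a ha => ?_).trans this
  obtain ⟨n, hn⟩ := Set.mem_iUnion.1 ha
  exact Set.mem_biUnion (Set.mem_univ (ULift.up n)) hn

theorem exists_closed_superset (hμ : ℵ₀ ≤ μ) (hS : #S ≤ μ) (hΦ : ∀ a, #(Φ a) ≤ μ) :
    ∃ F, S ⊆ F ∧ #F ≤ μ ∧ ∀ a ∈ F, Φ a ⊆ F := by
  let f : ℕ → Set α := fun n => (fun T => T ∪ ⋃ a ∈ T, Φ a)^[n] S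
  have hf (n : ℕ) : f (n + 1) = f n ∪ ⋃ a ∈ f n, Φ a := Function.iterate_succ_apply' _ _ _
  refine ⟨⋃ n, f n, Set.subset_iUnion f 0, mk_iUnion_nat_le_of_le hμ fun n => ?_,
    fun a ha b hb => ?_⟩
  · induction n with
    | zero => exact hS
    | succ n ih =>
      rw [hf]
      exact mk_union_le_of_le hμ ih (mk_biUnion_le_of_le hμ ih fun a _ => hΦ a)
  · obtain ⟨n, hn⟩ := Set.mem_iUnion.1 ha
    refine Set.mem_iUnion.2 ⟨n + 1, ?_⟩
    rw [hf]
    exact .inr (Set.mem_biUnion hn hb)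

end Cardinality

section Dovetail

variable {α β : Type*}

theorem exists_seq_unpair (a : α) (step : α → β → α) (f : α → ℕ → β) :
    ∃ s : ℕ → α, s 0 = a ∧ ∀ k, s (k + 1) = step (s k) (f (s k.unpair.1) k.unpair.2) := by
  let σ : ℕ → ℕ → α := fun k => Nat.rec (fun _ => a) (fun k τ =>
    Function.update τ (k + 1) (step (τ k) (f (τ k.unpair.1) k.unpair.2))) k
  have hσ (k : ℕ) : σ (k + 1) =
    Function.update (σ k) (k + 1) (step (σ k k) (f (σ k k.unpair.1) k.unpair.2)) := rfl
  have hstable (k : ℕ) : ∀ i ≤ k, σ k i = σ i i := by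
    induction k with
    | zero => intro i hi; rw [Nat.le_zero.1 hi]
    | succ k ih =>
      intro i hi
      rcases hi.eq_or_lt with rfl | hlt
      · rfl
      · rw [hσ, Function.update_of_ne hlt.ne, ih i (by lia)]
  refine ⟨fun k => σ k k, rfl, fun k => ?_⟩
  beta_reduce
  rw [← hstable k _ (Nat.unpair_left_le k), hσ, Function.update_self]

theorem exists_seq_forall_served [Nonempty β] {r : β → α → α → Prop} (hr : ∀ a b, ∃ a', r b a a')
    {R : α → Set β} (hR : ∀ a, (R a).Countable) (a : α) :
    ∃ s : ℕ → α, s 0 = a ∧ (∀ k, ∃ b, r b (s k) (s (k + 1))) ∧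
      ∀ i, ∀ b ∈ R (s i), ∃ k, r b (s k) (s (k + 1)) := by
  choose step hstep using hr
  choose f hf using fun a => Set.countable_iff_exists_subset_range.1 (hR a)
  obtain ⟨s, hs₀, hs⟩ := exists_seq_unpair a step f
  refine ⟨s, hs₀, fun k => ⟨_, hs k ▸ hstep _ _⟩, fun i b hb => ?_⟩
  obtain ⟨j, rfl⟩ := hf (s i) hb
  refine ⟨Nat.pair i j, ?_⟩
  rw [hs, Nat.unpair_pair]
  exact hstep _ _

end Dovetail

end LinkedSets

section LinkDeletion

variable {V : Type u} {E : Type v} {inc : Incidence V E}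
variable {A B B' : Set E} {o t : V} {e : E} {s : ℕ → Set E}

theorem IsLink.isEdgeAt {l : List E} (h : inc.IsLink o t e l) : inc.IsEdgeAt o e := by
  obtain ⟨y, hey, hyo, -, -⟩ := h
  exact ⟨y, hey, hyo⟩

theorem IsEdgeAt.mem (h : inc.IsEdgeAt o e) : o ∈ inc e := by
  obtain ⟨y, hey, -⟩ := h
  simp [hey]

theorem IsLink.eq_of_mem {g : E} {l : List E} (h : inc.IsLink o t e l) (hg : g ∈ e :: l)
    (hgo : inc.IsEdgeAt o g) : g = e := by
  obtain ⟨-, -, -, -, hl⟩ := h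
  exact (List.mem_cons.1 hg).resolve_right fun hg => hl g hg hgo.mem

/-- `B'` arises from `B` by deleting a link from `o` to `t` that starts with `e`; nothing is deleted
if `e` is not an edge of `B` at `o`. -/
def DeletesLink (inc : Incidence V E) (o t : V) (e : E) (B B' : Set E) : Prop :=
  (∃ l, inc.IsLink o t e l ∧ (∀ g ∈ e :: l, g ∈ B) ∧ B' = B \ {g | g ∈ e :: l}) ∨
    ((e ∈ B → ¬ inc.IsEdgeAt o e) ∧ B' = B)

theorem DeletesLink.subset (h : inc.DeletesLink o t e B B') : B' ⊆ B := by
  rcases h with ⟨l, -, -, rfl⟩ | ⟨-, rfl⟩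
  exacts [Set.sdiff_subset, subset_rfl]

theorem DeletesLink.notMem (h : inc.DeletesLink o t e B B') (he : inc.IsEdgeAt o e) : e ∉ B' := by
  rcases h with ⟨l, -, -, rfl⟩ | ⟨h, rfl⟩
  exacts [fun h => h.2 (by simp), fun h' => h h' he]

theorem DeletesLink.countable (h : inc.DeletesLink o t e B B') (hB : (A \ B).Countable) :
    (A \ B').Countable := by
  rcases h with ⟨l, -, -, rfl⟩ | ⟨-, rfl⟩
  · rw [Set.sdiff_sdiff_right]
    exact hB.union ((List.finite_toSet (e :: l)).countable.mono Set.inter_subset_right)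
  · exact hB

theorem DeletesLink.exists_isLink {g : E} (h : inc.DeletesLink o t g B B') (he : e ∈ B)
    (he' : e ∉ B') (heo : inc.IsEdgeAt o e) :
    ∃ l, inc.IsLink o t e l ∧ (∀ g ∈ e :: l, g ∈ B) ∧ B' = B \ {g | g ∈ e :: l} := by
  rcases h with ⟨l, hl, hlB, rfl⟩ | ⟨-, rfl⟩
  · have heg : e ∈ g :: l := by_contra fun h => he' ⟨he, h⟩
    obtain rfl := hl.eq_of_mem heg heo
    exact ⟨l, hl, hlB, rfl⟩
  · exact absurd he he'

theorem IsPreloose.exists_deletesLink (hB : inc.IsPreloose B o t) (hot : o ≠ t) (e : E) :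
    ∃ B', inc.IsPreloose B' o t ∧ inc.DeletesLink o t e B B' := by
  by_cases h : e ∈ B ∧ inc.IsEdgeAt o e
  · obtain ⟨l, hl, hlB, hB'⟩ := hB.hasDeletableLink hot h.1 h.2
    exact ⟨_, hB', .inl ⟨l, hl, hlB, rfl⟩⟩
  · exact ⟨B, hB, .inr ⟨not_and.1 h, rfl⟩⟩

theorem antitone_of_deletesLink (hs : ∀ k, ∃ e, inc.DeletesLink o t e (s k) (s (k + 1))) :
    Antitone s :=
  antitone_nat_of_succ_le fun k => (hs k).elim fun _ h => h.subset

theorem exists_isLink_of_deletesLink (hs : ∀ k, ∃ e, inc.DeletesLink o t e (s k) (s (k + 1)))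
    (he₀ : e ∈ s 0) {n : ℕ} (he : e ∉ s n) (heo : inc.IsEdgeAt o e) :
    ∃ k l, inc.IsLink o t e l ∧ (∀ g ∈ e :: l, g ∈ s k) ∧
      s (k + 1) = s k \ {g | g ∈ e :: l} := by
  induction n with
  | zero => exact absurd he₀ he
  | succ k ih =>
    by_cases hek : e ∈ s k
    · exact ⟨k, (hs k).elim fun _ h => h.exists_isLink hek he heo⟩
    · exact ih hek

theorem isLinked_of_deletesLink (hs : ∀ k, ∃ e, inc.DeletesLink o t e (s k) (s (k + 1))) :
    inc.IsLinked o t (⋃ k, s 0 \ s k) := by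
  have hlink : ∀ e ∈ ⋃ k, s 0 \ s k, inc.IsEdgeAt o e → ∃ k l, inc.IsLink o t e l ∧
      (∀ g ∈ e :: l, g ∈ s k) ∧ s (k + 1) = s k \ {g | g ∈ e :: l} := by
    intro e he heo
    obtain ⟨n, he₀, hen⟩ := Set.mem_iUnion.1 he
    exact exists_isLink_of_deletesLink hs he₀ hen heo
  choose! K L hL hLK hK using hlink
  refine ⟨L, fun e he heo => ⟨hL e he heo, fun g hg => Set.mem_iUnion.2 ⟨K e + 1, ?_, ?_⟩⟩, ?_⟩
  · exact antitone_of_deletesLink hs (Nat.zero_le _) (hLK e he heo g (by simp [hg]))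
  · rw [hK e he heo]
    exact fun h => h.2 (by simp [hg])
  · have hlt : ∀ e ∈ ⋃ k, s 0 \ s k, ∀ e' ∈ ⋃ k, s 0 \ s k, inc.IsEdgeAt o e →
        inc.IsEdgeAt o e' → K e < K e' → ∀ g ∈ L e, g ∉ L e' := by
      intro e he e' he' heo heo' hKe g hg hg'
      have hgK := antitone_of_deletesLink hs hKe (hLK e' he' heo' g (by simp [hg']))
      rw [hK e he heo] at hgK
      exact hgK.2 (by simp [hg])
    intro e he e' he' heo heo' hne g hg hg'
    rcases lt_trichotomy (K e) (K e') with h | h | h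
    · exact hlt e he e' he' heo heo' h g hg hg'
    · have he'K : e' ∈ s (K e) := h ▸ hLK e' he' heo' e' (by simp)
      have he'K₁ : e' ∉ s (K e + 1) := by
        rw [h, hK e' he' heo']
        exact fun h => h.2 (by simp)
      rw [hK e he heo] at he'K₁
      have he'e : e' ∈ e :: L e := by_contra fun h => he'K₁ ⟨he'K, h⟩
      exact hne ((hL e he heo).eq_of_mem he'e heo').symm
    · exact hlt e' he' e he heo' heo h g hg' hg

open Cardinal in
-- Links are deleted one after the other, and at each stage the requests are the edges of the
-- closure of what has been deleted so far; these closures exhaust the linked set.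
theorem hasLinkedClosures_aleph0 : HasLinkedClosures V E ℵ₀ := by
  intro inc o t hot A D Φ hL hE hD hΦ
  rcases isEmpty_or_nonempty E with _ | _
  · exact ⟨∅, by simp, by simp, ⟨fun _ => [], by simp, by simp⟩, by simp, by simp⟩
  let S := {B : Set E // inc.IsPreloose B o t ∧ (A \ B).Countable}
  have hstep : ∀ (B : S) (e : E), ∃ B' : S, inc.DeletesLink o t e B.1 B'.1 := by
    rintro ⟨B, hB, hAB⟩ e
    obtain ⟨B', hB', h⟩ := hB.exists_deletesLink hot e
    exact ⟨⟨B', hB', h.countable hAB⟩, h⟩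
  choose C hDC hC hCΦ using fun B : S => exists_closed_superset le_rfl
    (mk_union_le_of_le le_rfl hD (le_aleph0_iff_set_countable.2 B.2.2)) hΦ
  obtain ⟨s, hs₀, hs, hserved⟩ := exists_seq_forall_served hstep
    (fun B => le_aleph0_iff_set_countable.1 (hC B)) ⟨A, hL.isPreloose hE hot, by simp⟩
  have hs₀A : (s 0).1 = A := by rw [hs₀]
  have hF (F : Set E) (T : Set E) (hT : T ∩ A ⊆ F) : Disjoint T (inc.residue A o F) :=
    Set.disjoint_left.2 fun g hg hg' => hg'.1.2 (hT ⟨hg, hg'.1.1⟩)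
  refine ⟨(⋃ k, C (s k)) ∩ A, Set.inter_subset_right, ?_, ?_, hF _ _ fun g hg => ?_,
    fun e he => hF _ _ fun g hg => ?_⟩
  · exact (mk_le_mk_of_subset Set.inter_subset_left).trans
      (mk_iUnion_nat_le_of_le le_rfl fun k => hC (s k))
  · refine (isLinked_of_deletesLink hs).mono ?_ ?_
    · rw [hs₀A]
      exact Set.iUnion_subset fun k g hg => ⟨Set.mem_iUnion.2 ⟨k, hDC (s k) (.inr hg)⟩, hg.1⟩
    · rintro e ⟨he, heA⟩ heo
      obtain ⟨i, hi⟩ := Set.mem_iUnion.1 he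
      obtain ⟨k, hk⟩ := hserved i e hi
      exact Set.mem_iUnion.2 ⟨k + 1, by rwa [hs₀A], hk.notMem heo⟩
  · exact ⟨Set.mem_iUnion.2 ⟨0, hDC (s 0) (.inl hg.1)⟩, hg.2⟩
  · obtain ⟨i, hi⟩ := Set.mem_iUnion.1 he.1
    exact ⟨Set.mem_iUnion.2 ⟨i, hCΦ (s i) e hi hg.1⟩, hg.2⟩

end LinkDeletion

section Residue

variable {V : Type u} {E : Type v} {inc : Incidence V E}
variable {A F : Set E} {o t v : V} {g : E} {l : List E} {μ : Cardinal.{v}}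

theorem mem_residue_iff :
    g ∈ inc.residue A o F ↔ g ∈ A \ F ∧ inc.Inside {v | inc.Reachable (A \ F) v o} g := by
  constructor
  · rintro ⟨hg, v, hv, hvo⟩
    exact ⟨hg, fun w hw => (Reachable.of_mem hg hw hv).trans hvo⟩
  · rintro ⟨hg, h⟩
    obtain ⟨x, y, hxy⟩ := exists_ends inc g
    have hx : x ∈ inc g := by simp [hxy]
    exact ⟨hg, x, hx, h x hx⟩

theorem IsWalk.mem_residue (h : inc.IsWalk v l o) (hl : ∀ e ∈ l, e ∈ A \ F) :
    ∀ e ∈ l, e ∈ inc.residue A o F := by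
  intro e he
  obtain ⟨x, y, hxy⟩ := exists_ends inc e
  have hx : x ∈ inc e := by simp [hxy]
  obtain ⟨a, b, rfl, -, hb⟩ := h.exists_split he hx
  exact ⟨hl e he, x, hx, b, fun g hg => hl g (by simp [hg]), hb⟩

/-- The set of edges `F` is closed under separation from `o`: if some set of at most `μ` edges
separates an end of an edge of `F` from `o` in `A`, then so does `F` itself. -/
def IsSeparationClosed (inc : Incidence V E) (A : Set E) (o : V) (μ : Cardinal.{v}) (F : Set E) :
    Prop :=
  ∀ f ∈ F, ∀ v ∈ inc f, (∃ S : Set E, Cardinal.mk S ≤ μ ∧ ¬ inc.Reachable (A \ S) v o) →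
    ¬ inc.Reachable (A \ F) v o

open Cardinal in
-- A small cut of the residue together with `F` separates its far side from `o`, so by closedness
-- no edge of `F` has an end there that is still connected to `o`.
theorem IsSeparationClosed.notMem_of_cut_finite (h : inc.IsSeparationClosed A o μ F)
    (hμ : ℵ₀ ≤ μ) (hF : #F ≤ μ) {Y : Set V} (ho : o ∉ Y)
    (hY : (inc.cut (inc.residue A o F) Y).Finite) {f : E} (hf : f ∈ F) (hv : v ∈ inc f)
    (hvo : inc.Reachable (A \ F) v o) : v ∉ Y := by
  intro hvY
  refine h f hf v hv ⟨F ∪ inc.cut (inc.residue A o F) Y, mk_union_le_of_le hμ hF ?_, ?_⟩ hvo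
  · exact (le_aleph0_iff_set_countable.2 hY.countable).trans hμ
  · rintro ⟨l, hl, hw⟩
    have hlF : ∀ e ∈ l, e ∈ A \ F := fun e he => ⟨(hl e he).1, fun h => (hl e he).2 (Or.inl h)⟩
    obtain ⟨a, e, b, x, y, rfl, -, hxy, hx, hy, -, -⟩ := hw.first_exit hvY ho
    exact (hl e (by simp)).2 (Or.inr ⟨hw.mem_residue hlF e (by simp), x, y, hxy, hx, hy⟩)

open Cardinal in
theorem IsInnerEulerian.residue (hE : inc.IsInnerEulerian A o t) (hμ : ℵ₀ ≤ μ) (hF : #F ≤ μ)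
    (hcl : inc.IsSeparationClosed A o μ F) : inc.IsInnerEulerian (inc.residue A o F) o t := by
  intro Y ho ht hfin
  set K := {v | inc.Reachable (A \ F) v o}
  have hcut : inc.cut A (K ∩ Y) = inc.cut (inc.residue A o F) Y := by
    ext e
    constructor
    · rintro ⟨heA, x, y, hxy, hx, hy⟩
      have hxe : x ∈ inc e := by simp [hxy]
      have heF : e ∉ F := fun h => hcl.notMem_of_cut_finite hμ hF ho hfin h hxe hx.1 hx.2
      have he : e ∈ inc.residue A o F := ⟨⟨heA, heF⟩, x, hxe, hx.1⟩
      have hyK : y ∈ K := (mem_residue_iff.1 he).2 y (by simp [hxy])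
      exact ⟨he, x, y, hxy, hx.2, fun h => hy ⟨hyK, h⟩⟩
    · rintro ⟨he, x, y, hxy, hx, hy⟩
      have hxK : x ∈ K := (mem_residue_iff.1 he).2 x (by simp [hxy])
      exact ⟨he.1.1, x, y, hxy, ⟨hxK, hx⟩, fun h => hy h.2⟩
  have heven := hE (K ∩ Y) (fun h => ho h.2) (fun h => ht h.2)
  rw [hcut] at heven
  exact heven hfin

theorem exists_wellFounded_choice {α γ : Type*} [Nonempty γ] {r : α → α → Prop} (wf : WellFounded r)
    (P : (a : α) → (∀ b, r b a → γ) → γ → Prop) :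
    ∃ f : α → γ, ∀ a, (∃ x, P a (fun b _ => f b) x) → P a (fun b _ => f b) (f a) := by
  classical
  let f : α → γ := wf.fix fun a ih =>
    if h : ∃ x, P a ih x then h.choose else Classical.arbitrary γ
  refine ⟨f, fun a h => ?_⟩
  have hfa : f a = h.choose := (wf.fix_eq _ a).trans (dif_pos h)
  rw [hfa]
  exact h.choose_spec

open Cardinal in
theorem exists_pairwise_disjoint_choice {γ : Type*} [Nonempty γ] (hμ : ℵ₀ ≤ μ) {I : Set E}
    (hI : #I ≤ μ) (R : E → γ → Prop) (G : γ → Set E)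
    (h : ∀ b ∈ I, ∀ Z : Set E, #Z ≤ μ → ∃ x, R b x ∧ (G x).Countable ∧ Disjoint (G x) Z) :
    ∃ f : E → γ, (∀ b ∈ I, R b (f b)) ∧ I.PairwiseDisjoint fun b => G (f b) := by
  have wf : WellFounded (WellOrderingRel : E → E → Prop) := WellOrderingRel.isWellOrder.wf
  obtain ⟨f, hf⟩ := exists_wellFounded_choice wf fun b (ih : ∀ b', WellOrderingRel b' b → γ) x =>
    R b x ∧ (G x).Countable ∧ ∀ b' ∈ I, ∀ hb : WellOrderingRel b' b, Disjoint (G x) (G (ih b' hb))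
  have hspec : ∀ b ∈ I, R b (f b) ∧ (G (f b)).Countable ∧
      ∀ b' ∈ I, WellOrderingRel b' b → Disjoint (G (f b)) (G (f b')) := by
    intro b
    induction b using wf.induction with
    | _ b ih =>
      intro hb
      obtain ⟨x, hx, hcount, hdisj⟩ := h b hb (⋃ b' ∈ {b' ∈ I | WellOrderingRel b' b}, G (f b'))
        (mk_biUnion_le_of_le hμ ((mk_le_mk_of_subset (Set.sep_subset _ _)).trans hI) fun b' hb' =>
          (le_aleph0_iff_set_countable.2 (ih b' hb'.2 hb'.1).2.1).trans hμ)
      refine hf b ⟨x, hx, hcount, fun b' hb' hlt => hdisj.mono_right ?_⟩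
      exact Set.subset_biUnion_of_mem (u := fun b' => G (f b')) ⟨hb', hlt⟩
  refine ⟨f, fun b hb => (hspec b hb).1, fun b hb b' hb' hne => ?_⟩
  rcases trichotomous_of (WellOrderingRel : E → E → Prop) b b' with hlt | heq | hlt
  · exact ((hspec b' hb').2.2 b hb hlt).symm
  · exact absurd heq hne
  · exact (hspec b hb).2.2 b' hb' hlt

end Residue

section Rerouting

variable {V : Type u} {E : Type v} {inc : Incidence V E}
variable {A D F I S Z : Set E} {o t v : V} {X : Set V} {y : E → V} {p q : E → List E} {b e : E}
  {μ : Cardinal.{v}}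

open Cardinal in
theorem mk_incident_le (hμ : ℵ₀ ≤ μ) {R : V → Set E} (hR : ∀ v, #(R v) ≤ μ) (e : E) :
    #{g | ∃ v ∈ inc e, g ∈ R v} ≤ μ := by
  obtain ⟨x, y, hxy⟩ := exists_ends inc e
  refine (mk_le_mk_of_subset ?_).trans (mk_union_le_of_le hμ (hR x) (hR y))
  rintro g ⟨v, hv, hg⟩
  rw [hxy] at hv
  rcases Sym2.mem_iff.1 hv with rfl | rfl
  · exact Or.inl hg
  · exact Or.inr hg

open Cardinal in
theorem exists_isSeparationClosed_superset (hμ : ℵ₀ ≤ μ) (hS : #S ≤ μ) {Ψ : E → Set E}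
    (hΨ : ∀ e, #(Ψ e) ≤ μ) :
    ∃ F, S ⊆ F ∧ #F ≤ μ ∧ inc.IsSeparationClosed A o μ F ∧ ∀ e ∈ F, Ψ e ⊆ F := by
  have hsep : ∀ v : V, ∃ R : Set E, #R ≤ μ ∧
      ((∃ R' : Set E, #R' ≤ μ ∧ ¬ inc.Reachable (A \ R') v o) → ¬ inc.Reachable (A \ R) v o) := by
    intro v
    by_cases h : ∃ R' : Set E, #R' ≤ μ ∧ ¬ inc.Reachable (A \ R') v o
    · exact h.imp fun R hR => ⟨hR.1, fun _ => hR.2⟩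
    · exact ⟨∅, by simp, fun h' => absurd h' h⟩
  choose R hRμ hR using hsep
  have hΦ : ∀ e, #({g | ∃ v ∈ inc e, g ∈ R v} ∪ Ψ e : Set E) ≤ μ := fun e =>
    mk_union_le_of_le hμ (mk_incident_le hμ hRμ e) (hΨ e)
  obtain ⟨F, hSF, hFμ, hF⟩ := exists_closed_superset hμ hS hΦ
  refine ⟨F, hSF, hFμ, fun f hf v hv hvR hvo => hR v hvR (hvo.mono fun e he => ⟨he.1, ?_⟩),
    fun e he g hg => hF e he (Or.inr hg)⟩
  exact fun h => he.2 (hF f hf (Or.inl ⟨v, hv, h⟩))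

open Cardinal in
theorem IsSeparationClosed.infinitelyConnected (h : inc.IsSeparationClosed A o μ F) (hμ : ℵ₀ ≤ μ)
    (hF : #F ≤ μ) {f : E} (hf : f ∈ F) (hv : v ∈ inc f) (hvo : inc.Reachable (A \ F) v o) :
    inc.InfinitelyConnected (A \ F) v o := by
  intro N hN
  by_contra hcon
  refine h f hf v hv ⟨F ∪ N, mk_union_le_of_le hμ hF
    ((le_aleph0_iff_set_countable.2 hN.countable).trans hμ), ?_⟩ hvo
  rwa [← Set.sdiff_sdiff]

/-- The edges used by the walks `p c` with `c ∈ C`. -/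
def usedEdges (C : Set E) (p : E → List E) : Set E := {e | ∃ c ∈ C, e ∈ p c}

theorem countable_usedEdges (hS : S.Countable) : (usedEdges S q).Countable := by
  have h : usedEdges S q = ⋃ c ∈ S, {e | e ∈ q c} := by ext; simp [usedEdges]
  rw [h]
  exact hS.biUnion fun c _ => (List.finite_toSet (q c)).countable

/-- A rerouting of the walks `p` indexed by `D`: walks `q` indexed by a set `S`, to be used instead
of `p` on `S`, which are edge-disjoint from the walks `p d` that are kept. -/
structure IsRerouting (inc : Incidence V E) (A : Set E) (o : V) (D : Set E) (y : E → V)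
    (p : E → List E) (S : Set E) (q : E → List E) : Prop where
  walkSystem : inc.WalkSystem A o S y q
  avoid : ∀ c ∈ S, ∀ d ∈ D, d ∉ S → ∀ e ∈ q c, e ∉ p d

theorem WalkSystem.exists_of_isRerouting {S : E → Set E} {q : E → E → List E}
    (hp : inc.WalkSystem A o D y p) (h : ∀ b ∈ I, inc.IsRerouting A o D y p (S b) (q b))
    (hI : ∀ b ∈ I, b ∈ S b) (hdisj : I.PairwiseDisjoint fun b => usedEdges (S b) (q b)) :
    ∃ p', inc.WalkSystem A o (D ∪ I) y p' := by
  classical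
  let p' : E → List E := fun c => if h : ∃ b ∈ I, c ∈ S b then q h.choose c else p c
  have hcases : ∀ c ∈ D ∪ I, (∃ b ∈ I, c ∈ S b ∧ p' c = q b c) ∨
      (c ∈ D ∧ (∀ b ∈ I, c ∉ S b) ∧ p' c = p c) := by
    intro c hc
    by_cases hcS : ∃ b ∈ I, c ∈ S b
    · exact Or.inl ⟨hcS.choose, hcS.choose_spec.1, hcS.choose_spec.2, dif_pos hcS⟩
    · exact Or.inr ⟨hc.resolve_right fun hcI => hcS ⟨c, hcI, hI c hcI⟩,
        fun b hb hcb => hcS ⟨b, hb, hcb⟩, dif_neg hcS⟩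
  refine ⟨p', fun c hc => ?_, fun c hc => ?_, fun c hc d hd hne e he hed => ?_, fun c hc => ?_⟩
  · rcases hcases c hc with ⟨b, hb, hcb, heq⟩ | ⟨hcD, -, heq⟩ <;> rw [heq]
    exacts [(h b hb).walkSystem.walk c hcb, hp.walk c hcD]
  · rcases hcases c hc with ⟨b, hb, hcb, heq⟩ | ⟨hcD, -, heq⟩ <;> rw [heq]
    exacts [(h b hb).walkSystem.mem c hcb, hp.mem c hcD]
  · rcases hcases c hc with ⟨b, hb, hcb, heq⟩ | ⟨hcD, hcS, heq⟩ <;>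
      rcases hcases d hd with ⟨b', hb', hdb', heq'⟩ | ⟨hdD, hdS, heq'⟩ <;> rw [heq] at he <;>
      rw [heq'] at hed
    · rcases eq_or_ne b b' with rfl | hbb'
      · exact (h b hb).walkSystem.disj c hcb d hdb' hne e he hed
      · exact Set.disjoint_left.1 (hdisj hb hb' hbb') ⟨c, hcb, he⟩ ⟨d, hdb', hed⟩
    · exact (h b hb).avoid c hcb d hdD (hdS b hb) e he hed
    · exact (h b' hb').avoid d hdb' c hcD (hcS b' hb') e hed he
    · exact hp.disj c hcD d hdD hne e he hed
  · rcases hcases c hc with ⟨b, hb, hcb, heq⟩ | ⟨hcD, -, heq⟩ <;> rw [heq]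
    exacts [(h b hb).walkSystem.nodup c hcb, hp.nodup c hcD]

/-- The edges of those trails `p c ++ [c]` with `c ∈ D` that contain `e`. -/
def bundle (D : Set E) (p : E → List E) (e : E) : Set E :=
  {g | ∃ c ∈ D, e ∈ c :: p c ∧ g ∈ c :: p c}

theorem WalkSystem.countable_bundle (hp : inc.WalkSystem A o D y p) :
    (bundle D p e).Countable := by
  have hsub : {c | c ∈ D ∧ e ∈ p c}.Subsingleton := by
    rintro c ⟨hc, hec⟩ d ⟨hd, hed⟩
    exact by_contra fun hne => hp.disj c hc d hd hne e hec hed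
  refine (((Set.countable_singleton e).union hsub.countable).biUnion
    (t := fun c _ => {g | g ∈ c :: p c}) fun c _ => (List.finite_toSet _).countable).mono ?_
  rintro g ⟨c, hc, hec, hg⟩
  refine Set.mem_biUnion ?_ hg
  rcases List.mem_cons.1 hec with rfl | hec
  · exact Or.inl rfl
  · exact Or.inr ⟨hc, hec⟩

open Cardinal in
-- After closing `F ∪ Z` under separations and bundles, the fan survives outside the closure and
-- can be augmented there by `b`, changing only countably many paths.
theorem IsInnerEulerian.exists_isRerouting (hE : inc.IsInnerEulerian A o t) (hμ : ℵ₀ ≤ μ)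
    (ho : o ∈ X) (ht : t ∉ X) (hF : #F ≤ μ) (hp : inc.IsFan (A \ F) o X (inc.cut (A \ F) X) p)
    (hb : b ∈ inc.cut A X) (hbF : b ∈ F)
    (hconn : ∀ S : Set E, #S ≤ μ → inc.Reachable (A \ S) (inc.innerEnd o X b) o) (hZ : #Z ≤ μ) :
    ∃ S q, b ∈ S ∧
      inc.IsRerouting (inc.insideEdges A X) o (inc.cut (A \ F) X) (inc.innerEnd o X) p S q ∧
      (usedEdges S q).Countable ∧ Disjoint (usedEdges S q) Z := by
  obtain ⟨F', hFZ, hF', hclosed, hbundle⟩ := inc.exists_isSeparationClosed_superset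
    (A := A) (o := o) hμ (mk_union_le_of_le hμ hF hZ)
    fun e => (le_aleph0_iff_set_countable.2 (WalkSystem.countable_bundle hp (e := e))).trans hμ
  set D := inc.cut (A \ F) X
  set C := inc.cut (A \ F') X with hC
  have hCD : C ⊆ D := fun c hc => ⟨⟨hc.1.1, fun h => hc.1.2 (hFZ (Or.inl h))⟩, hc.2⟩
  have hpC : inc.IsFan (A \ F') o X C p := by
    refine WalkSystem.mono hp (fun c hc e he => ?_) hCD
    have heX := hp.mem_insideEdges (hCD hc) he
    refine ⟨⟨heX.1.1, fun heF' => hc.1.2 ?_⟩, heX.2⟩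
    exact hbundle e heF' ⟨c, hCD hc, List.mem_cons_of_mem _ he, List.mem_cons_self⟩
  have hbC : b ∉ C := fun h => h.1.2 (hFZ (Or.inl hbF))
  obtain ⟨q, B, hq, hB, hqp⟩ := hE.exists_fan_insert ho ht hb
    (hC.trans (Set.sdiff_singleton_eq_self hbC).symm) hpC <| by
      rintro v hv ⟨f, hf, -, hvf⟩
      exact hclosed.infinitelyConnected hμ hF' hf hvf
        ((hv.mono fun e he => he.1.1).symm.trans (hconn F' hF'))
  have hSC : insert b (B ∩ C) ⊆ insert b C := Set.insert_subset_insert Set.inter_subset_right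
  have hqF' : ∀ c ∈ insert b C, ∀ e ∈ q c, e ∉ F' := fun c hc e he =>
    (hq.mem_insideEdges hc he).1.2
  refine ⟨insert b (B ∩ C), q, Set.mem_insert _ _, ⟨hq.mono Set.sdiff_subset hSC, ?_⟩,
    countable_usedEdges ((hB.mono Set.inter_subset_left).insert b), ?_⟩
  · intro c hc d hd hdS e hec hed
    by_cases hdC : d ∈ C
    · have hdB : d ∉ B := fun h => hdS (Or.inr ⟨h, hdC⟩)
      have hcd : c ≠ d := by
        rintro rfl
        exact hdS hc
      rw [← hqp d hdC hdB] at hed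
      exact hq.disj c (hSC hc) d (Or.inr hdC) hcd e hec hed
    · have hdF' : d ∈ F' := by_contra fun h => hdC ⟨⟨hd.1.1, h⟩, hd.2⟩
      exact hqF' c (hSC hc) e hec
        (hbundle d hdF' ⟨d, hd, List.mem_cons_self, List.mem_cons_of_mem _ hed⟩)
  · rw [Set.disjoint_left]
    rintro e ⟨c, hc, he⟩ heZ
    exact hqF' c (hSC hc) e he (hFZ (Or.inr heZ))

theorem IsWave.isFan_of_residue (hw : inc.IsWave (inc.residue A o F) o t X p) :
    inc.IsFan (A \ F) o (X ∩ {v | inc.Reachable (A \ F) v o})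
      (inc.cut (A \ F) (X ∩ {v | inc.Reachable (A \ F) v o})) p := by
  set K := {v | inc.Reachable (A \ F) v o}
  have hcut : ∀ c ∈ inc.cut (A \ F) (X ∩ K), c ∈ inc.cut (inc.residue A o F) X ∧
      inc.innerEnd o (X ∩ K) c = inc.innerEnd o X c := by
    rintro c ⟨hcA, x, y, hxy, hx, hy⟩
    have hc : c ∈ inc.residue A o F := ⟨hcA, x, by simp [hxy], hx.2⟩
    have hyX : y ∉ X := fun h => hy ⟨h, (mem_residue_iff.1 hc).2 y (by simp [hxy])⟩
    exact ⟨⟨hc, x, y, hxy, hx.1, hyX⟩, by rw [innerEnd_eq hxy hx hy, innerEnd_eq hxy hx.1 hyX]⟩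
  refine WalkSystem.mono (WalkSystem.congr (hw.cov.mono subset_rfl fun c hc => (hcut c hc).1)
    (fun c hc => (hcut c hc).2) fun _ _ => rfl) (fun c hc e he => ?_) fun _ h => h
  have heX := hw.cov.mem_insideEdges (hcut c hc).1 he
  exact ⟨heX.1.1, fun v hv => ⟨heX.2 v hv, (mem_residue_iff.1 heX.1).2 v hv⟩⟩

open Cardinal in
-- A wave of the residue is a fan in `A` missing only cut edges in `F`; their inner ends are highly
-- connected to `o`, so pairwise disjoint reroutings turn the fan into a wave of `A`.
theorem IsLoose.residue (hL : inc.IsLoose A o t) (hE : inc.IsInnerEulerian A o t) (hμ : ℵ₀ ≤ μ)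
    (hF : #F ≤ μ) (hcl : inc.IsSeparationClosed A o μ F) :
    inc.IsLoose (inc.residue A o F) o t := by
  intro X₀ p hw e₀ he₀ x₀ hx₀ hx₀o he₀x
  have hp := hw.isFan_of_residue
  set X := X₀ ∩ {v | inc.Reachable (A \ F) v o}
  have ho : o ∈ X := ⟨hw.ho, Reachable.refl _ _⟩
  have ht : t ∉ X := fun h => hw.ht h.1
  obtain ⟨r, hr, hdisj⟩ := exists_pairwise_disjoint_choice (γ := Set E × (E → List E)) hμ
    (I := inc.cut A X ∩ F) ((mk_le_mk_of_subset Set.inter_subset_right).trans hF)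
    (fun b r => b ∈ r.1 ∧ inc.IsRerouting (inc.insideEdges A X) o (inc.cut (A \ F) X)
      (inc.innerEnd o X) p r.1 r.2) (fun r => usedEdges r.1 r.2) <| by
    rintro b ⟨hb, hbF⟩ Z hZ
    obtain ⟨z, hbz, hbX, -⟩ := hb.2.exists_innerEnd (o := o)
    have hconn : ∀ S : Set E, #S ≤ μ → inc.Reachable (A \ S) (inc.innerEnd o X b) o :=
      fun S hS => by_contra fun h =>
        hcl b hbF (inc.innerEnd o X b) (by rw [hbz]; simp) ⟨S, hS, h⟩ hbX.2
    obtain ⟨S, q, hbS, hq, hcount, hqZ⟩ :=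
      hE.exists_isRerouting hμ ho ht hF hp hb hbF hconn hZ
    exact ⟨⟨S, q⟩, ⟨hbS, hq⟩, hcount, hqZ⟩
  have hpA : inc.IsFan A o X (inc.cut (A \ F) X) p := hp.mono Set.sdiff_subset subset_rfl
  obtain ⟨p', hp'⟩ := WalkSystem.exists_of_isRerouting hpA (fun b hb => (hr b hb).2)
    (fun b hb => (hr b hb).1) hdisj
  have hcut : inc.cut (A \ F) X ∪ inc.cut A X ∩ F = inc.cut A X := by
    ext e
    simp only [cut, Set.mem_union, Set.mem_inter_iff, Set.mem_sdiff, Set.mem_ofPred_eq]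
    tauto
  have hx₀K := (mem_residue_iff.1 he₀).2 x₀ (by simp [he₀x])
  exact hL X p' ⟨ho, ht, hcut ▸ hp'⟩ e₀ he₀.1.1 x₀ ⟨hx₀, hx₀K⟩ hx₀o he₀x

end Rerouting

section TransfiniteUnion

variable {V : Type u} {E : Type v} {inc : Incidence V E}
variable {A F X : Set E} {o t : V} {e : E} {κ μ : Cardinal.{v}}

theorem residue_subset_residue_residue :
    inc.residue A o (F ∪ X) ⊆ inc.residue (inc.residue A o F) o X := by
  rintro g ⟨hg, v, hv, l, hl, hw⟩
  have hlF : ∀ e ∈ l, e ∈ inc.residue A o F :=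
    hw.mem_residue fun e he => ⟨(hl e he).1, fun h => (hl e he).2 (Or.inl h)⟩
  have hgF : g ∈ A \ F := ⟨hg.1, fun h => hg.2 (Or.inl h)⟩
  have hvF : inc.Reachable (A \ F) v o := ⟨l, fun e he => (hlF e he).1, hw⟩
  exact ⟨⟨⟨hgF, v, hv, hvF⟩, fun h => hg.2 (Or.inr h)⟩, v, hv, l,
    fun e he => ⟨hlF e he, fun h => (hl e he).2 (Or.inr h)⟩, hw⟩

theorem residue_anti {F' : Set E} (h : F ⊆ F') : inc.residue A o F' ⊆ inc.residue A o F := by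
  rintro g ⟨hg, v, hv, hvo⟩
  exact ⟨⟨hg.1, fun hgF => hg.2 (h hgF)⟩, v, hv,
    hvo.mono fun e he => ⟨he.1, fun heF => he.2 (h heF)⟩⟩

theorem IsLinked.biUnion {ι : Type*} {I : Set ι} {N : ι → Set E}
    (h : ∀ i ∈ I, inc.IsLinked o t (N i)) (hN : I.PairwiseDisjoint N) :
    inc.IsLinked o t (⋃ i ∈ I, N i) := by
  classical
  rcases I.eq_empty_or_nonempty with rfl | ⟨i₀, -⟩
  · exact ⟨fun _ => [], by simp, by simp⟩
  have : Nonempty ι := ⟨i₀⟩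
  choose! L hL hdisj using h
  have hindex : ∀ e ∈ ⋃ i ∈ I, N i, ∃ i, i ∈ I ∧ e ∈ N i := fun e he => by simpa using he
  choose! i hi using hindex
  refine ⟨fun e => L (i e) e, fun e he heo => ?_, fun e he e' he' heo heo' hne g hg hg' => ?_⟩
  · obtain ⟨hl, hlN⟩ := hL (i e) (hi e he).1 e (hi e he).2 heo
    exact ⟨hl, fun g hg => Set.mem_biUnion (hi e he).1 (hlN g hg)⟩
  · have hgN := (hL (i e) (hi e he).1 e (hi e he).2 heo).2 g hg
    have hgN' := (hL (i e') (hi e' he').1 e' (hi e' he').2 heo').2 g hg'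
    have hii : i e = i e' :=
      hN.elim_set (hi e he).1 (hi e' he').1 g hgN hgN'
    refine hdisj (i e) (hi e he).1 e (hi e he).2 e' (hii ▸ (hi e' he').2) heo heo' hne g hg ?_
    simpa only [hii] using hg'

section Filtration

open Cardinal Ordinal

/-- An increasing ordinal-indexed family of sets whose terms before `α` cover `S` as soon as `α`
is nonzero and large enough for its `α`-th term to be allowed the cardinality of `S`. -/
structure IsFiltration (S : Set E) (f : Ordinal.{v} → Set E) : Prop where
  monotone : Monotone f
  mk_le : ∀ β, #(f β) ≤ max ℵ₀ β.card
  exists_mem : ∀ α ≠ 0, #S ≤ max ℵ₀ α.card → ∀ e ∈ S, ∃ γ < α, e ∈ f γ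

theorem exists_isFiltration (S : Set E) : ∃ f, IsFiltration S f := by
  rcases le_or_gt #S ℵ₀ with hS | hS
  · exact ⟨fun _ => S, monotone_const, fun β => hS.trans (le_max_left _ _),
      fun α hα _ e he => ⟨0, pos_iff_ne_zero.2 hα, he⟩⟩
  obtain ⟨r, wo, hr⟩ := Cardinal.exists_ord_eq S
  have hcode : ∀ x : S, typein r x < (#S).ord := fun x => hr ▸ typein_lt_type r x
  refine ⟨fun β => Subtype.val '' {x : S | typein r x ≤ β},
    fun β γ h => Set.image_mono fun x (hx : typein r x ≤ β) => hx.trans h, fun β => ?_,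
    fun α _ hα e he => ?_⟩
  · have hinj : Function.Injective fun x : {x : S | typein r x ≤ β} =>
        (⟨typein r x.1, Set.mem_Iio.2 (Order.lt_add_one_iff.2 x.2)⟩ : Set.Iio (β + 1)) :=
      fun x y hxy => Subtype.ext ((typein_inj r).1 (congrArg Subtype.val hxy))
    have hle := Cardinal.lift_mk_le_lift_mk_of_injective hinj
    rw [Cardinal.mk_Iio_ordinal, Cardinal.lift_id'.{v, v + 1}, Cardinal.lift_le,
      card_add_one] at hle
    refine mk_image_le.trans (hle.trans ?_)
    exact (Cardinal.add_le_max _ _).trans (max_le (max_le (le_max_right _ _)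
      (one_le_aleph0.trans (le_max_left _ _))) (le_max_left _ _))
  · have hSα : #S ≤ α.card := (le_max_iff.1 hα).resolve_left hS.not_ge
    refine ⟨typein r ⟨e, he⟩, (hcode _).trans_le ?_, ⟨e, he⟩, le_refl (typein r _), rfl⟩
    exact (Cardinal.ord_le_ord.2 hSα).trans (Cardinal.ord_card_le α)

end Filtration

open Cardinal in
/-- One step of a transfinite construction of a linked set: `X` is a small linked set disjoint
from `F` and consisting of edges still connected to `o` outside `F`, and outside `F ∪ X` the
vertex `o` is no longer connected to `D`, nor to `Θ e` for `e ∈ F ∪ X`. -/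
structure IsStage (inc : Incidence V E) (A : Set E) (o t : V) (μ : Cardinal.{v}) (D : Set E)
    (Θ : E → Set E) (F X : Set E) : Prop where
  subset : X ⊆ inc.residue A o F
  mk_le : #X ≤ μ
  isLinked : inc.IsLinked o t X
  disjoint_base : Disjoint D (inc.residue A o (F ∪ X))
  disjoint : ∀ e ∈ F ∪ X, Disjoint (Θ e) (inc.residue A o (F ∪ X))

open Cardinal in
theorem HasLinkedClosures.exists_isStage (h : HasLinkedClosures V E μ) (hot : o ≠ t)
    (hL : inc.IsLoose A o t) (hE : inc.IsInnerEulerian A o t) (hμ : ℵ₀ ≤ μ) (hF : #F ≤ μ)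
    (hcl : inc.IsSeparationClosed A o μ F) {D : Set E} (hD : #D ≤ μ) {Θ : E → Set E}
    (hΘ : ∀ e, #(Θ e) ≤ μ) : ∃ X, inc.IsStage A o t μ D Θ F X := by
  obtain ⟨X, hXA, hXμ, hX, hDX, hΘX⟩ := h inc o t hot (inc.residue A o F)
    (D ∪ ⋃ e ∈ F, Θ e) Θ (hL.residue hE hμ hF hcl) (hE.residue hμ hF hcl)
    (mk_union_le_of_le hμ hD (mk_biUnion_le_of_le hμ hF fun e _ => hΘ e)) hΘ
  have hsub := residue_subset_residue_residue (inc := inc) (A := A) (o := o) (F := F) (X := X)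
  refine ⟨X, hXA, hXμ, hX, (hDX.mono_left Set.subset_union_left).mono_right hsub, ?_⟩
  rintro e (he | he)
  · refine (hDX.mono_left (Set.subset_union_of_subset_right ?_ _)).mono_right hsub
    exact Set.subset_biUnion_of_mem (u := Θ) he
  · exact (hΘX e he).mono_right hsub

section Tower

open Cardinal

/-- The union of the sets `N γ` with `γ < α`. -/
def unionBelow (N : Ordinal.{v} → Set E) (α : Ordinal.{v}) : Set E := ⋃ γ ∈ Set.Iio α, N γ

variable {N D : Ordinal.{v} → Set E} {Θ : Ordinal.{v} → E → Set E} {α γ : Ordinal.{v}}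

theorem mem_unionBelow : e ∈ unionBelow N α ↔ ∃ γ < α, e ∈ N γ := by simp [unionBelow]

theorem unionBelow_mono : Monotone (unionBelow N) := fun _ _ h =>
  Set.biUnion_subset_biUnion_left (Set.Iio_subset_Iio h)

theorem unionBelow_union_subset (h : γ < α) : unionBelow N γ ∪ N γ ⊆ unionBelow N α :=
  Set.union_subset (unionBelow_mono h.le) (Set.subset_biUnion_of_mem (u := N) h)

theorem exists_mem_unionBelow_union (he : e ∈ unionBelow N α) (hγ : γ < α) :
    ∃ δ < α, γ ≤ δ ∧ e ∈ unionBelow N δ ∪ N δ := by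
  obtain ⟨β, hβ, heβ⟩ := mem_unionBelow.1 he
  refine ⟨max β γ, max_lt hβ hγ, le_max_right _ _, ?_⟩
  rcases (le_max_left β γ).lt_or_eq with h | h
  · exact Or.inl (mem_unionBelow.2 ⟨β, h, heβ⟩)
  · exact Or.inr (h ▸ heβ)

theorem mk_unionBelow_le
    (hN : ∀ γ < α, inc.IsStage A o t (max ℵ₀ γ.card) (D γ) (Θ γ) (unionBelow N γ) (N γ)) :
    #(unionBelow N α) ≤ max ℵ₀ α.card :=
  Cardinal.mk_biUnion_le_of_le (le_max_right _ _) (le_max_left _ _) _ fun γ hγ =>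
    (hN γ hγ).mk_le.trans (max_le_max le_rfl (Ordinal.card_le_card hγ.le))

theorem disjoint_base_residue_unionBelow
    (hN : ∀ γ < α, inc.IsStage A o t (max ℵ₀ γ.card) (D γ) (Θ γ) (unionBelow N γ) (N γ))
    (hγ : γ < α) : Disjoint (D γ) (inc.residue A o (unionBelow N α)) :=
  (hN γ hγ).disjoint_base.mono_right (residue_anti (unionBelow_union_subset hγ))

theorem disjoint_residue_unionBelow
    (hN : ∀ γ < α, inc.IsStage A o t (max ℵ₀ γ.card) (D γ) (Θ γ) (unionBelow N γ) (N γ))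
    (hΘ : ∀ e, Monotone fun γ => Θ γ e) (he : e ∈ unionBelow N α) (hγ : γ < α) :
    Disjoint (Θ γ e) (inc.residue A o (unionBelow N α)) := by
  obtain ⟨δ, hδ, hγδ, heδ⟩ := exists_mem_unionBelow_union he hγ
  exact ((hN δ hδ).disjoint e heδ).mono (hΘ e hγδ)
    (residue_anti (unionBelow_union_subset hδ))

theorem unionBelow_subset
    (hN : ∀ γ < α, inc.IsStage A o t (max ℵ₀ γ.card) (D γ) (Θ γ) (unionBelow N γ) (N γ)) :
    unionBelow N α ⊆ A :=
  Set.iUnion₂_subset fun γ hγ _ he => ((hN γ hγ).subset he).1.1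

theorem isLinked_unionBelow
    (hN : ∀ γ < α, inc.IsStage A o t (max ℵ₀ γ.card) (D γ) (Θ γ) (unionBelow N γ) (N γ)) :
    inc.IsLinked o t (unionBelow N α) := by
  refine IsLinked.biUnion (fun γ hγ => (hN γ hγ).isLinked) ?_
  have hlt : ∀ γ < α, ∀ δ < α, γ < δ → Disjoint (N γ) (N δ) := fun γ _ δ hδ h =>
    Set.disjoint_left.2 fun e heγ heδ =>
      ((hN δ hδ).subset heδ).1.2 (mem_unionBelow.2 ⟨γ, h, heγ⟩)
  intro γ hγ δ hδ hne
  rcases hne.lt_or_gt with h | h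
  · exact hlt γ hγ δ hδ h
  · exact (hlt δ hδ γ hγ h).symm

theorem isSeparationClosed_unionBelow
    (hN : ∀ γ < α, inc.IsStage A o t (max ℵ₀ γ.card) (D γ) (Θ γ) (unionBelow N γ) (N γ))
    (hΘ : ∀ e, Monotone fun γ => Θ γ e) {S : V → Set E}
    (hS : ∀ v S', ¬ inc.Reachable (A \ S') v o → ¬ inc.Reachable (A \ S v) v o ∧ #(S v) ≤ #S')
    {s : V → Ordinal.{v} → Set E} (hs : ∀ v, IsFiltration (S v) (s v))
    (hsΘ : ∀ γ e, ∀ v ∈ inc e, s v γ ⊆ Θ γ e) :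
    inc.IsSeparationClosed A o (max ℵ₀ α.card) (unionBelow N α) := by
  rintro f hf v hv ⟨S', hS'μ, hS'⟩ ⟨l, hl, hw⟩
  obtain ⟨hsep, hmin⟩ := hS v S' hS'
  have hα : α ≠ 0 := by
    rintro rfl
    obtain ⟨γ, hγ, -⟩ := mem_unionBelow.1 hf
    exact not_lt_bot hγ
  refine hsep ⟨l, fun g hg => ⟨(hl g hg).1, fun hgS => ?_⟩, hw⟩
  obtain ⟨γ, hγ, hgs⟩ := (hs v).exists_mem α hα (hmin.trans hS'μ) g hgS
  exact Set.disjoint_left.1 (disjoint_residue_unionBelow hN hΘ hf hγ) (hsΘ γ f v hv hgs)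
    (hw.mem_residue hl g hg)

end Tower

open Cardinal in
theorem exists_minimal_separator (inc : Incidence V E) (A : Set E) (o v : V) :
    ∃ S : Set E, ∀ S', ¬ inc.Reachable (A \ S') v o →
      ¬ inc.Reachable (A \ S) v o ∧ #S ≤ #S' := by
  by_cases h : ∃ S', ¬ inc.Reachable (A \ S') v o
  · obtain ⟨S, hS, hmin⟩ := WellFounded.has_min (InvImage.wf (fun S : Set E => #S) Cardinal.lt_wf)
      {S' | ¬ inc.Reachable (A \ S') v o} h
    exact ⟨S, fun S' hS' => ⟨hS, not_lt.1 (hmin S' hS')⟩⟩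
  · exact ⟨∅, fun S' hS' => absurd ⟨S', hS'⟩ h⟩

open Cardinal in
-- The linked set is the union of `κ.ord` stages, each obtained from a smaller cardinal in the
-- residue of the earlier ones. Stage `γ` takes care of the `γ`-th part of a filtration of every
-- requested set, and of every minimal separator, so that the earlier stages are separation closed.
theorem hasLinkedClosures_of_lt (hκ : ℵ₀ < κ)
    (ih : ∀ μ : Cardinal.{v}, ℵ₀ ≤ μ → μ < κ → HasLinkedClosures V E μ) :
    HasLinkedClosures V E κ := by
  intro inc o t hot A D Φ hL hE hD hΦ
  choose S hS using exists_minimal_separator inc A o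
  choose s hs using fun v => exists_isFiltration (S v)
  choose φ hφ using fun e => exists_isFiltration (Φ e)
  obtain ⟨d, hd⟩ := exists_isFiltration D
  let Θ : Ordinal.{v} → E → Set E := fun γ e => φ e γ ∪ {g | ∃ v ∈ inc e, g ∈ s v γ}
  have hΘmono : ∀ e, Monotone fun γ => Θ γ e := fun e γ δ h =>
    Set.union_subset_union ((hφ e).monotone h) fun g ⟨v, hv, hg⟩ => ⟨v, hv, (hs v).monotone h hg⟩
  have hΘ : ∀ γ e, #(Θ γ e) ≤ max ℵ₀ γ.card := fun γ e =>
    mk_union_le_of_le (le_max_left _ _) ((hφ e).mk_le γ)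
      (mk_incident_le (le_max_left _ _) (fun v => (hs v).mk_le γ) e)
  obtain ⟨N, hN⟩ := exists_wellFounded_choice (wellFounded_lt (α := Ordinal.{v}))
    fun γ (N : ∀ δ, δ < γ → Set E) X =>
      inc.IsStage A o t (max ℵ₀ γ.card) (d γ) (Θ γ) (⋃ δ, ⋃ h : δ < γ, N δ h) X
  have hstage : ∀ γ < κ.ord,
      inc.IsStage A o t (max ℵ₀ γ.card) (d γ) (Θ γ) (unionBelow N γ) (N γ) := by
    intro γ
    induction γ using WellFoundedLT.induction with
    | _ γ ihγ =>
      intro hγ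
      have hlt : ∀ δ < γ, inc.IsStage A o t (max ℵ₀ δ.card) (d δ) (Θ δ) (unionBelow N δ) (N δ) :=
        fun δ hδ => ihγ δ hδ (hδ.trans hγ)
      have hγκ : max ℵ₀ γ.card < κ := max_lt hκ (Cardinal.lt_ord.1 hγ)
      exact hN γ ((ih _ (le_max_left _ _) hγκ).exists_isStage hot hL hE (le_max_left _ _)
        (mk_unionBelow_le hlt) (isSeparationClosed_unionBelow hlt hΘmono hS hs
          fun γ e v hv g hg => Or.inr ⟨v, hv, hg⟩) (hd.mk_le γ) (hΘ γ))
  have hκ0 : κ.ord ≠ 0 := by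
    simpa using (aleph0_pos.trans hκ).ne'
  have hκmax : max ℵ₀ κ.ord.card = κ := by simp [hκ.le]
  refine ⟨unionBelow N κ.ord, unionBelow_subset hstage, (mk_unionBelow_le hstage).trans_eq hκmax,
    isLinked_unionBelow hstage, Set.disjoint_left.2 fun g hg => ?_,
    fun e he => Set.disjoint_left.2 fun g hg => ?_⟩
  · obtain ⟨γ, hγ, hgγ⟩ := hd.exists_mem _ hκ0 (hκmax.symm ▸ hD) g hg
    exact Set.disjoint_left.1 (disjoint_base_residue_unionBelow hstage hγ) hgγ
  · obtain ⟨γ, hγ, hgγ⟩ := (hφ e).exists_mem _ hκ0 (hκmax.symm ▸ hΦ e) g hg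
    exact Set.disjoint_left.1 (disjoint_residue_unionBelow hstage hΘmono he hγ) (Or.inl hgγ)

open Cardinal in
theorem hasLinkedClosures (hκ : ℵ₀ ≤ κ) : HasLinkedClosures V E κ := by
  induction κ using WellFoundedLT.induction with
  | _ κ ih =>
    rcases hκ.eq_or_lt with rfl | h
    · exact hasLinkedClosures_aleph0
    · exact hasLinkedClosures_of_lt h fun μ hμ hμκ => ih μ hμκ hμ

open Cardinal in
theorem IsLoose.isLinked (hL : inc.IsLoose A o t) (hE : inc.IsInnerEulerian A o t) (hot : o ≠ t) :
    inc.IsLinked o t A := by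
  obtain ⟨F, hFA, -, hF, hdisj, -⟩ := hasLinkedClosures (le_max_left ℵ₀ #E) inc o t hot A A
    (fun _ => ∅) hL hE ((mk_set_le A).trans (le_max_right _ _)) (by simp)
  refine hF.mono hFA fun e he heo => by_contra fun heF => ?_
  exact Set.disjoint_left.1 hdisj he ⟨⟨he, heF⟩, o, heo.mem, Reachable.refl _ _⟩

end TransfiniteUnion

section TwoDeletions

variable {V : Type u} {E : Type v} {inc : Incidence V E}
variable {A C F : Set E} {o t : V} {Y : Set V} {y : E → V} {p : E → List E} {d d' e f g h : E}
  {l l' : List E}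

/-- The edges in `A` that join `o` to another vertex. -/
def edgesAt (inc : Incidence V E) (A : Set E) (o : V) : Set E := {e | e ∈ A ∧ inc.IsEdgeAt o e}

/-- The edges in `A` that are not incident with `o`. -/
def edgesAvoiding (inc : Incidence V E) (A : Set E) (o : V) : Set E := {e | e ∈ A ∧ o ∉ inc e}

open Classical in
/-- The end-vertex other than `o` of an edge at `o`, with junk value `o` for any other edge. -/
noncomputable def otherEnd (inc : Incidence V E) (o : V) (e : E) : V :=
  if h : inc.IsEdgeAt o e then h.choose else o

theorem IsEdgeAt.eq_otherEnd (h : inc.IsEdgeAt o e) : inc e = s(o, inc.otherEnd o e) := by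
  rw [otherEnd, dif_pos h]
  exact h.choose_spec.1

theorem IsEdgeAt.otherEnd_ne (h : inc.IsEdgeAt o e) : inc.otherEnd o e ≠ o := by
  rw [otherEnd, dif_pos h]
  exact h.choose_spec.2

theorem IsBarrier.exists_entry_inside (hY : inc.IsBarrier A o C p Y)
    (hp : inc.WalkSystem A o C y p) (hg : g ∈ A) (hc : inc.Crosses Y g) :
    ∃ c ∈ C, ∃ a b u v, p c = a ++ g :: b ∧ inc g = s(u, v) ∧ u ∉ Y ∧ inc.IsWalk v b (y c) ∧
      y c ∈ Y ∧ (∀ e ∈ a, inc.Inside Yᶜ e) ∧ ∀ e ∈ b, inc.Inside Y e := by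
  obtain ⟨c, hcC, a, b, u, v, hpc, ha, hg, hu, hv, haY⟩ := hY.exists_entry hp hg hc
  have hw := hp.walk c hcC
  rw [hpc] at hw
  obtain ⟨u', hau, hw⟩ := hw.exists_of_append
  obtain rfl := ha.end_unique hau
  obtain ⟨v', hg', hb⟩ := hw.exists_of_cons
  obtain rfl := Sym2.congr_right.1 (hg.symm.trans hg')
  have hag : inc.IsWalk o (a ++ [g]) v := ha.append (IsWalk.single hg)
  refine ⟨c, hcC, a, b, u, v, hpc, hg, hu, hb,
    hY.later c hcC (a ++ [g]) b [] v (y c) (by simp [hpc]) hag hv hb, haY, fun e he x hx => ?_⟩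
  obtain ⟨b₁, b₂, rfl, hb₁, -⟩ := hb.exists_split he hx
  exact hY.later c hcC (a ++ [g]) b₁ b₂ v x (by simp [hpc]) hag hv hb₁

/-- `l` is empty, or it consists of an edge `c ∈ C` followed by the reversal of the walk `p c` up to
the edge `d`, through which `p c` enters `Y` for the first and last time. -/
def IsReturn (inc : Incidence V E) (C : Set E) (p : E → List E) (Y : Set V) (d : E)
    (l : List E) : Prop :=
  l = [] ∨ ∃ c ∈ C, ∃ a b, p c = a ++ d :: b ∧ l = c :: b.reverse ∧ inc.Crosses Y d ∧
    (∀ e ∈ a, inc.Inside Yᶜ e) ∧ ∀ e ∈ b, inc.Inside Y e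

theorem IsReturn.mem_of_mem (hl : inc.IsReturn C p Y d l)
    (hp : inc.WalkSystem (inc.edgesAvoiding A o) t C y p) (he : e ∈ l) (heo : o ∈ inc e) :
    e ∈ C := by
  rcases hl with rfl | ⟨c, hc, a, b, hpc, rfl, -⟩
  · simp at he
  rcases List.mem_cons.1 he with rfl | he
  · exact hc
  · exact absurd heo (hp.mem c hc e (by simp [hpc, List.mem_reverse.1 he])).2

theorem IsReturn.eq_of_mem (hl : inc.IsReturn C p Y d l) (hl' : inc.IsReturn C p Y d' l')
    (hp : inc.WalkSystem (inc.edgesAvoiding A o) t C y p) (hC : ∀ c ∈ C, o ∈ inc c)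
    (he : e ∈ l) (he' : e ∈ l') : d = d' := by
  rcases hl with rfl | ⟨c, hc, a, b, hpc, rfl, -, ha, hb⟩
  · simp at he
  rcases hl' with rfl | ⟨c', hc', a', b', hpc', rfl, hd', -⟩
  · simp at he'
  have hmem : e = c ∨ e ∈ p c := (List.mem_cons.1 he).imp_right fun h => by
    simp [hpc, List.mem_reverse.1 h]
  have hmem' : e = c' ∨ e ∈ p c' := (List.mem_cons.1 he').imp_right fun h => by
    simp [hpc', List.mem_reverse.1 h]
  have hcc' : c = c' := by
    by_contra hne
    rcases hmem with rfl | hmem <;> rcases hmem' with rfl | hmem'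
    · exact hne rfl
    · exact (hp.mem c' hc' e hmem').2 (hC e hc)
    · exact (hp.mem c hc e hmem).2 (hC e hc')
    · exact hp.disj c hc c' hc' hne e hmem hmem'
  subst hcc'
  have hd'c : d' ∈ a ++ d :: b := by simp [← hpc, hpc']
  obtain ⟨x, z, hxz, hx, -⟩ := id hd'
  rcases List.mem_append.1 hd'c with h | h
  · exact absurd hx (ha d' h x (by simp [hxz]))
  · rcases List.mem_cons.1 h with h | h
    · exact h.symm
    · exact absurd hd' (hb d' h).not_crosses

theorem IsBarrier.exists_isReturn (hY : inc.IsBarrier (inc.edgesAvoiding (A \ F) o) t C p Y)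
    (hp : inc.WalkSystem (inc.edgesAvoiding (A \ F) o) t C (inc.otherEnd o) p)
    (hC : C ⊆ inc.edgesAt A o) (hd : d ∈ inc.cut A (insert o Y) \ F) :
    ∃ l, inc.IsWalk o l (inc.innerEnd o (insert o Y) d) ∧
      (∀ e ∈ l, e ∈ inc.insideEdges A (insert o Y)) ∧ inc.IsReturn C p Y d l := by
  obtain ⟨⟨hdA, x, z, hxz, hx, hz⟩, hdF⟩ := hd
  rw [innerEnd_eq hxz hx hz]
  obtain ⟨hzo, hzY⟩ : z ≠ o ∧ z ∉ Y := by simpa using hz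
  rcases eq_or_ne x o with rfl | hxo
  · exact ⟨[], IsWalk.nil x, by simp, Or.inl rfl⟩
  have hxY : x ∈ Y := hx.resolve_left hxo
  have hdY : inc.Crosses Y d := ⟨x, z, hxz, hxY, hzY⟩
  have hdo : o ∉ inc d := by simp [hxz, hxo.symm, hzo.symm]
  obtain ⟨c, hc, a, b, u, v, hpc, huv, hu, hb, hcY, haY, hbY⟩ :=
    hY.exists_entry_inside hp ⟨⟨hdA, hdF⟩, hdo⟩ hdY
  obtain rfl : v = x := by
    rcases Sym2.eq_iff.1 (huv.symm.trans hxz) with ⟨rfl, -⟩ | ⟨-, h⟩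
    · exact absurd hxY hu
    · exact h
  refine ⟨c :: b.reverse, IsWalk.cons (hC hc).2.eq_otherEnd hb.reverse, fun e he => ?_,
    Or.inr ⟨c, hc, a, b, hpc, rfl, hdY, haY, hbY⟩⟩
  rcases List.mem_cons.1 he with rfl | he
  · exact ⟨(hC hc).1, (inside_iff (hC hc).2.eq_otherEnd).2 ⟨Or.inl rfl, Or.inr hcY⟩⟩
  · have heb := List.mem_reverse.1 he
    exact ⟨(hp.mem c hc e (by simp [hpc, heb])).1.1, (hbY e heb).mono (Set.subset_insert o Y)⟩

-- The walks of the system, reversed, start at `o` with an edge in `C`. Cut off where they leave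
-- `Y`, they form a fan that misses `e` and all but two edges of a cut.
theorem IsLoose.not_isBarrier_edgesAvoiding (hL : inc.IsLoose A o t)
    (hE : inc.IsInnerEulerian A o t) (hot : o ≠ t)
    (hp : inc.WalkSystem (inc.edgesAvoiding (A \ {f, h}) o) t C (inc.otherEnd o) p)
    (hC : C ⊆ inc.edgesAt A o) (he : e ∈ inc.edgesAt A o) (heC : e ∉ C)
    (heY : inc.otherEnd o e ∈ Y) :
    ¬ inc.IsBarrier (inc.edgesAvoiding (A \ {f, h}) o) t C p Y := by
  intro hY
  have ht : t ∉ insert o Y := by simp [hot.symm, hY.notmem]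
  choose! l hwalk hinside hreturn using
    fun d (hd : d ∈ inc.cut A (insert o Y) \ {f, h}) => hY.exists_isReturn hp hC hd
  have hoC : ∀ c ∈ C, o ∈ inc c := fun c hc => (hC hc).2.mem
  obtain ⟨q, hq, -, hql⟩ := exists_paths_of_walks hwalk hinside fun c hc d hd hne e hec hed =>
    hne ((hreturn c hc).eq_of_mem (hreturn d hd) hp hoC hec hed)
  have hcut : inc.cut A (insert o Y) ⊆ insert f (insert h (inc.cut A (insert o Y) \ {f, h})) := by
    intro d hd
    by_cases hdfh : d ∈ ({f, h} : Set E)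
    · rcases hdfh with rfl | rfl <;> simp
    · exact Or.inr (Or.inr ⟨hd, hdfh⟩)
  obtain ⟨d, hd, hde⟩ := hL.exists_mem_of_fan hE (Set.mem_insert o Y) ht hq hcut he.1 (Or.inr heY)
    he.2.otherEnd_ne he.2.eq_otherEnd
  exact heC ((hreturn d hd).mem_of_mem hp (hql d hd e hde) he.2.mem)

theorem IsLoose.exists_walkSystem_insert (hL : inc.IsLoose A o t)
    (hE : inc.IsInnerEulerian A o t) (hot : o ≠ t)
    (hp : inc.WalkSystem (inc.edgesAvoiding (A \ {f, h}) o) t C (inc.otherEnd o) p)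
    (hC : C ⊆ inc.edgesAt A o) (he : e ∈ inc.edgesAt A o) (heC : e ∉ C) :
    ∃ q, inc.WalkSystem (inc.edgesAvoiding (A \ {f, h}) o) t (insert e C) (inc.otherEnd o) q := by
  rcases hp.exists_augmented_or_barrier (inc.otherEnd o e) with ⟨p', hp', hreach⟩ | ⟨Y, heY, hY⟩
  · exact (hp'.exists_insert heC hreach).imp fun q hq => hq.1
  · exact absurd hY (hL.not_isBarrier_edgesAvoiding hE hot hp hC he heC heY)

theorem IsLink.isWalk_otherEnd (hl : inc.IsLink o t e l) :
    inc.IsWalk (inc.otherEnd o e) l t := by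
  obtain ⟨z, hz, -, hw, -⟩ := id hl
  rwa [Sym2.congr_right.1 (hl.isEdgeAt.eq_otherEnd.symm.trans hz)]

theorem IsLinked.exists_walkSystem_sdiff (hA : inc.IsLinked o t A) (hF : F.Finite) :
    ∃ C ⊆ inc.edgesAt A o, (inc.edgesAt A o \ C).Finite ∧
      ∃ q, inc.WalkSystem (inc.edgesAvoiding (A \ F) o) t C (inc.otherEnd o) q := by
  obtain ⟨L, hL, hdisj⟩ := hA
  refine ⟨{e | e ∈ inc.edgesAt A o ∧ ∀ g ∈ L e, g ∉ F}, fun e he => he.1, ?_, ?_⟩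
  · have hfin : ∀ g, {e | e ∈ inc.edgesAt A o ∧ g ∈ L e}.Finite := fun g =>
      Set.Subsingleton.finite fun c ⟨hc, hgc⟩ d ⟨hd, hgd⟩ =>
        by_contra fun hne => hdisj c hc.1 d hd.1 hc.2 hd.2 hne g hgc hgd
    refine (hF.biUnion fun g _ => hfin g).subset fun e ⟨he, heC⟩ => ?_
    obtain ⟨g, hg, hgF⟩ : ∃ g ∈ L e, g ∈ F := by
      by_contra! hLF
      exact heC ⟨he, hLF⟩
    exact Set.mem_biUnion hgF ⟨he, hg⟩
  · have hmem : ∀ e ∈ {e | e ∈ inc.edgesAt A o ∧ ∀ g ∈ L e, g ∉ F}, ∀ g ∈ (L e).reverse,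
        g ∈ inc.edgesAvoiding (A \ F) o := fun e he g hg => by
      obtain ⟨⟨z, -, -, -, hav⟩, hLA⟩ := hL e he.1.1 he.1.2
      exact ⟨⟨hLA g (List.mem_reverse.1 hg), he.2 g (List.mem_reverse.1 hg)⟩,
        hav g (List.mem_reverse.1 hg)⟩
    obtain ⟨q, hq, -⟩ := exists_paths_of_walks
      (fun e he => (hL e he.1.1 he.1.2).1.isWalk_otherEnd.reverse) hmem
      fun c hc d hd hne g hgc hgd => hdisj c hc.1.1 d hd.1.1 hc.1.2 hd.1.2 hne g
        (List.mem_reverse.1 hgc) (List.mem_reverse.1 hgd)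
    exact ⟨q, hq⟩

theorem WalkSystem.isLinked (hF : F ⊆ A)
    (hq : inc.WalkSystem (inc.edgesAvoiding F o) t (inc.edgesAt A o) (inc.otherEnd o) p) :
    inc.IsLinked o t F := by
  refine ⟨fun e => (p e).reverse, fun e he heo => ?_, fun e he e' he' heo heo' hne g hg hg' => ?_⟩
  · have hmem : ∀ g ∈ (p e).reverse, g ∈ inc.edgesAvoiding F o := fun g hg =>
      hq.mem e ⟨hF he, heo⟩ g (List.mem_reverse.1 hg)
    exact ⟨⟨inc.otherEnd o e, heo.eq_otherEnd, heo.otherEnd_ne,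
      (hq.walk e ⟨hF he, heo⟩).reverse, fun g hg => (hmem g hg).2⟩, fun g hg => (hmem g hg).1⟩
  · exact hq.disj e ⟨hF he, heo⟩ e' ⟨hF he', heo'⟩ hne g (List.mem_reverse.1 hg)
      (List.mem_reverse.1 hg')

-- Only finitely many of the links of `A` use `f` or `h`; these are restored one at a time.
theorem IsLoose.isLinked_sdiff_pair (hL : inc.IsLoose A o t) (hE : inc.IsInnerEulerian A o t)
    (hot : o ≠ t) (f h : E) : inc.IsLinked o t (A \ {f, h}) := by
  obtain ⟨C, hCA, hfin, hC⟩ :=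
    (hL.isLinked hE hot).exists_walkSystem_sdiff (Set.toFinite ({f, h} : Set E))
  have hextend : ∀ M : Set E, M.Finite → M ⊆ inc.edgesAt A o →
      ∃ q, inc.WalkSystem (inc.edgesAvoiding (A \ {f, h}) o) t (C ∪ M) (inc.otherEnd o) q := by
    intro M hM
    induction M, hM using Set.Finite.induction_on with
    | empty =>
      intro _
      rw [Set.union_empty]
      exact hC
    | @insert e M _ _ ih =>
      intro hMA
      obtain ⟨heA, hMA⟩ := Set.insert_subset_iff.1 hMA
      obtain ⟨q, hq⟩ := ih hMA
      rw [Set.union_insert]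
      by_cases he : e ∈ C ∪ M
      · exact ⟨q, by rwa [Set.insert_eq_of_mem he]⟩
      · exact hL.exists_walkSystem_insert hE hot hq (Set.union_subset hCA hMA) heA he
  obtain ⟨q, hq⟩ := hextend _ hfin Set.sdiff_subset
  rw [Set.union_sdiff_cancel hCA] at hq
  exact hq.isLinked Set.sdiff_subset

end TwoDeletions

section OfMultigraph

variable {V : Type u} {E : Type v} {inc : Incidence V E} {G : Multigraph V E}
variable {A D F : Set E} {B T X Y Z : Set V} {o s t u w x y : V} {p : E → List E} {e : E}
  {l : List E}

theorem innerEnd_contract (ht : t ∉ X) (hc : inc.Crosses (X \ B) e) :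
    (inc.contract t B).innerEnd o X e = inc.innerEnd o (X \ B) e := by
  classical
  obtain ⟨x, y, hxy, hx, hy⟩ := hc
  rw [innerEnd_eq hxy hx hy]
  refine innerEnd_eq (y := if y ∈ B then t else y) ?_ hx.1 ?_
  · rw [contract_eq hxy, if_neg hx.2]
  · split_ifs with hyB
    exacts [ht, fun hyX => hy ⟨hyX, hyB⟩]

theorem IsFan.of_contract (hp : (inc.contract t B).IsFan A o X ((inc.contract t B).cut A X) p)
    (ht : t ∉ X) : inc.IsFan A o (X \ B) (inc.cut A (X \ B)) p := by
  unfold IsFan at hp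
  rw [cut_contract_of_notMem ht] at hp
  have hinside : ∀ c ∈ inc.cut A (X \ B), ∀ e ∈ p c, e ∈ inc.insideEdges A (X \ B) :=
    fun c hc e he => ⟨(hp.mem c hc e he).1, (inside_contract_of_notMem ht).1 (hp.mem c hc e he).2⟩
  refine ⟨fun c hc => ?_, hinside, hp.disj, hp.nodup⟩
  have hwalk := hp.walk c hc
  rw [innerEnd_contract ht hc.2] at hwalk
  exact hwalk.congr fun e he =>
    (contract_eq_of_inside_compl ((hinside c hc e he).2.mono fun v hv => hv.2)).symm

/-- The vertices from which `B` can be reached by a walk inside `Y`. -/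
def reachInside (inc : Incidence V E) (Y B : Set V) : Set V :=
  {v | ∃ b ∈ B, inc.Reachable {e | inc.Inside Y e} v b}

theorem subset_reachInside : B ⊆ inc.reachInside Y B :=
  fun b hb => ⟨b, hb, .refl _ b⟩

theorem reachInside_subset (hB : B ⊆ Z) (hZ : ∀ e, inc.Crosses Z e → ¬ inc.Inside Y e) :
    inc.reachInside Y B ⊆ Z := by
  rintro v ⟨b, hb, hvb⟩
  obtain ⟨l, hl, hbv⟩ := hvb.symm
  exact (hbv.inside_of_not_crosses (hB hb) fun e he hc => hZ e hc (hl e he)).1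

theorem reachInside_subset_self (hB : B ⊆ Y) : inc.reachInside Y B ⊆ Y :=
  reachInside_subset hB fun _ hc hi => hi.not_crosses hc

theorem mem_reachInside_of_edge (hB : B ⊆ Y) (hx : x ∈ Y) (hy : y ∈ inc.reachInside Y B)
    (he : inc e = s(x, y)) : x ∈ inc.reachInside Y B := by
  have hyY : y ∈ Y := reachInside_subset_self hB hy
  obtain ⟨b, hb, hyb⟩ := hy
  exact ⟨b, hb, (Reachable.of_edge ((inside_iff he).2 ⟨hx, hyY⟩) he).trans hyb⟩

-- First the side of `s` is shrunk to what `s` reaches inside `X`, then the side of `B` to what `B`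
-- reaches outside of that.
theorem exists_isMinSepCut_subset {C : Set E} (hC : G.SepCut {s} B C) :
    ∃ D ⊆ C, G.IsMinSepCut {s} B D := by
  obtain ⟨X, hsX, hBX, rfl⟩ := hC
  set S := reachInside G.inc X {s}
  have hSX : S ⊆ X := reachInside_subset_self hsX
  have hBS : B ⊆ Sᶜ := fun b hb hbS => hBX b hb (hSX hbS)
  set R := reachInside G.inc Sᶜ B
  have hRS : R ⊆ Sᶜ := reachInside_subset_self hBS
  have hends : ∀ d ∈ G.cut Rᶜ, ∃ x y, G.inc d = s(x, y) ∧ x ∈ S ∧ y ∈ R ∧ y ∉ X := by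
    rintro d ⟨x, y, hxy, hx, hy⟩
    have hyR : y ∈ R := not_not.1 hy
    have hxS : x ∈ S := by_contra fun hxS => hx (mem_reachInside_of_edge hBS hxS hyR hxy)
    exact ⟨x, y, hxy, hxS, hyR, fun hyX =>
      hRS hyR (mem_reachInside_of_edge hsX hyX hxS (hxy.trans Sym2.eq_swap))⟩
  refine ⟨G.cut Rᶜ, fun d hd => ?_, ⟨Rᶜ, ?_, fun b hb h => h (subset_reachInside hb), rfl⟩, ?_⟩
  · obtain ⟨x, y, hxy, hx, -, hy⟩ := hends d hd
    exact ⟨x, y, hxy, hSX hx, hy⟩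
  · exact subset_reachInside.trans (Set.subset_compl_comm.1 hRS)
  · rintro _ ⟨Z, hsZ, hBZ, rfl⟩ hZR
    have hSZ : S ⊆ Z := reachInside_subset hsZ fun g hg hi => by
      obtain ⟨x, y, hxy, -, -, hyX⟩ := hends g (hZR hg)
      exact hyX ((inside_iff hxy).1 hi).2
    have hRZ : R ⊆ Zᶜ := reachInside_subset hBZ fun g ⟨x, y, hxy, hx, hy⟩ hi => by
      obtain ⟨a, b, hab, haS, -, -⟩ :=
        hends g (hZR ⟨y, x, hxy.trans Sym2.eq_swap, not_not.1 hy, hx⟩)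
      exact ((inside_iff hab).1 hi).1 haS
    refine hZR.antisymm fun d hd => ?_
    obtain ⟨x, y, hxy, hx, hy, -⟩ := hends d hd
    exact ⟨x, y, hxy, hSZ hx, hRZ hy⟩

theorem IsPath.exists_walk (h : IsPath G.inc u l w) :
    ∃ q : G.Walk u w, q.edges = l ∧ q.support.Nodup ∧
      ∀ x ∈ q.support, x = w ∨ ∃ g ∈ l, x ∈ G.inc g := by
  induction h with
  | nil v =>
    exact ⟨.nil v, rfl, List.nodup_singleton v, fun x hx => Or.inl (List.mem_singleton.1 hx)⟩
  | @cons u v w e l he h hne hav ih =>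
    obtain ⟨q, rfl, hnodup, hsupp⟩ := ih
    refine ⟨.cons e he q, rfl, List.nodup_cons.2 ⟨fun hu => ?_, hnodup⟩, fun x hx => ?_⟩
    · exact (hsupp u hu).elim hne fun ⟨g, hg, hug⟩ => hav g hg hug
    · rcases List.mem_cons.1 hx with rfl | hx
      · exact Or.inr ⟨e, List.mem_cons_self, by simp [he]⟩
      · exact (hsupp x hx).imp_right fun ⟨g, hg, hxg⟩ => ⟨g, List.mem_cons_of_mem e hg, hxg⟩

theorem IsFan.exists_isWave (hp : IsFan G.inc A s X D p) (hDX : D ⊆ G.cut X)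
    (hD : G.IsMinSepCut {s} B D) : ∃ W, G.IsWave s B W ∧ G.lastEdges W = D := by
  obtain ⟨q, hq, hpath, -⟩ := exists_paths_of_walks hp.walk hp.mem hp.disj
  have hsPath : ∀ d : D, ∃ P : G.SPath s, P.walk.edges = q d.1 ++ [d.1] := by
    rintro ⟨d, hd⟩
    obtain ⟨y, hdy, hinner, hy⟩ := Crosses.exists_innerEnd (o := s) (hDX hd)
    obtain ⟨P, hP, hnodup, -⟩ := ((hpath d hd).append_cons_of_inside
      (fun g hg => (hq.mem d hd g hg).2) hinner hdy hy (.nil y) (by simp)).exists_walk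
    exact ⟨⟨y, P, hnodup, by simp [hP]⟩, hP⟩
  choose P hP using hsPath
  have hlast : G.lastEdges (Set.range P) = D := by
    ext e
    simp [Multigraph.lastEdges, hP]
  refine ⟨Set.range P, ⟨?_, hlast.symm ▸ hD⟩, hlast⟩
  rintro _ ⟨⟨c, hc⟩, rfl⟩ _ ⟨⟨d, hd⟩, rfl⟩ hne e hec hed
  have hcd : c ≠ d := fun h => hne (by subst h; rfl)
  simp only [hP, List.mem_append, List.mem_singleton] at hec hed
  rcases hec with hec | rfl <;> rcases hed with hed | rfl
  · exact hq.disj c hc d hd hcd e hec hed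
  · exact (hq.mem c hc e hec).2.not_crosses (hDX hd)
  · exact (hq.mem d hd e hed).2.not_crosses (hDX hc)
  · exact hcd rfl

theorem isInnerEulerian_contract
    (hG : ∀ X : Set V, X ⊆ Tᶜ → ¬ ((G.cut X).Finite ∧ Odd (G.cut X).ncard)) :
    (contract G.inc t (T \ {s})).IsInnerEulerian Set.univ s t := by
  intro Y hsY htY hfin
  have hcut : (contract G.inc t (T \ {s})).cut Set.univ Y = G.cut (Y \ (T \ {s})) := by
    rw [cut_contract_of_notMem htY]
    exact Set.ext fun e => and_iff_right trivial
  rw [hcut] at hfin ⊢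
  refine Nat.not_odd_iff_even.1 fun hodd => hG _ (fun v hv hvT => hv.2 ⟨hvT, ?_⟩) ⟨hfin, hodd⟩
  rintro rfl
  exact hsY hv.1

theorem isLoose_contract (hsB : s ∉ B)
    (hnowave : ∀ W : Set (G.SPath s), G.IsWave s B W → G.lastEdges W = G.inci s) :
    (contract G.inc t B).IsLoose Set.univ s t := by
  intro X p hX e _ x hx _ he
  have hinside : Inside G.inc (X \ B) e :=
    (inside_contract_of_notMem hX.ht).1 ((inside_iff he).2 ⟨hX.ho, hx⟩)
  have hes : s ∈ G.inc e := by
    rw [← contract_eq_of_inside_compl (o := t) (hinside.mono fun v hv => hv.2), he]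
    exact Sym2.mem_mk_left s x
  have hsep : G.SepCut {s} B (G.cut (X \ B)) :=
    ⟨X \ B, Set.singleton_subset_iff.2 ⟨hX.ho, hsB⟩, fun b hb h => h.2 hb, rfl⟩
  obtain ⟨D, hDX, hD⟩ := exists_isMinSepCut_subset hsep
  have hDcut : D ⊆ cut G.inc Set.univ (X \ B) := fun d hd => ⟨trivial, hDX hd⟩
  have hfan := hX.cov.of_contract hX.ht
  obtain ⟨W, hW, rfl⟩ := (hfan.mono subset_rfl hDcut).exists_isWave hDX hD
  rw [hnowave W hW] at hDX
  exact hinside.not_crosses (hDX hes)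

theorem inci_eq_empty_of_forall_isWave
    (hnowave : ∀ W : Set (G.SPath s), G.IsWave s ∅ W → G.lastEdges W = G.inci s) :
    G.inci s = ∅ := by
  have hlast : G.lastEdges (∅ : Set (G.SPath s)) = ∅ := by simp [Multigraph.lastEdges]
  rw [← hnowave ∅ ⟨by simp [Multigraph.SPathDisjoint], ?_⟩, hlast]
  rw [hlast]
  exact ⟨⟨Set.univ, Set.subset_univ _, by simp, by simp [Multigraph.cut]⟩,
    fun D _ hD => Set.subset_empty_iff.1 hD⟩

theorem IsPath.exists_deleteEdges (h : IsPath G.inc u l w) (hF : ∀ g ∈ l, g ∉ F) :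
    ∃ l' : List {e // e ∉ F}, l'.map Subtype.val = l ∧ IsPath (G.deleteEdges F).inc u l' w := by
  induction h with
  | nil v => exact ⟨[], rfl, .nil v⟩
  | @cons u v w e l he _ hne hav ih =>
    obtain ⟨heF, hlF⟩ := List.forall_mem_cons.1 hF
    obtain ⟨l', rfl, hl'⟩ := ih hlF
    exact ⟨⟨e, heF⟩ :: l', rfl, .cons he hl' hne fun g hg => hav g.1 (List.mem_map_of_mem hg)⟩

theorem IsPath.exists_tPath (h : IsPath G.inc u l w) (hu : u ∈ T) (hw : w ∈ T) (huw : u ≠ w)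
    (hT : ∀ g ∈ l, ∀ x ∈ G.inc g, x ∈ T → x = u ∨ x = w) : ∃ P : G.TPath T, P.walk.edges = l := by
  obtain ⟨q, hq, hnodup, hsupp⟩ := h.exists_walk
  exact ⟨⟨u, w, q, hu, hw, huw, hnodup, fun x hx hxT =>
    (hsupp x hx).elim Or.inr fun ⟨g, hg, hxg⟩ => hT g hg x hxg hxT⟩, hq⟩

theorem IsPath.exists_isPath_of_contract (htB : t ∈ B) (hwB : w ∉ B)
    (h : (inc.contract t B).IsPath t l w) :
    ∃ b ∈ B, inc.IsPath b l w ∧ ∀ g ∈ l, ∀ x ∈ inc g, x ∈ B → x = b := by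
  cases l with
  | nil => exact absurd htB (h.isWalk.eq_of_nil ▸ hwB)
  | cons d l =>
    obtain ⟨b, hb, z, hbz, hz, hl, hlB⟩ := h.exists_of_contract_cons htB
    refine ⟨b, hb, .cons hbz hl (fun h => hwB (h ▸ hb)) fun g hg hbg => hlB g hg b hbg hb, ?_⟩
    rintro g hg x hxg hxB
    rcases List.mem_cons.1 hg with rfl | hg
    · rw [hbz, Sym2.mem_iff] at hxg
      exact hxg.resolve_right fun h => hz (h ▸ hxB)
    · exact absurd hxB (hlB g hg x hxg)

theorem IsLink.exists_isPath_reverse (hl : inc.IsLink o t e l) (hot : o ≠ t) :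
    ∃ l', (∀ g ∈ l', g ∈ e :: l) ∧ e ∈ l' ∧ inc.IsPath t l' o := by
  obtain ⟨y, hey, -, hw, hav⟩ := hl
  obtain ⟨l', hsub, hl'⟩ := (IsWalk.cons hey hw).reverse.exists_isPath
  have hmem : ∀ g ∈ l', g ∈ e :: l := fun g hg => List.mem_reverse.1 (hsub.subset hg)
  obtain ⟨a, g, b, x, z, rfl, -, hxz, hx, hz, -, -⟩ :=
    hl'.isWalk.first_exit (Y := {o}ᶜ) hot.symm (not_not.2 rfl)
  obtain rfl : z = o := not_not.1 hz
  have hge : g = e :=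
    (List.mem_cons.1 (hmem g (by simp))).resolve_right fun hg => hav g hg (by simp [hxz])
  exact ⟨_, hmem, by simp [hge], hl'⟩

theorem IsLink.exists_tPath {e : {e // e ∉ F}} (hs : s ∈ T) (ht : t ∈ T \ {s})
    (hl : (contract G.inc t (T \ {s})).IsLink s t e.1 l) (hF : ∀ g ∈ l, g ∉ F) :
    ∃ P : (G.deleteEdges F).TPath T, e ∈ P.walk.edges ∧
      ∀ g ∈ P.walk.edges, g.1 ∈ e.1 :: l := by
  obtain ⟨l', hl', he, hpath⟩ := hl.exists_isPath_reverse (Ne.symm ht.2)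
  obtain ⟨b, hb, hpath, hav⟩ := hpath.exists_isPath_of_contract ht fun h => h.2 rfl
  obtain ⟨q, rfl, hq⟩ := hpath.exists_deleteEdges fun g hg =>
    (List.mem_cons.1 (hl' g hg)).elim (fun h => h ▸ e.2) (hF g)
  obtain ⟨P, rfl⟩ := hq.exists_tPath hb.1 hs hb.2 fun g hg x hx hxT =>
    or_iff_not_imp_right.2 fun hxs => hav g.1 (List.mem_map_of_mem hg) x hx ⟨hxT, hxs⟩
  refine ⟨P, ?_, fun g hg => hl' g.1 (List.mem_map_of_mem hg)⟩
  obtain ⟨g, hg, hge⟩ := List.mem_map.1 he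
  rwa [← Subtype.ext hge]

theorem isEdgeAt_contract (hs : s ∉ B) (ht : t ≠ s) (he : s ∈ G.inc e) :
    (contract G.inc t B).IsEdgeAt s e := by
  classical
  obtain ⟨y, hy⟩ := Sym2.mem_iff_exists.1 he
  refine ⟨if y ∈ B then t else y, by rw [contract_eq hy, if_neg hs], ?_⟩
  split_ifs with hyB
  · exact ht
  · rintro rfl
    exact G.not_isDiag e (by simp [hy])

theorem IsLinked.exists_tPaths (hs : s ∈ T) (ht : t ∈ T \ {s})
    (h : (contract G.inc t (T \ {s})).IsLinked s t Fᶜ) :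
    ∃ P : Set ((G.deleteEdges F).TPath T), (G.deleteEdges F).TPathDisjoint P ∧
      ∀ e ∈ (G.deleteEdges F).inci s, ∃ p ∈ P, e ∈ p.walk.edges := by
  obtain ⟨L, hL, hdisj⟩ := h
  have hedge : ∀ e : (G.deleteEdges F).inci s, (contract G.inc t (T \ {s})).IsEdgeAt s e.1.1 :=
    fun e => isEdgeAt_contract (fun h => h.2 rfl) ht.2 e.2
  have htPath : ∀ e : (G.deleteEdges F).inci s, ∃ P : (G.deleteEdges F).TPath T,
      e.1 ∈ P.walk.edges ∧ ∀ g ∈ P.walk.edges, g.1 ∈ e.1.1 :: L e.1.1 := fun e =>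
    have ⟨hlink, hLF⟩ := hL e.1.1 e.1.2 (hedge e)
    hlink.exists_tPath hs ht hLF
  choose P hP hPL using htPath
  refine ⟨Set.range P, ?_, fun e he => ⟨_, ⟨⟨e, he⟩, rfl⟩, hP ⟨e, he⟩⟩⟩
  rintro _ ⟨c, rfl⟩ _ ⟨d, rfl⟩ hne e hec hed
  have hcd : c.1.1 ≠ d.1.1 := fun h => hne (congrArg P (Subtype.ext (Subtype.ext h)))
  have hlink := fun e : (G.deleteEdges F).inci s => (hL e.1.1 e.1.2 (hedge e)).1
  rcases List.mem_cons.1 (hPL c e hec) with hc | hc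
  · exact hcd ((hlink d).eq_of_mem (hc ▸ hPL d e hed) (hedge c))
  · rcases List.mem_cons.1 (hPL d e hed) with hd | hd
    · exact hcd ((hlink c).eq_of_mem (hd ▸ hPL c e hec) (hedge d)).symm
    · exact hdisj _ c.1.2 _ d.1.2 (hedge c) (hedge d) hcd e.1 hc hd

end OfMultigraph

end Incidence

/-- If `G` is inner Eulerian w.r.t. `T` and `s ∈ T` admits no non-trivial
`s(T−s)`-wave, then for every pair of edges `f, h` there is a system of
pairwise edge-disjoint `T`-paths in `G − f − h` covering all edges of
`G − f − h` incident with `s`. -/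
theorem linkability_after_two_deletions {V : Type u} {E : Type v}
    (G : Multigraph V E) (T : Set V)
    (hEul : ∀ X : Set V, X ⊆ Tᶜ → ¬ ((G.cut X).Finite ∧ Odd (G.cut X).ncard))
    (s : V) (hs : s ∈ T)
    (hnowave : ∀ W : Set (G.SPath s), G.IsWave s (T \ {s}) W →
      G.lastEdges W = G.inci s) :
    ∀ f h : E,
      ∃ P : Set ((G.deleteEdges {f, h}).TPath T),
        (G.deleteEdges {f, h}).TPathDisjoint P ∧
        ∀ e ∈ (G.deleteEdges {f, h}).inci s, ∃ p ∈ P, e ∈ p.walk.edges := by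
  intro f h
  rcases (T \ {s}).eq_empty_or_nonempty with hT | ⟨t, ht⟩
  · rw [hT] at hnowave
    have hs₀ : G.inci s = ∅ := Incidence.inci_eq_empty_of_forall_isWave hnowave
    exact ⟨∅, by simp [Multigraph.TPathDisjoint], fun e he => (hs₀.subset he).elim⟩
  · have hst : s ≠ t := Ne.symm ht.2
    have hE : (Incidence.contract G.inc t (T \ {s})).IsInnerEulerian Set.univ s t :=
      Incidence.isInnerEulerian_contract hEul
    have hL : (Incidence.contract G.inc t (T \ {s})).IsLoose Set.univ s t :=
      Incidence.isLoose_contract (fun h => h.2 rfl) hnowave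
    have hlinked := hL.isLinked_sdiff_pair hE hst f h
    rw [← Set.compl_eq_univ_sdiff] at hlinked
    exact hlinked.exists_tPaths hs ht
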